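/- arXiv:0802.4186 — 9 statements merged into one kernel-verified Lean document; each statement's English description precedes it below -/
import Mathlib

section
/- Let K ⊆ L be a commutative field extension in which every element of L that is algebraic over K is separable over K, and let r, s be positive integers with r, s ≤ dim_K L. Then the minimum of dim_K⟨AB⟩, taken over all K-subspaces A, B of L with dim_K A = r and dim_K B = s, equals the minimum of (⌈r/h⌉ + ⌈s/h⌉ − 1)·h, taken over all h = [H:K] where H ranges over the finite-dimensional intermediate fields K ⊆ H ⊆ L. -/
open Module

theorem lk_finrank_map {K V W : Type*} [Field K] [AddCommGroup V] [Module K V] [AddCommGroup W]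
    [Module K W] {f : V →ₗ[K] W} (hf : Function.Injective f) (A : Submodule K V) :
    finrank K (A.map f) = finrank K A :=
  (Submodule.equivMapOfInjective f hf A).finrank_eq.symm

theorem lk_transform {K L : Type*} [Field K] [Field L] [Algebra K L] :
    ∀ (n : ℕ) (A B : Submodule K L), FiniteDimensional K A → FiniteDimensional K B →
      finrank K A ≤ n → (1 : L) ∈ A → B ≠ ⊥ →
      ∃ (H : IntermediateField K L) (V : Submodule K L), FiniteDimensional K H ∧
        B ≤ V ∧ V ≤ A * B ∧ (∀ x ∈ H, ∀ v ∈ V, x * v ∈ V) ∧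
        finrank K A + finrank K B ≤ finrank K V + finrank K H := by
  intro n
  induction n with
  | zero =>
    intro A B hA hB hn h1 _
    have : A = ⊥ := Submodule.finrank_eq_zero.mp (by omega)
    subst this
    simp at h1
  | succ n ih =>
    intro A B hA hB hn h1 hB0
    by_cases hst : ∀ e ∈ B, ∀ a ∈ A, e * a ∈ B
    · -- A * B ≤ B
      let H := IntermediateField.adjoin K (A : Set L)
      have hHA : ∀ x ∈ Algebra.adjoin K (A : Set L), ∀ v ∈ B, x * v ∈ B := by
        intro x hx
        induction hx using Algebra.adjoin_induction with
        | mem x hx => intro v hv; rw [mul_comm]; exact hst v hv x hx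
        | algebraMap r => intro v hv; rw [← Algebra.smul_def]; exact B.smul_mem r hv
        | add x y _ _ hx hy => intro v hv; rw [add_mul]; exact B.add_mem (hx v hv) (hy v hv)
        | mul x y _ _ hx hy => intro v hv; rw [mul_assoc]; exact hx _ (hy v hv)
      obtain ⟨b, hb, hb0⟩ := Submodule.exists_mem_ne_zero_of_ne_bot hB0
      have hfin : FiniteDimensional K (Algebra.adjoin K (A : Set L)) := by
        let f : Algebra.adjoin K (A : Set L) →ₗ[K] B :=
          { toFun := fun x => ⟨x.1 * b, hHA _ x.2 _ hb⟩
            map_add' := by intro x y; ext; simp [add_mul]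
            map_smul' := by intro r x; ext; simp }
        refine FiniteDimensional.of_injective f ?_
        intro x y hxy
        have := congrArg Subtype.val hxy
        simp only [f, LinearMap.coe_mk, AddHom.coe_mk] at this
        exact Subtype.ext (mul_right_cancel₀ hb0 this)
      have halg : ∀ x ∈ (A : Set L), IsAlgebraic K x := by
        intro x hx
        have := Algebra.IsAlgebraic.isAlgebraic (R := K)
          (⟨x, Algebra.subset_adjoin hx⟩ : Algebra.adjoin K (A : Set L))
        exact this.algebraMap (A := L)
      have hH : H.toSubalgebra = Algebra.adjoin K (A : Set L) :=
        IntermediateField.adjoin_toSubalgebra_of_isAlgebraic (fun x hx => halg x hx)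
      have hmem : ∀ x, x ∈ H ↔ x ∈ Algebra.adjoin K (A : Set L) := by
        intro x; rw [← hH]; rfl
      have hHf : FiniteDimensional K H := by
        have : FiniteDimensional K H.toSubalgebra := by rw [hH]; exact hfin
        exact this
      refine ⟨H, B, hHf, le_rfl, ?_, fun x hx v hv => hHA x ((hmem x).1 hx) v hv, ?_⟩
      · intro v hv
        simpa using Submodule.mul_mem_mul h1 hv
      · have : finrank K A ≤ finrank K H :=
          Submodule.finrank_mono (R := K) (s := A) (t := H.toSubalgebra.toSubmodule)
            (fun x hx => (IntermediateField.subset_adjoin K _ hx : x ∈ H))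
        omega
    · push Not at hst
      obtain ⟨e, he, a, ha, hea⟩ := hst
      have he0 : e ≠ 0 := by rintro rfl; simp at hea
      let m := LinearMap.mulLeft K e
      have hm : Function.Injective m := fun x y h => mul_left_cancel₀ he0 h
      let A' := A ⊓ B.comap m
      let B' := B ⊔ A.map m
      have hA'lt : A' < A := lt_of_le_of_ne inf_le_left (fun h => hea (by
        have : a ∈ A' := h ▸ ha
        exact this.2))
      have hA'f : FiniteDimensional K A' := Submodule.finiteDimensional_of_le hA'lt.le
      have h2 : finrank K A' < finrank K A := Submodule.finrank_lt_finrank_of_lt hA'lt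
      have h3 : finrank K A' + finrank K B' = finrank K A + finrank K B := by
        have e1 : finrank K (A.map m) = finrank K A := lk_finrank_map hm A
        have e2 : finrank K (A'.map m) = finrank K A' := lk_finrank_map hm A'
        have e3 : A'.map m = B ⊓ A.map m := by
          ext y
          constructor
          · rintro ⟨x, ⟨hx1, hx2⟩, rfl⟩
            exact ⟨hx2, x, hx1, rfl⟩
          · rintro ⟨hy, x, hx, rfl⟩
            exact ⟨x, ⟨hx, hy⟩, rfl⟩
        have := Submodule.finrank_sup_add_finrank_inf_eq B (A.map m)
        rw [← e3, e2, e1] at this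
        change finrank K A' + finrank K ↥(B ⊔ A.map m) = _
        omega
      obtain ⟨H, V, hHf, hBV, hV, hst, hd⟩ := ih A' B' hA'f inferInstance (by omega)
        ⟨h1, by simpa [m] using he⟩ (fun h => hB0 (le_bot_iff.1 (h ▸ le_sup_left)))
      refine ⟨H, V, hHf, le_sup_left.trans hBV, hV.trans ?_, hst, by omega⟩
      rw [Submodule.mul_le]
      rintro x ⟨hxA, hxB⟩ y hy
      obtain ⟨b, hb, c, hc, rfl⟩ := Submodule.mem_sup.1 hy
      obtain ⟨a', ha', rfl⟩ := hc
      rw [mul_add]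
      refine Submodule.add_mem _ (Submodule.mul_mem_mul hxA hb) ?_
      have : x * m a' = a' * (e * x) := by simp [m]; ring
      rw [this]
      exact Submodule.mul_mem_mul ha' hxB

/-- normalise at an arbitrary nonzero element -/
theorem lk_point {K L : Type*} [Field K] [Field L] [Algebra K L]
    (A B : Submodule K L) [FiniteDimensional K A] [FiniteDimensional K B]
    (hB0 : B ≠ ⊥) (a : L) (ha : a ∈ A) (ha0 : a ≠ 0) :
    ∃ (H : IntermediateField K L) (V : Submodule K L), FiniteDimensional K H ∧
        (∀ b ∈ B, a * b ∈ V) ∧ V ≤ A * B ∧ (∀ x ∈ H, ∀ v ∈ V, x * v ∈ V) ∧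
        finrank K A + finrank K B ≤ finrank K V + finrank K H := by
  let m := LinearMap.mulLeft K a
  let m' := LinearMap.mulLeft K a⁻¹
  have hm : Function.Injective m := fun x y h => mul_left_cancel₀ ha0 h
  have hm' : Function.Injective m' := fun x y h => mul_left_cancel₀ (inv_ne_zero ha0) h
  obtain ⟨H, V, hHf, hBV, hV, hst, hd⟩ := lk_transform _ (A.map m') B inferInstance inferInstance
    le_rfl ⟨a, ha, by simp [m', ha0]⟩ hB0
  refine ⟨H, V.map m, hHf, fun b hb => ⟨b, hBV hb, rfl⟩, ?_, ?_, ?_⟩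
  · rw [Submodule.map_le_iff_le_comap]
    refine hV.trans ?_
    rw [Submodule.mul_le]
    rintro _ ⟨x, hx, rfl⟩ y hy
    have : m (m' x * y) = x * y := by simp [m, m', ← mul_assoc, ha0]
    rw [Submodule.mem_comap, this]
    exact Submodule.mul_mem_mul hx hy
  · rintro x hx _ ⟨v, hv, rfl⟩
    exact ⟨x * v, hst x hx v hv, by simp [m]; ring⟩
  · rw [lk_finrank_map hm'] at hd
    rwa [lk_finrank_map hm]

theorem lk_cover {K V ι : Type*} [Field K] [AddCommGroup V] [Module K V] [FiniteDimensional K V]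
    [Finite ι] (p : ι → Submodule K V) (hcov : ∀ v, ∃ i, v ∈ p i)
    (hK : Infinite K ∨ Nat.card ι < Nat.card K) : ∃ i, p i = ⊤ := by
  rcases finite_or_infinite K with hf | hi
  · have hlt : Nat.card ι < Nat.card K := by
      rcases hK with h | h
      · exact absurd hf (not_finite_iff_infinite.2 h)
      · exact h
    by_contra! hne
    have : Finite V := Module.finite_of_finite K
    have hc : ∀ i, Nat.card (p i) * Nat.card K ≤ Nat.card V := by
      intro i
      have h1 := Submodule.finrank_lt (lt_top_iff_ne_top.2 (hne i)).ne
      rw [Module.natCard_eq_pow_finrank (K := K) (V := p i),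
        Module.natCard_eq_pow_finrank (K := K) (V := V), ← pow_succ]
      exact Nat.pow_le_pow_right Nat.card_pos h1
    have hs : Nat.card V ≤ Nat.card (Σ i, p i) := by
      apply Nat.card_le_card_of_surjective (fun x : Σ i, p i => (x.2 : V))
      intro v
      obtain ⟨i, hi⟩ := hcov v
      exact ⟨⟨i, v, hi⟩, rfl⟩
    have := Fintype.ofFinite ι
    rw [Nat.card_sigma] at hs
    have h2 : (∑ i, Nat.card (p i)) * Nat.card K ≤ Nat.card ι * Nat.card V := by
      rw [Finset.sum_mul]
      calc _ ≤ ∑ i : ι, Nat.card V := Finset.sum_le_sum (fun i _ => hc i)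
        _ = _ := by simp
    have hV : 0 < Nat.card V := Nat.card_pos
    nlinarith
  · apply Subspace.exists_eq_top_of_iUnion_eq_univ
    ext v
    simpa using hcov v

theorem lk_stab_le {K L : Type*} [Field K] [Field L] [Algebra K L]
    (H : IntermediateField K L) (V : Submodule K L) [FiniteDimensional K V]
    (hst : ∀ x ∈ H, ∀ v ∈ V, x * v ∈ V) (v : L) (hv : v ∈ V) (hv0 : v ≠ 0) :
    finrank K H ≤ finrank K V := by
  let f : H →ₗ[K] V :=
    { toFun := fun x => ⟨x.1 * v, hst _ x.2 _ hv⟩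
      map_add' := by intro x y; ext; simp [add_mul]
      map_smul' := by intro r x; ext; simp }
  refine LinearMap.finrank_le_finrank_of_injective (f := f) ?_
  intro x y hxy
  have := congrArg Subtype.val hxy
  simp only [f, LinearMap.coe_mk, AddHom.coe_mk] at this
  exact Subtype.ext (mul_right_cancel₀ hv0 this)

theorem lk_stab_dvd {K L : Type*} [Field K] [Field L] [Algebra K L]
    (H : IntermediateField K L) (V : Submodule K L)
    (hst : ∀ x ∈ H, ∀ v ∈ V, x * v ∈ V) :
    finrank K H ∣ finrank K V := by
  let V' : Submodule H L :=
    { carrier := V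
      add_mem' := fun ha hb => V.add_mem ha hb
      zero_mem' := V.zero_mem
      smul_mem' := fun c x hx => hst c.1 c.2 x hx }
  have h : finrank K V = finrank K V' := rfl
  rw [h, ← Module.finrank_mul_finrank K H V']
  exact dvd_mul_right _ _

theorem lk_core {K L : Type*} [Field K] [Field L] [Algebra K L]
    (A B : Submodule K L) [FiniteDimensional K A] [FiniteDimensional K B]
    (hA0 : A ≠ ⊥) (hB0 : B ≠ ⊥) (N : ℕ) (hN : finrank K ↥(A * B) ≤ N)
    (hfin : Finite {H : IntermediateField K L // FiniteDimensional K H ∧ finrank K H ≤ N})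
    (hK : Infinite K ∨
      Nat.card {H : IntermediateField K L // FiniteDimensional K H ∧ finrank K H ≤ N} < Nat.card K) :
    ∃ H : IntermediateField K L, FiniteDimensional K H ∧
      (∀ x ∈ H, ∀ v ∈ A * B, x * v ∈ A * B) ∧
      finrank K A + finrank K B ≤ finrank K ↥(A * B) + finrank K H := by
  have hABf : FiniteDimensional K ↥(A * B) :=
    Module.Finite.iff_fg.2 ((Module.Finite.iff_fg.1 ‹_›).mul (Module.Finite.iff_fg.1 ‹_›))
  let S : IntermediateField K L → Set A := fun H => {a | ∃ V : Submodule K L,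
        (∀ b ∈ B, a * b ∈ V) ∧ V ≤ A * B ∧ (∀ x ∈ H, ∀ v ∈ V, x * v ∈ V) ∧
        finrank K A + finrank K B ≤ finrank K V + finrank K H}
  have key : ∀ a : A, a ≠ 0 →
      ∃ i : {H : IntermediateField K L // FiniteDimensional K H ∧ finrank K H ≤ N}, a ∈ S i.1 := by
    intro a ha0
    have ha0' : (a : L) ≠ 0 := by simpa using ha0
    obtain ⟨H, V, hHf, h1, h2, h3, h4⟩ := lk_point A B hB0 a a.2 ha0'
    refine ⟨⟨H, hHf, ?_⟩, V, h1, h2, h3, h4⟩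
    obtain ⟨b, hb, hb0⟩ := Submodule.exists_mem_ne_zero_of_ne_bot hB0
    have : FiniteDimensional K V := Submodule.finiteDimensional_of_le h2
    exact (lk_stab_le H V h3 _ (h1 b hb) (mul_ne_zero ha0' hb0)).trans
      ((Submodule.finrank_mono h2).trans hN)
  obtain ⟨a0, ha0, ha00⟩ := Submodule.exists_mem_ne_zero_of_ne_bot hA0
  obtain ⟨i, hi⟩ := lk_cover (fun i : {H : IntermediateField K L //
      FiniteDimensional K H ∧ finrank K H ≤ N} => Submodule.span K (S i.1)) (by
    intro v
    by_cases hv : v = 0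
    · obtain ⟨i, -⟩ := key ⟨a0, ha0⟩ (by simpa using ha00)
      exact ⟨i, hv ▸ Submodule.zero_mem _⟩
    · obtain ⟨i, hi⟩ := key v hv
      exact ⟨i, Submodule.subset_span hi⟩) hK
  obtain ⟨H, hHf, hHN⟩ := i
  simp only at hi
  refine ⟨H, hHf, ?_, ?_⟩
  · intro x hx v hv
    induction hv using Submodule.mul_induction_on' with
    | mem_mul_mem m hm n hn =>
      have : (⟨m, hm⟩ : A) ∈ Submodule.span K (S H) := hi ▸ Submodule.mem_top
      have h2 : ∀ c : A, c ∈ Submodule.span K (S H) → x * (c * n) ∈ A * B := by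
        intro c hc
        induction hc using Submodule.span_induction with
        | mem c hc =>
          obtain ⟨V, h1, h2, h3, h4⟩ := hc
          exact h2 (h3 x hx _ (h1 n hn))
        | zero => simp
        | add y z _ _ hy hz =>
          have : x * ((y + z : A) * n) = x * (y * n) + x * (z * n) := by push_cast; ring
          rw [this]; exact Submodule.add_mem _ hy hz
        | smul r y _ hy =>
          have : x * ((r • y : A) * n) = r • (x * (y * n)) := by simp
          rw [this]; exact Submodule.smul_mem _ _ hy
      exact h2 _ this
    | add y _ z _ hy hz => rw [mul_add]; exact Submodule.add_mem _ hy hz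
  · have : (S H).Nonempty := by
      by_contra h
      rw [Set.not_nonempty_iff_eq_empty] at h
      rw [h, Submodule.span_empty] at hi
      have : (⟨a0, ha0⟩ : A) ∈ (⊥ : Submodule K A) := hi ▸ Submodule.mem_top
      simp at this
      exact ha00 this
    obtain ⟨a, V, h1, h2, h3, h4⟩ := this
    have := Submodule.finrank_mono h2
    omega

theorem lk_ceil {K L : Type*} [Field K] [Field L] [Algebra K L]
    (A B : Submodule K L) [FiniteDimensional K A] [FiniteDimensional K B]
    (hA0 : A ≠ ⊥) (hB0 : B ≠ ⊥) (N : ℕ) (hN : finrank K ↥(A * B) ≤ N)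
    (hfin : Finite {H : IntermediateField K L // FiniteDimensional K H ∧ finrank K H ≤ N})
    (hK : Infinite K ∨
      Nat.card {H : IntermediateField K L // FiniteDimensional K H ∧ finrank K H ≤ N} < Nat.card K) :
    ∃ H : IntermediateField K L, FiniteDimensional K H ∧
      (∀ x ∈ H, ∀ v ∈ A * B, x * v ∈ A * B) ∧ finrank K H ≤ finrank K ↥(A * B) ∧
      (finrank K A ⌈/⌉ finrank K H + finrank K B ⌈/⌉ finrank K H - 1) * finrank K H
        ≤ finrank K ↥(A * B) := by
  have hABf : FiniteDimensional K ↥(A * B) :=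
    Module.Finite.iff_fg.2 ((Module.Finite.iff_fg.1 ‹_›).mul (Module.Finite.iff_fg.1 ‹_›))
  obtain ⟨a, ha, ha0⟩ := Submodule.exists_mem_ne_zero_of_ne_bot hA0
  obtain ⟨b, hb, hb0⟩ := Submodule.exists_mem_ne_zero_of_ne_bot hB0
  have hbd : ∀ H : IntermediateField K L, (∀ x ∈ H, ∀ v ∈ A * B, x * v ∈ A * B) →
      finrank K H ≤ finrank K ↥(A * B) := fun H hH =>
    lk_stab_le H _ hH _ (Submodule.mul_mem_mul ha hb) (mul_ne_zero ha0 hb0)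
  let T : Set ℕ := {n | ∃ H : IntermediateField K L, FiniteDimensional K H ∧
    (∀ x ∈ H, ∀ v ∈ A * B, x * v ∈ A * B) ∧ finrank K H = n}
  have hTne : T.Nonempty := by
    refine ⟨_, ⊥, inferInstance, ?_, rfl⟩
    intro x hx v hv
    obtain ⟨c, rfl⟩ := IntermediateField.mem_bot.1 hx
    rw [← Algebra.smul_def]; exact Submodule.smul_mem _ _ hv
  have hTb : BddAbove T := ⟨finrank K ↥(A * B), by rintro n ⟨H, -, hH, rfl⟩; exact hbd H hH⟩
  obtain ⟨H, hHf, hHst, hHn⟩ := Nat.sSup_mem hTne hTb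
  let Hs : Submodule K L := Subalgebra.toSubmodule H.toSubalgebra
  have hHsf : FiniteDimensional K Hs := hHf
  have hmemHs : ∀ x, x ∈ Hs ↔ x ∈ H := fun x => Iff.rfl
  have fdmul : ∀ C : Submodule K L, FiniteDimensional K C → FiniteDimensional K ↥(Hs * C) :=
    fun C hC => Module.Finite.iff_fg.2 ((Module.Finite.iff_fg.1 hHsf).mul (Module.Finite.iff_fg.1 hC))
  have hAf := fdmul A inferInstance
  have hBf := fdmul B inferInstance
  have hle : ∀ C : Submodule K L, C ≤ Hs * C := fun C c hc => by
    simpa using Submodule.mul_mem_mul ((hmemHs 1).2 H.one_mem) hc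
  have hstab : ∀ C : Submodule K L, ∀ x ∈ H, ∀ v ∈ Hs * C, x * v ∈ Hs * C := by
    intro C x hx v hv
    induction hv using Submodule.mul_induction_on' with
    | mem_mul_mem m hm n hn =>
      rw [← mul_assoc]
      exact Submodule.mul_mem_mul ((hmemHs _).2 (H.mul_mem hx hm)) hn
    | add y _ z _ hy hz => rw [mul_add]; exact Submodule.add_mem _ hy hz
  have hprod : (Hs * A) * (Hs * B) = A * B := by
    apply le_antisymm
    · have h1 : (Hs * A) * (Hs * B) = Hs * (Hs * (A * B)) := by ring
      have h2 : Hs * (A * B) ≤ A * B := Submodule.mul_le.2 (fun x hx v hv => hHst x hx v hv)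
      rw [h1]
      exact (mul_le_mul' le_rfl h2).trans h2
    · exact mul_le_mul' (hle A) (hle B)
  have hne : ∀ C : Submodule K L, C ≠ ⊥ → Hs * C ≠ ⊥ := fun C hC h => hC (le_bot_iff.1 (h ▸ hle C))
  obtain ⟨H1, hH1f, hH1st, hH1⟩ := lk_core (Hs * A) (Hs * B) (hne A hA0) (hne B hB0) N
    (by rw [hprod]; exact hN) hfin hK
  rw [hprod] at hH1st hH1
  have hmax : finrank K H1 ≤ finrank K H := by
    rw [hHn]; exact le_csSup hTb ⟨H1, hH1f, hH1st, rfl⟩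
  refine ⟨H, hHf, hHst, hbd H hHst, ?_⟩
  have hpos : 0 < finrank K H := finrank_pos
  have hc : ∀ C : Submodule K L, FiniteDimensional K C →
      (finrank K C ⌈/⌉ finrank K H) * finrank K H ≤ finrank K ↥(Hs * C) := by
    intro C hC
    obtain ⟨k, hk⟩ := lk_stab_dvd H (Hs * C) (hstab C)
    have := fdmul C hC
    have h1 := Submodule.finrank_mono (hle C)
    rw [hk] at h1 ⊢
    rw [mul_comm]
    refine Nat.mul_le_mul_left _ ?_
    rw [ceilDiv_le_iff_le_mul hpos]
    exact h1
  have h1 := hc A inferInstance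
  have h2 := hc B inferInstance
  rw [Nat.sub_mul, add_mul]
  omega

theorem lk_algClosure_finite (K L : Type*) [Field K] [Field L] [Algebra K L]
    [Algebra.EssFiniteType K L] : FiniteDimensional K (algebraicClosure K L) := by
  obtain ⟨s, hs⟩ := exists_finset_isTranscendenceBasis K L
  let F0 := IntermediateField.adjoin K (s : Set L)
  have hF : Module.Finite F0 L := by
    have h1 : Algebra.EssFiniteType F0 L := .of_comp K _ _
    have h2 : Algebra.IsAlgebraic F0 L := by
      convert! hs.isAlgebraic_field <;> simp
    exact Algebra.finite_of_essFiniteType_of_isAlgebraic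
  have hind := hs.1.algebraicClosure
  have key : ∀ t : Finset (algebraicClosure K L),
      (LinearIndependent K fun i : t => (i : algebraicClosure K L)) → t.card ≤ finrank F0 L := by
    intro t ht
    have h1 : LinearIndependent (Algebra.adjoin K (s : Set L))
        (fun i : t => ((i : algebraicClosure K L) : L)) := by
      rw [Fintype.linearIndependent_iff]
      intro g hg
      have hg' : ∀ i, ∃ P : MvPolynomial s K, MvPolynomial.aeval (fun j : s => (j : L)) P = g i := by
        intro i
        have h3 := Algebra.adjoin_range_eq_range_aeval K (fun j : s => (j : L))
        rw [show Set.range (fun j : s => (j : L)) = (s : Set L) by simp] at h3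
        exact h3.le (g i).2
      choose P hP using hg'
      have hz : ∑ i : t, MvPolynomial.C (i : algebraicClosure K L) *
          MvPolynomial.map (algebraMap K (algebraicClosure K L)) (P i) = 0 := by
        apply hind
        rw [map_zero, map_sum, ← hg]
        refine Finset.sum_congr rfl fun i _ => ?_
        rw [map_mul, MvPolynomial.aeval_C, MvPolynomial.aeval_map_algebraMap, hP,
          Subalgebra.smul_def, smul_eq_mul, mul_comm]
        rfl
      have hP0 : ∀ i, P i = 0 := by
        intro i
        ext m
        have h4 := congrArg (MvPolynomial.coeff m) hz
        simp only [MvPolynomial.coeff_sum, MvPolynomial.coeff_C_mul, MvPolynomial.coeff_map,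
          MvPolynomial.coeff_zero] at h4
        rw [Fintype.linearIndependent_iff] at ht
        have := ht (fun i => (P i).coeff m) (by
          rw [← h4]
          refine Finset.sum_congr rfl fun i _ => ?_
          rw [Algebra.smul_def, mul_comm]) i
        simpa using this
      intro i
      have := hP i
      rw [hP0, map_zero] at this
      exact Subtype.ext this.symm
    open IntermediateField.algebraAdjoinAdjoin in
    have h2 : LinearIndependent F0 (fun i : t => ((i : algebraicClosure K L) : L)) :=
      h1.localization F0 (nonZeroDivisors (Algebra.adjoin K (s : Set L)))
    simpa using h2.fintype_card_le_finrank
  have := rank_le key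
  exact Module.rank_lt_aleph0_iff.1 (this.trans_lt (Cardinal.natCast_lt_aleph0))
open IntermediateField in
theorem lk_dvd_aux {K M Ω : Type*} [Field K] [Field M] [Field Ω] [Algebra K M] [Algebra K Ω]
    [Algebra M Ω] [IsScalarTower K M Ω] (θ : Ω) (hint : IsIntegral K θ) :
    (minpoly K θ).natDegree ∣ finrank K M * (minpoly M θ).natDegree := by
  have hintM : IsIntegral M θ := hint.tower_top
  have : IsScalarTower K M⟮θ⟯ Ω := IsScalarTower.of_algebraMap_eq (fun x => by
    rw [IsScalarTower.algebraMap_apply K M Ω, IsScalarTower.algebraMap_apply K M M⟮θ⟯,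
      ← IsScalarTower.algebraMap_apply M M⟮θ⟯ Ω])
  have h4 : IsIntegral K (AdjoinSimple.gen M θ) := by
    rw [← isIntegral_algebraMap_iff (B := Ω) (algebraMap M⟮θ⟯ Ω).injective]
    exact hint
  have h5 := minpoly.degree_dvd h4
  have h6 := minpoly.algebraMap_eq (A := K) (algebraMap M⟮θ⟯ Ω).injective (AdjoinSimple.gen M θ)
  rw [AdjoinSimple.algebraMap_gen] at h6
  rw [h6, ← adjoin.finrank hintM, Module.finrank_mul_finrank K M]
  exact h5

theorem lk_finrank_dvd {K M Ω : Type*} [Field K] [Field M] [Field Ω] [Algebra K M] [Algebra K Ω]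
    [Algebra M Ω] [IsScalarTower K M Ω] : finrank M Ω ∣ finrank K Ω :=
  ⟨finrank K M, by rw [mul_comm, Module.finrank_mul_finrank K M]⟩


open IntermediateField in
/-- the degree of `θ` over `L` -/
theorem lk_theta_degree {K L Ω : Type*} [Field K] [Field L] [Field Ω] [Algebra K L] [Algebra K Ω]
    [Algebra L Ω] [IsScalarTower K L Ω] [FiniteDimensional K (algebraicClosure K L)]
    (p : ℕ) (hp : p.Prime) (hpM : finrank K (algebraicClosure K L) < p) (θ : Ω)
    (hint : IsIntegral K θ) (hθ : (minpoly K θ).natDegree = p) :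
    (minpoly L θ).natDegree = p := by
  have hintL : IsIntegral L θ := hint.tower_top
  have hdvd : minpoly L θ ∣ (minpoly K θ).map (algebraMap K L) := minpoly.dvd_map_of_isScalarTower K L θ
  apply le_antisymm
  · have := Polynomial.natDegree_le_of_dvd hdvd
      (Polynomial.Monic.ne_zero ((minpoly.monic hint).map _))
    rwa [(minpoly.monic hint).natDegree_map, hθ] at this
  · have hco : ∀ i, IsIntegral K ((minpoly L θ).coeff i) :=
      Polynomial.isIntegral_coeff_of_dvd _ _ (minpoly.monic hint) (minpoly.monic hintL) hdvd
    let M := algebraicClosure K L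
    have hl : minpoly L θ ∈ Polynomial.lifts (algebraMap M L) := by
      rw [Polynomial.lifts_iff_coeff_lifts]
      intro n
      exact ⟨⟨_, mem_algebraicClosure_iff'.2 (hco n)⟩, rfl⟩
    obtain ⟨g, hg, hgd, hgm⟩ := Polynomial.lifts_and_natDegree_eq_and_monic hl (minpoly.monic hintL)
    have hg0 : Polynomial.aeval θ g = 0 := by
      have := minpoly.aeval L θ
      rw [← hg, Polynomial.aeval_map_algebraMap] at this
      exact this
    have hintM : IsIntegral M θ := hint.tower_top
    have h1 : (minpoly M θ).natDegree ≤ g.natDegree :=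
      Polynomial.natDegree_le_of_dvd (minpoly.dvd M θ hg0) hgm.ne_zero
    have h2 : p ∣ (minpoly M θ).natDegree := by
      have h3 := lk_dvd_aux (M := M) θ hint
      rw [hθ] at h3
      have hpM' : finrank K M < p := hpM
      rcases hp.dvd_mul.1 h3 with h | h
      · exact absurd (Nat.le_of_dvd finrank_pos h) (by omega)
      · exact h
    have h3 := Nat.le_of_dvd (minpoly.natDegree_pos hintM) h2
    omega

open IntermediateField in
theorem lk_disjoint {K L Ω : Type*} [Field K] [Field L] [Field Ω] [Algebra K L] [Algebra K Ω]
    [Algebra L Ω] [IsScalarTower K L Ω] (θ : Ω)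
    (hint : IsIntegral K θ) (hθ : (minpoly L θ).natDegree = (minpoly K θ).natDegree) :
    K⟮θ⟯.LinearDisjoint L := by
  apply LinearDisjoint.of_basis_left (adjoin.powerBasis hint).basis
  have h := linearIndependent_pow (K := L) θ
  have h2 := h.comp (Fin.cast (hθ.symm ▸ rfl : (adjoin.powerBasis hint).dim = _)) (Fin.cast_injective _)
  convert h2 using 1
  ext i
  simp only [Function.comp, PowerBasis.coe_basis, adjoin.powerBasis_gen]
  simp

theorem lk_span_finrank {K L Ω : Type*} [Field K] [Field L] [Field Ω] [Algebra K L] [Algebra K Ω]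
    [Algebra L Ω] [IsScalarTower K L Ω] (K' : IntermediateField K Ω) (hd : K'.LinearDisjoint L)
    (C : Submodule K L) [FiniteDimensional K C] :
    finrank K' (Submodule.span K' (algebraMap L Ω '' (C : Set L))) = finrank K C := by
  let b := Module.finBasis K C
  have hb : LinearIndependent K (fun i => (b i : L)) :=
    b.linearIndependent.map' C.subtype (Submodule.ker_subtype C)
  have h1 := finrank_span_eq_card (hd.linearIndependent_right' hb)
  rw [Fintype.card_fin] at h1
  suffices hE : Submodule.span K' (algebraMap L Ω '' (C : Set L)) =
      Submodule.span K' (Set.range (fun i => algebraMap L Ω (b i : L))) by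
    rw [hE]; exact h1
  apply le_antisymm
  · rw [Submodule.span_le]
    rintro _ ⟨c, hc, rfl⟩
    have : c = ∑ i, b.repr ⟨c, hc⟩ i • (b i : L) := by
      have := congrArg Subtype.val (b.sum_repr ⟨c, hc⟩)
      rw [Submodule.coe_sum] at this
      exact this.symm
    rw [this, map_sum]
    refine Submodule.sum_mem _ fun i _ => ?_
    rw [Algebra.smul_def, map_mul, ← IsScalarTower.algebraMap_apply,
      IsScalarTower.algebraMap_apply K K' Ω, ← Algebra.smul_def]
    exact Submodule.smul_mem _ _ (Submodule.subset_span ⟨i, rfl⟩)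
  · rw [Submodule.span_le]
    rintro _ ⟨i, rfl⟩
    exact Submodule.subset_span ⟨b i, (b i).2, rfl⟩

theorem lk_span_mul {K L Ω : Type*} [Field K] [Field L] [Field Ω] [Algebra K L] [Algebra K Ω]
    [Algebra L Ω] [IsScalarTower K L Ω] (K' : IntermediateField K Ω)
    (A B : Submodule K L) :
    Submodule.span K' (algebraMap L Ω '' (A : Set L)) *
      Submodule.span K' (algebraMap L Ω '' (B : Set L)) =
    Submodule.span K' (algebraMap L Ω '' ((A * B : Submodule K L) : Set L)) := by
  rw [Submodule.span_mul_span]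
  apply le_antisymm
  · rw [Submodule.span_le]
    rintro _ ⟨_, ⟨a, ha, rfl⟩, _, ⟨b, hb, rfl⟩, rfl⟩
    exact Submodule.subset_span ⟨a * b, Submodule.mul_mem_mul ha hb, by simp⟩
  · rw [Submodule.span_le]
    rintro _ ⟨c, hc, rfl⟩
    induction hc using Submodule.mul_induction_on' with
    | mem_mul_mem m hm n hn =>
      rw [map_mul]
      exact Submodule.subset_span ⟨_, ⟨m, hm, rfl⟩, _, ⟨n, hn, rfl⟩, rfl⟩
    | add y _ z _ hy hz => rw [map_add]; exact Submodule.add_mem _ hy hz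

theorem lk_finfield_unique {K Ω : Type*} [Field K] [Field Ω] [Algebra K Ω] [Finite K]
    (H1 H2 : IntermediateField K Ω) [FiniteDimensional K H1] [FiniteDimensional K H2]
    (h : finrank K H1 = finrank K H2) : H1 = H2 := by
  classical
  have key : ∀ H : IntermediateField K Ω, FiniteDimensional K H →
      ∀ x, x ∈ H ↔ x ^ (Nat.card K ^ finrank K H) = x := by
    intro H hH
    have hf : Finite H := Module.finite_of_finite K
    have hft := Fintype.ofFinite H
    have hc : Nat.card H = Nat.card K ^ finrank K H := Module.natCard_eq_pow_finrank
    set c := Nat.card K ^ finrank K H with hcdef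
    have hc1 : 1 < c := by rw [← hc]; exact Finite.one_lt_card
    have hsub : (H : Set Ω) ⊆ ((Polynomial.X ^ c - Polynomial.X : Polynomial Ω).roots.toFinset : Set Ω) := by
      intro x hx
      have h1 := FiniteField.pow_card (⟨x, hx⟩ : H)
      rw [← Nat.card_eq_fintype_card, hc] at h1
      have h2 := congrArg Subtype.val h1
      simp only [SubmonoidClass.mk_pow] at h2
      simp [FiniteField.X_pow_card_sub_X_ne_zero Ω hc1, h2]
    have heq := Set.eq_of_subset_of_ncard_le hsub (by
      rw [Set.ncard_coe_finset]
      refine (Multiset.toFinset_card_le _).trans ((Polynomial.card_roots' _).trans ?_)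
      rw [FiniteField.X_pow_card_sub_X_natDegree_eq Ω hc1, ← hc]
      exact le_of_eq (Nat.card_coe_set_eq (H : Set Ω))) (Finset.finite_toSet _)
    intro x
    have : x ∈ H ↔ x ∈ (H : Set Ω) := Iff.rfl
    rw [this, heq]
    simp [FiniteField.X_pow_card_sub_X_ne_zero Ω hc1, sub_eq_zero]
  ext x
  rw [key H1 inferInstance, key H2 inferInstance, h]

open IntermediateField in
theorem lk_finite_base {K L : Type*} [Field K] [Field L] [Algebra K L] [Finite K]
    [Algebra.EssFiniteType K L]
    (A B : Submodule K L) [FiniteDimensional K A] [FiniteDimensional K B]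
    (hA0 : A ≠ ⊥) (hB0 : B ≠ ⊥) :
    ∃ H : IntermediateField K L, FiniteDimensional K H ∧
      (finrank K A ⌈/⌉ finrank K H + finrank K B ⌈/⌉ finrank K H - 1) * finrank K H
        ≤ finrank K ↥(A * B) := by
  have hMf := lk_algClosure_finite K L
  have hABf : FiniteDimensional K ↥(A * B) :=
    Module.Finite.iff_fg.2 ((Module.Finite.iff_fg.1 ‹_›).mul (Module.Finite.iff_fg.1 ‹_›))
  obtain ⟨p, hpge, hp⟩ := Nat.exists_infinite_primes
    (finrank K ↥(A * B) + finrank K (algebraicClosure K L) + 1)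
  let Ω := AlgebraicClosure L
  let q := ringChar K
  have hq : Fact q.Prime := ⟨CharP.char_is_prime K q⟩
  have : NeZero p := ⟨hp.ne_zero⟩
  obtain ⟨x, hx⟩ := Field.exists_primitive_element K (FiniteField.Extension K q p)
  rw [Field.primitive_element_iff_minpoly_natDegree_eq, FiniteField.finrank_extension] at hx
  let σ : FiniteField.Extension K q p →ₐ[K] Ω := IsAlgClosed.lift
  let θ := σ x
  have hint : IsIntegral K θ := (Algebra.IsIntegral.isIntegral x).map σ
  have hθ : (minpoly K θ).natDegree = p := by
    rw [minpoly.algHom_eq σ σ.injective, hx]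
  have hθL := lk_theta_degree (L := L) p hp (by omega) θ hint hθ
  have hdis : K⟮θ⟯.LinearDisjoint L := lk_disjoint θ hint (hθL.trans hθ.symm)
  let K' := K⟮θ⟯
  have hK'rank : finrank K K' = p := by rw [adjoin.finrank hint, hθ]
  have hK'fd : FiniteDimensional K K' := adjoin.finiteDimensional hint
  have hK'f : Finite K' := Module.finite_of_finite K
  let S : Submodule K L → Submodule K' Ω := fun C => Submodule.span K' (algebraMap L Ω '' (C : Set L))
  have hSr : ∀ C : Submodule K L, FiniteDimensional K C → finrank K' (S C) = finrank K C :=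
    fun C hC => lk_span_finrank K' hdis C
  have hSm : S A * S B = S (A * B) := lk_span_mul K' A B
  have hSne : ∀ C : Submodule K L, FiniteDimensional K C → C ≠ ⊥ → S C ≠ ⊥ := by
    intro C hC hne h
    have := hSr C hC
    rw [h, finrank_bot] at this
    exact hne (Submodule.finrank_eq_zero.1 this.symm)
  have hSfd : ∀ C : Submodule K L, FiniteDimensional K C → C ≠ ⊥ → FiniteDimensional K' (S C) := by
    intro C hC hne
    apply FiniteDimensional.of_finrank_pos
    rw [hSr C hC]
    exact Nat.pos_of_ne_zero fun h => hne (Submodule.finrank_eq_zero.1 h)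
  have := hSfd A inferInstance hA0
  have := hSfd B inferInstance hB0
  let N := finrank K ↥(A * B)
  let T := {H : IntermediateField K' Ω // FiniteDimensional K' H ∧ finrank K' H ≤ N}
  let f : T → Fin (N + 1) := fun H => ⟨finrank K' H.1, Nat.lt_succ_of_le H.2.2⟩
  have hf : Function.Injective f := by
    rintro ⟨H1, h1, h1'⟩ ⟨H2, h2, h2'⟩ h
    have h := congrArg Fin.val h
    exact Subtype.ext (lk_finfield_unique H1 H2 h)
  have hTfin : Finite T := Finite.of_injective f hf
  have hTcard : Nat.card T < Nat.card K' := by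
    have h1 := Nat.card_le_card_of_injective f hf
    rw [Nat.card_eq_fintype_card (α := Fin (N + 1)), Fintype.card_fin] at h1
    rw [Module.natCard_eq_pow_finrank (K := K) (V := K'), hK'rank]
    have h2 : p < Nat.card K ^ p := Nat.lt_pow_self Finite.one_lt_card
    have : N + 1 ≤ p := by change finrank K ↥(A * B) + 1 ≤ p; omega
    omega
  obtain ⟨H', hH'f, hst, hle, hceil⟩ := lk_ceil (S A) (S B) (hSne A inferInstance hA0)
    (hSne B inferInstance hB0) N (by rw [hSm, hSr _ hABf]) hTfin (Or.inr hTcard)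
  rw [hSm] at hst hle hceil
  rw [hSr _ hABf] at hle hceil
  rw [hSr A inferInstance, hSr B inferInstance] at hceil
  -- H' lies in L(θ)
  have hSL : ∀ C : Submodule K L, ∀ v ∈ S C, v ∈ L⟮θ⟯ := by
    intro C v hv
    induction hv using Submodule.span_induction with
    | mem v hv =>
      obtain ⟨c, -, rfl⟩ := hv
      exact L⟮θ⟯.algebraMap_mem c
    | zero => exact zero_mem _
    | add y z _ _ hy hz => exact add_mem hy hz
    | smul r y _ hy =>
      rw [Algebra.smul_def]
      refine mul_mem ?_ hy
      have hle : K⟮θ⟯ ≤ L⟮θ⟯.restrictScalars K := by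
        rw [adjoin_simple_le_iff]
        exact mem_adjoin_simple_self L θ
      exact hle r.2
  have hABne : A * B ≠ ⊥ := by
    obtain ⟨a, ha, ha0⟩ := Submodule.exists_mem_ne_zero_of_ne_bot hA0
    obtain ⟨b, hb, hb0⟩ := Submodule.exists_mem_ne_zero_of_ne_bot hB0
    intro h
    have := Submodule.mul_mem_mul ha hb
    rw [h, Submodule.mem_bot] at this
    exact mul_ne_zero ha0 hb0 this
  obtain ⟨w, hw, hw0⟩ := Submodule.exists_mem_ne_zero_of_ne_bot (hSne _ hABf hABne)
  have hH'L : ∀ y ∈ H', y ∈ L⟮θ⟯ := by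
    intro y hy
    have h1 := hSL _ _ (hst y hy w hw)
    have h2 := mul_mem h1 (inv_mem (hSL _ _ hw))
    rwa [mul_assoc, mul_inv_cancel₀ hw0, mul_one] at h2
  let h := finrank K' H'
  have hh : 0 < h := finrank_pos
  have : NeZero h := ⟨hh.ne'⟩
  let F := FiniteField.Extension K q h
  have hFr : finrank K F = h := FiniteField.finrank_extension K q h
  have hH'fin : Finite H' := Module.finite_of_finite K'
  obtain ⟨τ⟩ : Nonempty (F →ₐ[K] H') := by
    apply FiniteField.nonempty_algHom_of_finrank_dvd
    rw [hFr]
    exact lk_finrank_dvd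
  let τ' : F →ₐ[K] Ω := (H'.val.restrictScalars K).comp τ
  have hτ : ∀ y, τ' y ∈ (IsScalarTower.toAlgHom K L Ω).range := by
    intro y
    have hyi : IsIntegral K y := Algebra.IsIntegral.isIntegral y
    have hyi' : IsIntegral K (τ' y) := hyi.map τ'
    have hyL : IsIntegral L (τ' y) := hyi'.tower_top
    have h1 : (minpoly L (τ' y)).natDegree ≤ h := by
      have h2 := Polynomial.natDegree_le_of_dvd (minpoly.dvd_map_of_isScalarTower K L (τ' y))
        (Polynomial.Monic.ne_zero ((minpoly.monic hyi').map _))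
      rw [(minpoly.monic hyi').natDegree_map, minpoly.algHom_eq τ' τ'.injective] at h2
      have h3 := minpoly.natDegree_le (A := K) y
      exact h2.trans (h3.trans hFr.le)
    have h2 : (minpoly L (τ' y)).natDegree ∣ p := by
      have hmem : τ' y ∈ L⟮θ⟯ := hH'L _ (τ y).2
      have h3 : IsIntegral L (⟨τ' y, hmem⟩ : L⟮θ⟯) := by
        rw [← isIntegral_algebraMap_iff (B := Ω) (algebraMap L⟮θ⟯ Ω).injective]
        exact hyL
      have h4 := minpoly.degree_dvd h3
      have h5 := minpoly.algebraMap_eq (A := L) (algebraMap L⟮θ⟯ Ω).injective ⟨τ' y, hmem⟩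
      rw [adjoin.finrank hint.tower_top, hθL, ← h5] at h4
      exact h4
    have h3 : (minpoly L (τ' y)).natDegree = 1 := by
      rcases (Nat.dvd_prime hp).1 h2 with h | h
      · exact h
      · omega
    obtain ⟨z, hz⟩ := minpoly.natDegree_eq_one_iff.1 h3
    exact ⟨z, hz⟩
  let e := AlgEquiv.ofInjective (IsScalarTower.toAlgHom K L Ω) (algebraMap L Ω).injective
  let ρ : F →ₐ[K] L := e.symm.toAlgHom.comp (τ'.codRestrict _ hτ)
  have hρ : finrank K ρ.fieldRange = h := by
    exact ((AlgEquiv.ofInjectiveField ρ).toLinearEquiv.finrank_eq.symm).trans hFr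
  refine ⟨ρ.fieldRange, ?_, ?_⟩
  · exact FiniteDimensional.of_finrank_pos (by omega)
  · rw [hρ]; exact hceil

theorem lk_infinite_base {K L : Type*} [Field K] [Field L] [Algebra K L] [Infinite K]
    [Algebra.EssFiniteType K L] (hsep : ∀ x : L, IsAlgebraic K x → IsSeparable K x)
    (A B : Submodule K L) [FiniteDimensional K A] [FiniteDimensional K B]
    (hA0 : A ≠ ⊥) (hB0 : B ≠ ⊥) :
    ∃ H : IntermediateField K L, FiniteDimensional K H ∧
      (finrank K A ⌈/⌉ finrank K H + finrank K B ⌈/⌉ finrank K H - 1) * finrank K H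
        ≤ finrank K ↥(A * B) := by
  have hMf := lk_algClosure_finite K L
  let M := algebraicClosure K L
  have hMs : Algebra.IsSeparable K M := ⟨fun x => by
    have h1 : IsSeparable K (x : L) := hsep _ (mem_algebraicClosure_iff.1 x.2)
    have h2 := minpoly.algebraMap_eq (A := K) (algebraMap M L).injective x
    unfold IsSeparable at h1 ⊢
    rw [← h2]
    exact h1⟩
  have hfin : Finite (IntermediateField K M) :=
    (Field.exists_primitive_element_iff_finite_intermediateField K M).1
      ⟨inferInstance, Field.exists_primitive_element K M⟩
  let N := finrank K ↥(A * B)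
  let T := {H : IntermediateField K L // FiniteDimensional K H ∧ finrank K H ≤ N}
  let f : T → IntermediateField K M := fun H => H.1.comap M.val
  have hf : Function.Injective f := by
    rintro ⟨H1, h1, h1'⟩ ⟨H2, h2, h2'⟩ h
    have key : ∀ H : IntermediateField K L, FiniteDimensional K H →
        ∀ H' : IntermediateField K L, H.comap M.val = H'.comap M.val → H ≤ H' := by
      intro H hH H' he x hx
      have hxM : x ∈ M := by
        have : IsIntegral K (⟨x, hx⟩ : H) := Algebra.IsIntegral.isIntegral _
        exact mem_algebraicClosure_iff'.2 (this.map H.val)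
      have : (⟨x, hxM⟩ : M) ∈ H.comap M.val := hx
      rw [he] at this
      exact this
    exact Subtype.ext (le_antisymm (key H1 h1 H2 h) (key H2 h2 H1 h.symm))
  have hT : Finite T := Finite.of_injective f hf
  obtain ⟨H, h1, -, -, h2⟩ := lk_ceil A B hA0 hB0 N le_rfl hT (Or.inl inferInstance)
  exact ⟨H, h1, h2⟩

theorem lk_lower {K L : Type*} [Field K] [Field L] [Algebra K L]
    (hsep : ∀ x : L, IsAlgebraic K x → IsSeparable K x)
    (A B : Submodule K L) [FiniteDimensional K A] [FiniteDimensional K B]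
    (hA0 : A ≠ ⊥) (hB0 : B ≠ ⊥) :
    ∃ H : IntermediateField K L, FiniteDimensional K H ∧
      (finrank K A ⌈/⌉ finrank K H + finrank K B ⌈/⌉ finrank K H - 1) * finrank K H
        ≤ finrank K ↥(A * B) := by
  obtain ⟨sA, hsA⟩ := Module.Finite.iff_fg.1 ‹FiniteDimensional K A›
  obtain ⟨sB, hsB⟩ := Module.Finite.iff_fg.1 ‹FiniteDimensional K B›
  classical
  let E := IntermediateField.adjoin K ((sA ∪ sB : Finset L) : Set L)
  have hE : Algebra.EssFiniteType K E :=
    IntermediateField.essFiniteType_iff.2 ⟨_, rfl⟩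
  have hAE : ∀ x ∈ A, x ∈ E := by
    intro x hx
    rw [← hsA] at hx
    have : Submodule.span K (sA : Set L) ≤ Subalgebra.toSubmodule E.toSubalgebra := by
      rw [Submodule.span_le]
      intro y hy
      exact IntermediateField.subset_adjoin K _ (by simp at hy ⊢; exact Or.inl hy)
    exact this hx
  have hBE : ∀ x ∈ B, x ∈ E := by
    intro x hx
    rw [← hsB] at hx
    have : Submodule.span K (sB : Set L) ≤ Subalgebra.toSubmodule E.toSubalgebra := by
      rw [Submodule.span_le]
      intro y hy
      exact IntermediateField.subset_adjoin K _ (by simp at hy ⊢; exact Or.inr hy)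
    exact this hx
  let i := E.val.toLinearMap
  have hi : Function.Injective i := E.val.injective
  let A' := A.comap i
  let B' := B.comap i
  have hA' : A'.map i = A := by
    rw [Submodule.map_comap_eq, inf_eq_right]
    intro x hx
    exact ⟨⟨x, hAE x hx⟩, rfl⟩
  have hB' : B'.map i = B := by
    rw [Submodule.map_comap_eq, inf_eq_right]
    intro x hx
    exact ⟨⟨x, hBE x hx⟩, rfl⟩
  have hAB' : (A' * B').map i = A * B := by
    rw [← hA', ← hB']
    exact Submodule.map_mul A' B' E.val
  have hr : ∀ C : Submodule K E, finrank K (C.map i) = finrank K C := fun C =>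
    (Submodule.equivMapOfInjective i hi C).finrank_eq.symm
  have hA'r : finrank K A' = finrank K A := by rw [← hr, hA']
  have hB'r : finrank K B' = finrank K B := by rw [← hr, hB']
  have hAB'r : finrank K ↥(A' * B') = finrank K ↥(A * B) := by rw [← hr, hAB']
  have hA'0 : A' ≠ ⊥ := by
    intro h; rw [h, Submodule.map_bot] at hA'; exact hA0 hA'.symm
  have hB'0 : B' ≠ ⊥ := by
    intro h; rw [h, Submodule.map_bot] at hB'; exact hB0 hB'.symm
  have : FiniteDimensional K A' := FiniteDimensional.of_finrank_pos (by
    rw [hA'r]; exact Nat.pos_of_ne_zero fun h => hA0 (Submodule.finrank_eq_zero.1 h))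
  have : FiniteDimensional K B' := FiniteDimensional.of_finrank_pos (by
    rw [hB'r]; exact Nat.pos_of_ne_zero fun h => hB0 (Submodule.finrank_eq_zero.1 h))
  have hsep' : ∀ x : E, IsAlgebraic K x → IsSeparable K x := by
    intro x hx
    have h1 : IsSeparable K (x : L) := hsep _ (hx.algebraMap (A := L))
    have h2 := minpoly.algebraMap_eq (A := K) (algebraMap E L).injective x
    unfold IsSeparable at h1 ⊢
    rw [← h2]
    exact h1
  obtain ⟨H, hH, h⟩ : ∃ H : IntermediateField K E, FiniteDimensional K H ∧
      (finrank K A' ⌈/⌉ finrank K H + finrank K B' ⌈/⌉ finrank K H - 1) * finrank K H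
        ≤ finrank K ↥(A' * B') := by
    rcases finite_or_infinite K with hK | hK
    · exact lk_finite_base A' B' hA'0 hB'0
    · exact lk_infinite_base hsep' A' B' hA'0 hB'0
  have hHr : finrank K (H.map E.val) = finrank K H :=
    (H.equivMap E.val).toLinearEquiv.finrank_eq.symm
  refine ⟨H.map E.val, FiniteDimensional.of_finrank_pos (by rw [hHr]; exact finrank_pos), ?_⟩
  rw [hHr, ← hA'r, ← hB'r, ← hAB'r]
  exact h

theorem lk_exists_pow {F L : Type*} [Field F] [Field L] [Algebra F L]
    (hsep : ∀ x : L, IsAlgebraic F x → IsSeparable F x) (n : ℕ)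
    (hn : (n : Cardinal) ≤ Module.rank F L) :
    ∃ x : L, LinearIndependent F (fun i : Fin n => x ^ (i : ℕ)) := by
  by_cases ht : ∃ x : L, Transcendental F x
  · obtain ⟨x, hx⟩ := ht
    refine ⟨x, ?_⟩
    have h1 := (Polynomial.basisMonomials F).linearIndependent.map'
      (Polynomial.aeval x).toLinearMap
      (LinearMap.ker_eq_bot.2 (transcendental_iff_injective.1 hx))
    have h2 := h1.comp (fun i : Fin n => (i : ℕ)) Fin.val_injective
    have h3 : ((Polynomial.aeval x).toLinearMap ∘ Polynomial.basisMonomials F) ∘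
        (fun i : Fin n => (i : ℕ)) = fun i : Fin n => x ^ (i : ℕ) := by
      ext i
      simp
    rw [h3] at h2
    exact h2
  · have hall : ∀ x : L, IsAlgebraic F x := by
      intro x
      by_contra h
      exact ht ⟨x, h⟩
    obtain ⟨s, hsc, hs⟩ := le_rank_iff_exists_finset.1 hn
    let E := IntermediateField.adjoin F (s : Set L)
    have hEf : FiniteDimensional F E :=
      IntermediateField.finiteDimensional_adjoin fun x _ => (hall x).isIntegral
    have hEs : Algebra.IsSeparable F E := ⟨fun x => by
      have h1 : IsSeparable F (x : L) := hsep _ (hall _)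
      have h2 := minpoly.algebraMap_eq (A := F) (algebraMap E L).injective x
      unfold IsSeparable at h1 ⊢
      rw [← h2]
      exact h1⟩
    have hle : n ≤ finrank F E := by
      have h1 := finrank_span_finset_eq_card hs
      have h2 : Submodule.span F (s : Set L) ≤ Subalgebra.toSubmodule E.toSubalgebra := by
        rw [Submodule.span_le]
        exact IntermediateField.subset_adjoin F _
      have : FiniteDimensional F (Subalgebra.toSubmodule E.toSubalgebra) := hEf
      have h3 := Submodule.finrank_mono h2
      rw [h1, hsc] at h3
      exact h3
    obtain ⟨y, hy⟩ := Field.exists_primitive_element F E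
    rw [Field.primitive_element_iff_minpoly_natDegree_eq] at hy
    refine ⟨y, ?_⟩
    have h1 := (linearIndependent_pow (K := F) y).map' E.val.toLinearMap
      (LinearMap.ker_eq_bot.2 E.val.injective)
    exact h1.comp (Fin.castLE (hle.trans hy.ge)) (Fin.castLE_injective _)

theorem lk_sub {K L : Type*} [Field K] [Field L] [Algebra K L] (C : Submodule K L)
    [FiniteDimensional K C] (r : ℕ) (hr : r ≤ finrank K C) :
    ∃ A : Submodule K L, A ≤ C ∧ finrank K A = r := by
  let b := Module.finBasis K C
  have hb : LinearIndependent K (fun i => (b i : L)) :=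
    b.linearIndependent.map' C.subtype (Submodule.ker_subtype C)
  have h2 := hb.comp (Fin.castLE hr) (Fin.castLE_injective _)
  refine ⟨_, ?_, (finrank_span_eq_card h2).trans (Fintype.card_fin r)⟩
  rw [Submodule.span_le]
  rintro _ ⟨i, rfl⟩
  exact (b _).2

theorem lk_tower {K F V : Type*} [Field K] [Field F] [Algebra K F] [AddCommGroup V] [Module K V]
    [Module F V] [IsScalarTower K F V] (S : Submodule F V) :
    finrank K (S.restrictScalars K) = finrank K F * finrank F S :=
  (Module.finrank_mul_finrank K F S).symm

theorem lk_upper {K L : Type*} [Field K] [Field L] [Algebra K L]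
    (hsep : ∀ x : L, IsAlgebraic K x → IsSeparable K x)
    (r s : ℕ) (hr : 0 < r) (hs : 0 < s)
    (hrL : (r : Cardinal) ≤ Module.rank K L) (hsL : (s : Cardinal) ≤ Module.rank K L)
    (H : IntermediateField K L) [FiniteDimensional K H] :
    ∃ A B : Submodule K L, finrank K A = r ∧ finrank K B = s ∧
      finrank K ↥(A * B) ≤ (r ⌈/⌉ finrank K H + s ⌈/⌉ finrank K H - 1) * finrank K H := by
  have hh : 0 < finrank K H := finrank_pos
  have hce : ∀ r : ℕ, (r : Cardinal) ≤ Module.rank K L →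
      ((r ⌈/⌉ finrank K H : ℕ) : Cardinal) ≤ Module.rank H L := by
    intro r hr
    rcases lt_or_ge (Module.rank H L) Cardinal.aleph0 with h | h
    · obtain ⟨m, hm⟩ := Cardinal.lt_aleph0.1 h
      rw [← rank_mul_rank K H L, hm, ← finrank_eq_rank K H] at hr
      rw [hm]
      have hr' : r ≤ finrank K H * m := by exact_mod_cast hr
      exact_mod_cast (ceilDiv_le_iff_le_mul hh).2 hr'
    · exact (Cardinal.natCast_le_aleph0).trans h
  have hsepH : ∀ x : L, IsAlgebraic H x → IsSeparable H x := by
    intro x hx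
    have : IsAlgebraic K x := hx.restrictScalars K
    exact IsSeparable.tower_top H (hsep x this)
  set p := r ⌈/⌉ finrank K H with hp
  set q := s ⌈/⌉ finrank K H with hq
  have hrp : r ≤ finrank K H * p := (ceilDiv_le_iff_le_mul hh).1 le_rfl
  have hsq : s ≤ finrank K H * q := (ceilDiv_le_iff_le_mul hh).1 le_rfl
  have hp0 : 0 < p := Nat.pos_of_ne_zero fun h => by rw [h] at hrp; omega
  have hq0 : 0 < q := Nat.pos_of_ne_zero fun h => by rw [h] at hsq; omega
  obtain ⟨x, hx⟩ := lk_exists_pow hsepH (max p q) (by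
    rcases max_cases p q with h | h
    · rw [h.1]; exact hce r hrL
    · rw [h.1]; exact hce s hsL)
  let S : ℕ → Submodule H L := fun n => Submodule.span H (Set.range fun i : Fin n => x ^ (i : ℕ))
  have hSfd : ∀ n, FiniteDimensional H (S n) := fun n =>
    FiniteDimensional.span_of_finite H (Set.finite_range _)
  have hKfd : ∀ n, FiniteDimensional K ((S n).restrictScalars K) := fun n =>
    (Module.Finite.trans H (S n) : Module.Finite K (S n))
  have hKr : ∀ n, finrank K ((S n).restrictScalars K) = finrank K H * finrank H (S n) := fun n =>
    lk_tower (S n)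
  have hSr : ∀ n, n ≤ max p q → finrank H (S n) = n := by
    intro n hn
    have h2 := hx.comp (Fin.castLE hn) (Fin.castLE_injective _)
    exact (finrank_span_eq_card h2).trans (Fintype.card_fin n)
  have hSle : ∀ n, finrank H (S n) ≤ n := fun n =>
    (finrank_range_le_card _).trans (Fintype.card_fin n).le
  obtain ⟨A, hA, hAr⟩ := lk_sub ((S p).restrictScalars K) r (by
    rw [hKr, hSr p (le_max_left _ _)]; exact hrp)
  obtain ⟨B, hB, hBr⟩ := lk_sub ((S q).restrictScalars K) s (by
    rw [hKr, hSr q (le_max_right _ _)]; exact hsq)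
  refine ⟨A, B, hAr, hBr, ?_⟩
  have hmul : A * B ≤ (S (p + q - 1)).restrictScalars K := by
    rw [Submodule.mul_le]
    intro a ha b hb
    have h1 : a * b ∈ S p * S q := Submodule.mul_mem_mul (hA ha) (hB hb)
    have h2 : S p * S q ≤ S (p + q - 1) := by
      change Submodule.span _ _ * Submodule.span _ _ ≤ _
      rw [Submodule.span_mul_span, Submodule.span_le]
      rintro _ ⟨_, ⟨i, rfl⟩, _, ⟨j, rfl⟩, rfl⟩
      refine Submodule.subset_span ⟨⟨i + j, by omega⟩, ?_⟩
      simp [pow_add]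
    exact h2 h1
  have := Submodule.finrank_mono hmul
  rw [hKr] at this
  rw [mul_comm _ (finrank K H)]
  exact this.trans (Nat.mul_le_mul_left _ (hSle _))

/-- **Theorem 1.1** (Eliahou–Kervaire–Lecouvey). For a separable field extension `K ⊆ L`
and positive integers `r, s ≤ dim_K L`, the minimum of `dim_K ⟨AB⟩` over `K`-subspaces
`A, B` of `L` with `dim_K A = r`, `dim_K B = s` equals
`κ_{K,L}(r,s) = min_h (⌈r/h⌉ + ⌈s/h⌉ - 1)·h`, where `h` ranges over the `K`-degrees of
finite-dimensional intermediate fields `K ⊆ H ⊆ L`. -/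
theorem stmt_0 (K L : Type*) [Field K] [Field L] [Algebra K L]
    (hsep : ∀ x : L, IsAlgebraic K x → IsSeparable K x)
    (r s : ℕ) (hr : 0 < r) (hs : 0 < s)
    (hrL : (r : Cardinal) ≤ Module.rank K L) (hsL : (s : Cardinal) ≤ Module.rank K L) :
    sInf {n : ℕ | ∃ A B : Submodule K L,
        Module.finrank K A = r ∧ Module.finrank K B = s ∧ Module.finrank K ↥(A * B) = n}
      = sInf {n : ℕ | ∃ H : IntermediateField K L, FiniteDimensional K H ∧
          n = (r ⌈/⌉ Module.finrank K ↥H + s ⌈/⌉ Module.finrank K ↥H - 1)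
                * Module.finrank K ↥H} := by
  apply le_antisymm
  · obtain ⟨H, hH, hn⟩ := Nat.sInf_mem (s := {n : ℕ | ∃ H : IntermediateField K L,
        FiniteDimensional K H ∧
          n = (r ⌈/⌉ Module.finrank K ↥H + s ⌈/⌉ Module.finrank K ↥H - 1)
                * Module.finrank K ↥H}) ⟨_, ⊥, inferInstance, rfl⟩
    rw [hn]
    obtain ⟨A, B, hA, hB, hAB⟩ := lk_upper hsep r s hr hs hrL hsL H
    refine le_trans (Nat.sInf_le ?_) hAB
    exact ⟨A, B, hA, hB, rfl⟩
  · obtain ⟨A0, B0, hA0, hB0, -⟩ := lk_upper hsep r s hr hs hrL hsL ⊥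
    obtain ⟨A, B, hA, hB, hn⟩ := Nat.sInf_mem (s := {n : ℕ | ∃ A B : Submodule K L,
        Module.finrank K A = r ∧ Module.finrank K B = s ∧ Module.finrank K ↥(A * B) = n})
        ⟨_, A0, B0, hA0, hB0, rfl⟩
    rw [← hn]
    have : FiniteDimensional K A := FiniteDimensional.of_finrank_pos (by omega)
    have : FiniteDimensional K B := FiniteDimensional.of_finrank_pos (by omega)
    obtain ⟨H, hH, h⟩ := lk_lower hsep A B (by rintro rfl; simp at hA; omega)
      (by rintro rfl; simp at hB; omega)
    rw [hA, hB] at h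
    refine le_trans (Nat.sInf_le ?_) h
    exact ⟨H, hH, rfl⟩
end

section
/- Let K ⊆ L be a commutative field extension in which every element of L that is algebraic over K is separable over K. Then for all nonzero finite-dimensional K-subspaces A, B of L with dim_K A = r and dim_K B = s, there exists a finite-dimensional intermediate field K ⊆ H ⊆ L such that, with h = [H:K], one has dim_K⟨AB⟩ ≥ (⌈r/h⌉ + ⌈s/h⌉ − 1)·h. -/
namespace LinKneser

open Module

variable {K L : Type*} [Field K] [Field L] [Algebra K L]

/-- Scaling of a subspace. -/
noncomputable def sm (a : L) (X : Submodule K L) : Submodule K L := X.map (LinearMap.mulLeft K a)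

theorem mul_mem_sm {a x : L} {X : Submodule K L} (hx : x ∈ X) : a * x ∈ sm a X :=
  ⟨x, hx, rfl⟩

theorem mem_sm {a : L} (ha : a ≠ 0) {X : Submodule K L} {x : L} :
    x ∈ sm a X ↔ a⁻¹ * x ∈ X := by
  constructor
  · rintro ⟨y, hy, rfl⟩
    simpa [ha] using hy
  · intro h
    exact ⟨a⁻¹ * x, h, by simp [ha]⟩

theorem mem_sm_inv {a : L} (ha : a ≠ 0) {X : Submodule K L} {x : L} :
    x ∈ sm a⁻¹ X ↔ a * x ∈ X := by
  rw [mem_sm (inv_ne_zero ha), inv_inv]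

theorem inj_mul {a : L} (ha : a ≠ 0) : Function.Injective (LinearMap.mulLeft K a) := by
  intro x y h
  simpa [ha] using h

theorem finrank_sm {a : L} (ha : a ≠ 0) (X : Submodule K L) :
    finrank K (sm a X) = finrank K X :=
  (LinearEquiv.finrank_eq (Submodule.equivMapOfInjective _ (inj_mul ha) X)).symm

instance fd_sm (a : L) (X : Submodule K L) [FiniteDimensional K X] :
    FiniteDimensional K (sm a X) := by
  unfold sm; infer_instance

theorem fd_of_sm {a : L} (ha : a ≠ 0) (X C : Submodule K L) [FiniteDimensional K C]
    (h : ∀ x ∈ X, a * x ∈ C) : FiniteDimensional K X := by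
  have h1 : X ≤ sm a⁻¹ C := fun x hx => (mem_sm_inv ha).2 (h x hx)
  exact Submodule.finiteDimensional_of_le h1

theorem inf_sm {e : L} (he0 : e ≠ 0) (Z Y : Submodule K L) :
    Z ⊓ sm e Y = sm e (Y ⊓ sm e⁻¹ Z) := by
  ext x
  rw [mem_sm he0, Submodule.mem_inf, Submodule.mem_inf, mem_sm he0, mem_sm_inv he0,
    mul_inv_cancel_left₀ he0, and_comm]

theorem exists_stab (Z : Submodule K L) [FiniteDimensional K Z] :
    ∃ S : IntermediateField K L, ∀ u, u ∈ S ↔ ∀ z ∈ Z, u * z ∈ Z := by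
  let T : Subalgebra K L :=
    { carrier := {u | ∀ z ∈ Z, u * z ∈ Z}
      mul_mem' := by
        intro a b ha hb z hz
        rw [mul_assoc]; exact ha _ (hb _ hz)
      add_mem' := by
        intro a b ha hb z hz
        rw [add_mul]; exact Z.add_mem (ha _ hz) (hb _ hz)
      algebraMap_mem' := by
        intro r z hz
        rw [← Algebra.smul_def]; exact Z.smul_mem _ hz }
  refine ⟨{ T with inv_mem' := ?_ }, fun u => Iff.rfl⟩
  intro u hu z hz
  by_cases h0 : u = 0
  · subst h0; simp
  have hle : sm u Z ≤ Z := by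
    rintro _ ⟨y, hy, rfl⟩
    exact hu y hy
  have heq : sm u Z = Z := Submodule.eq_of_le_of_finrank_eq hle (finrank_sm h0 Z)
  rw [← heq] at hz
  exact (mem_sm h0).1 hz

theorem exists_max {α : Type*} (P : α → Prop) (f : α → ℕ) (N : ℕ) (h : ∃ x, P x)
    (hb : ∀ x, P x → f x ≤ N) : ∃ x, P x ∧ ∀ y, P y → f y ≤ f x := by
  classical
  obtain ⟨x, hx⟩ := h
  have := Nat.findGreatest_spec (P := fun n => ∃ x, P x ∧ f x = n) (hb x hx) ⟨x, hx, rfl⟩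
  obtain ⟨w, hw, hfw⟩ := this
  refine ⟨w, hw, fun y hy => ?_⟩
  rw [hfw]
  exact Nat.le_findGreatest (hb y hy) ⟨y, hy, rfl⟩

/-- Pairs of subspaces with product inside `C`, relative to `M` and `Z0`. -/
structure Pr (C : Submodule K L) (M : IntermediateField K L) (Z0 A B : Submodule K L) : Prop where
  sub : ∀ a ∈ A, a ∈ M
  le : Z0 ≤ B
  ne : ∃ a ∈ A, a ≠ 0
  nle : ∃ b ∈ B, b ∉ Z0
  mul : ∀ a ∈ A, ∀ b ∈ B, a * b ∈ C

theorem Pr.fdA {C : Submodule K L} [FiniteDimensional K C] {M : IntermediateField K L}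
    {Z0 A B : Submodule K L} (h : Pr C M Z0 A B) : FiniteDimensional K A := by
  obtain ⟨b, hb, hb0⟩ := h.nle
  have : b ≠ 0 := fun h => hb0 (h ▸ Z0.zero_mem)
  exact fd_of_sm this A C (fun x hx => by rw [mul_comm]; exact h.mul x hx b hb)

theorem Pr.fdB {C : Submodule K L} [FiniteDimensional K C] {M : IntermediateField K L}
    {Z0 A B : Submodule K L} (h : Pr C M Z0 A B) : FiniteDimensional K B := by
  obtain ⟨a, ha, ha0⟩ := h.ne
  exact fd_of_sm ha0 B C (fun x hx => h.mul a ha x hx)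

theorem Pr.cardB {C : Submodule K L} [FiniteDimensional K C] {M : IntermediateField K L}
    {Z0 A B : Submodule K L} (h : Pr C M Z0 A B) : finrank K B ≤ finrank K C := by
  obtain ⟨a, ha, ha0⟩ := h.ne
  rw [← finrank_sm ha0]
  refine Submodule.finrank_mono ?_
  rintro _ ⟨x, hx, rfl⟩
  exact h.mul a ha x hx

theorem Pr.cardA {C : Submodule K L} [FiniteDimensional K C] {M : IntermediateField K L}
    {Z0 A B : Submodule K L} (h : Pr C M Z0 A B) : finrank K A ≤ finrank K C := by
  obtain ⟨b, hb, hb0⟩ := h.nle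
  have h0 : b ≠ 0 := fun h => hb0 (h ▸ Z0.zero_mem)
  rw [← finrank_sm h0]
  refine Submodule.finrank_mono ?_
  rintro _ ⟨x, hx, rfl⟩
  simp only [LinearMap.mulLeft_apply]
  rw [mul_comm]
  exact h.mul x hx b hb

theorem Pr.scale {C : Submodule K L} {M : IntermediateField K L}
    {Z0 A B : Submodule K L} (hM : ∀ m ∈ M, ∀ z ∈ Z0, m * z ∈ Z0)
    (h : Pr C M Z0 A B) {a : L} (ha : a ∈ A) (ha0 : a ≠ 0) :
    Pr C M Z0 (sm a⁻¹ A) (sm a B) := by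
  have haM := h.sub a ha
  have haM' := M.inv_mem haM
  refine ⟨?_, ?_, ?_, ?_, ?_⟩
  · rintro _ ⟨x, hx, rfl⟩
    exact M.mul_mem haM' (h.sub x hx)
  · intro z hz
    exact (mem_sm ha0).2 (h.le (hM _ haM' _ hz))
  · exact ⟨1, (mem_sm_inv ha0).2 (by simpa using ha), one_ne_zero⟩
  · obtain ⟨b, hb, hb0⟩ := h.nle
    refine ⟨a * b, mul_mem_sm hb, fun hc => hb0 ?_⟩
    have := hM _ haM' _ hc
    rwa [inv_mul_cancel_left₀ ha0] at this
  · rintro _ ⟨x, hx, rfl⟩ _ ⟨y, hy, rfl⟩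
    have : a⁻¹ * x * (a * y) = x * y := by field_simp
    simp only [LinearMap.mulLeft_apply]
    rw [this]; exact h.mul x hx y hy

/-- The e-transform step: a maximal pair whose first member is a field. -/
theorem exists_top {C : Submodule K L} [FiniteDimensional K C] {M : IntermediateField K L}
    {Z0 : Submodule K L} (hM : ∀ m ∈ M, ∀ z ∈ Z0, m * z ∈ Z0)
    (hex : ∃ A B, Pr C M Z0 A B) :
    ∃ (H : IntermediateField K L) (Z : Submodule K L), H ≤ M ∧ Z0 ≤ Z ∧ Z ≤ C ∧
      (∃ z ∈ Z, z ∉ Z0) ∧ (∀ u ∈ H, ∀ z ∈ Z, u * z ∈ Z) ∧ FiniteDimensional K H ∧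
      ∀ A B, Pr C M Z0 A B → finrank K A + finrank K B ≤ finrank K H + finrank K Z := by
  obtain ⟨A0, B0, h0⟩ := hex
  obtain ⟨p, hp, hpm⟩ := exists_max (fun p : Submodule K L × Submodule K L => Pr C M Z0 p.1 p.2)
    (fun p => finrank K p.1 + finrank K p.2) (finrank K C + finrank K C) ⟨(A0, B0), h0⟩
    (fun x hx => add_le_add hx.cardA hx.cardB)
  obtain ⟨q, ⟨hq, hqs⟩, hqm⟩ := exists_max (fun q : Submodule K L × Submodule K L =>
    Pr C M Z0 q.1 q.2 ∧ finrank K q.1 + finrank K q.2 = finrank K p.1 + finrank K p.2)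
    (fun p => finrank K p.2) (finrank K C) ⟨p, hp, rfl⟩ (fun x hx => hx.1.cardB)
  obtain ⟨a, ha, ha0⟩ := hq.ne
  have hY := hq.scale hM ha ha0
  have h1 : (1 : L) ∈ sm a⁻¹ q.1 := (mem_sm_inv ha0).2 (by simpa using ha)
  have e1 : finrank K (sm a⁻¹ q.1) = finrank K q.1 := finrank_sm (inv_ne_zero ha0) _
  have e2 : finrank K (sm a q.2) = finrank K q.2 := finrank_sm ha0 _
  generalize sm a⁻¹ q.1 = Y at *
  generalize sm a q.2 = Z at *
  have := hY.fdA
  have := hY.fdB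
  obtain ⟨S, hS⟩ := exists_stab Z
  have hYS : ∀ y ∈ Y, y ∈ S := by
    intro y hy
    rw [hS]
    intro e he
    by_cases he0 : e = 0
    · subst he0; simp
    have hpr : Pr C M Z0 (Y ⊓ sm e⁻¹ Z) (Z ⊔ sm e Y) := by
      refine ⟨fun x hx => hY.sub x hx.1, hY.le.trans le_sup_left,
        ⟨1, ⟨h1, (mem_sm_inv he0).2 (by simpa using he)⟩, one_ne_zero⟩, ?_, ?_⟩
      · obtain ⟨b, hb, hb0⟩ := hY.nle
        exact ⟨b, Submodule.mem_sup_left hb, hb0⟩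
      · intro x hx w hw
        obtain ⟨w1, hw1, w2, hw2, rfl⟩ := Submodule.mem_sup.1 hw
        rw [mul_add]
        refine C.add_mem (hY.mul _ hx.1 _ hw1) ?_
        obtain ⟨t, ht, rfl⟩ := hw2
        have h3 := (mem_sm_inv he0).1 hx.2
        have h4 := hY.mul t ht _ h3
        have : x * (LinearMap.mulLeft K e) t = t * (e * x) := by simp; ring
        rw [this]; exact h4
    have hd1 := Submodule.finrank_sup_add_finrank_inf_eq Z (sm e Y)
    have hd2 : finrank K ↥(Z ⊓ sm e Y) = finrank K ↥(Y ⊓ sm e⁻¹ Z) := by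
      rw [inf_sm he0, finrank_sm he0]
    rw [finrank_sm he0] at hd1
    have hm := hqm (Y ⊓ sm e⁻¹ Z, Z ⊔ sm e Y) ⟨hpr, by simp only; omega⟩
    simp only at hm
    have := hpr.fdB
    have heq : Z = Z ⊔ sm e Y := Submodule.eq_of_le_of_finrank_le le_sup_left (by omega)
    rw [heq, mul_comm]
    exact Submodule.mem_sup_right (mul_mem_sm hy)
  refine ⟨M ⊓ S, Z, inf_le_left, hY.le, ?_, hY.nle, fun u hu => (hS u).1 hu.2, ?_, ?_⟩
  · intro z hz
    simpa using hY.mul 1 h1 z hz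
  · obtain ⟨z, hz, hz0⟩ := hY.nle
    have h0 : z ≠ 0 := fun h => hz0 (h ▸ Z0.zero_mem)
    exact fd_of_sm h0 (Subalgebra.toSubmodule (M ⊓ S).toSubalgebra) Z
      (fun x hx => by rw [mul_comm]; exact (hS x).1 hx.2 z hz)
  · have : FiniteDimensional K (Subalgebra.toSubmodule (M ⊓ S).toSubalgebra) := by
      obtain ⟨z, hz, hz0⟩ := hY.nle
      have h0 : z ≠ 0 := fun h => hz0 (h ▸ Z0.zero_mem)
      exact fd_of_sm h0 (Subalgebra.toSubmodule (M ⊓ S).toSubalgebra) Z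
        (fun x hx => by rw [mul_comm]; exact (hS x).1 hx.2 z hz)
    intro A B hAB
    have hm := hpm (A, B) hAB
    simp only at hm
    have : finrank K Y ≤ finrank K (Subalgebra.toSubmodule (M ⊓ S).toSubalgebra) :=
      Submodule.finrank_mono (fun y hy => ⟨hY.sub y hy, hYS y hy⟩)
    have e3 : finrank K (Subalgebra.toSubmodule (M ⊓ S).toSubalgebra)
      = finrank K ↥(M ⊓ S) := rfl
    omega

theorem core {C : Submodule K L} [FiniteDimensional K C] (n : ℕ) :
    ∀ (M : IntermediateField K L) (Z0 : Submodule K L),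
      (∀ m ∈ M, ∀ z ∈ Z0, m * z ∈ Z0) → Z0 ≤ C → finrank K C ≤ finrank K Z0 + n →
      (∃ A B, Pr C M Z0 A B ∧ finrank K C + 1 < finrank K A + finrank K B) →
      ∃ J : IntermediateField K L, J ≤ M ∧ J ≠ ⊥ ∧
        ∀ A B, Pr C M Z0 A B → finrank K C + 1 < finrank K A + finrank K B →
          (∀ x ∈ M, (∀ b ∈ B, x * b ∈ C) → x ∈ A) → ∀ j ∈ J, ∀ a ∈ A, j * a ∈ A := by
  induction n using Nat.strong_induction_on with
  | _ n ih =>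
  intro M Z0 hM hZ0C hn hbad
  obtain ⟨A0, B0, hAB0, hbad0⟩ := hbad
  obtain ⟨H, Z, hHM, hZ0Z, hZC, ⟨w, hw, hw0⟩, hHZ, hHfd, hmax⟩ :=
    exists_top hM ⟨A0, B0, hAB0⟩
  have hw00 : w ≠ 0 := fun h => hw0 (h ▸ Z0.zero_mem)
  have fdZ : FiniteDimensional K Z := Submodule.finiteDimensional_of_le hZC
  have fdZ0 : FiniteDimensional K Z0 := Submodule.finiteDimensional_of_le hZ0C
  obtain ⟨Hs, hHs⟩ : ∃ Hs : Submodule K L, Hs = Subalgebra.toSubmodule H.toSubalgebra := ⟨_, rfl⟩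
  have memH : ∀ x, x ∈ Hs ↔ x ∈ H := fun x => by subst hHs; rfl
  have fdH : FiniteDimensional K Hs := by subst hHs; exact hHfd
  have rkH : finrank K H = finrank K Hs := by subst hHs; rfl
  rw [rkH] at hmax
  have hzc : finrank K Z ≤ finrank K C := Submodule.finrank_mono hZC
  have hmax0 := hmax A0 B0 hAB0
  have hhz : finrank K Hs + finrank K Z0 ≤ finrank K Z := by
    have h1 := Submodule.finrank_sup_add_finrank_inf_eq (sm w Hs) Z0
    have h2 : sm w Hs ⊓ Z0 = ⊥ := by
      rw [Submodule.eq_bot_iff]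
      rintro _ ⟨⟨x, hx, rfl⟩, hx2⟩
      by_contra hne
      have hx0 : x ≠ 0 := by rintro rfl; simp at hne
      have hx' : x⁻¹ ∈ M := M.inv_mem (hHM ((memH x).1 hx))
      have := hM _ hx' _ hx2
      simp only [LinearMap.mulLeft_apply] at this
      rw [mul_comm w x, inv_mul_cancel_left₀ hx0] at this
      exact hw0 this
    have h3 : sm w Hs ⊔ Z0 ≤ Z := by
      refine sup_le ?_ hZ0Z
      rintro _ ⟨x, hx, rfl⟩
      simp only [LinearMap.mulLeft_apply]
      rw [mul_comm]
      exact hHZ x ((memH x).1 hx) w hw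
    have h4 := Submodule.finrank_mono h3
    rw [h2, finrank_bot, finrank_sm hw00] at h1
    omega
  have hHne : H ≠ ⊥ := by
    rintro rfl
    rw [IntermediateField.finrank_bot] at rkH
    omega
  have hHpos : 0 < finrank K Hs := by omega
  obtain ⟨J, hJH, hJne, hJ⟩ : ∃ J : IntermediateField K L, J ≤ H ∧ J ≠ ⊥ ∧
        ∀ A B, Pr C H Z A B → finrank K C + 1 < finrank K A + finrank K B →
          (∀ x ∈ H, (∀ b ∈ B, x * b ∈ C) → x ∈ A) → ∀ j ∈ J, ∀ a ∈ A, j * a ∈ A := by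
    by_cases hlow : ∃ A B, Pr C H Z A B ∧ finrank K C + 1 < finrank K A + finrank K B
    · exact ih (n - 1) (by omega) H Z hHZ hZC (by omega) hlow
    · exact ⟨H, le_rfl, hHne, fun A B h1 h2 => absurd ⟨A, B, h1, h2⟩ hlow⟩
  refine ⟨J, hJH.trans hHM, hJne, ?_⟩
  intro A B1 hAB1 hlt1 hsat1
  obtain ⟨B, hB⟩ : ∃ B : Submodule K L, ∀ w, w ∈ B ↔ ∀ a ∈ A, a * w ∈ C :=
    ⟨{ carrier := {w | ∀ a ∈ A, a * w ∈ C}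
       add_mem' := fun {x y} hx hy a ha => by rw [mul_add]; exact C.add_mem (hx a ha) (hy a ha)
       zero_mem' := fun a _ => by simp
       smul_mem' := fun k x hx a ha => by rw [mul_smul_comm]; exact C.smul_mem _ (hx a ha) },
      fun _ => Iff.rfl⟩
  have hBB : B1 ≤ B := fun b hb => (hB b).2 fun a ha => hAB1.mul a ha b hb
  have hAB : Pr C M Z0 A B := by
    refine ⟨hAB1.sub, hAB1.le.trans hBB, hAB1.ne, ?_, fun a ha b hb => (hB b).1 hb a ha⟩
    obtain ⟨b, hb, hb0⟩ := hAB1.nle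
    exact ⟨b, hBB hb, hb0⟩
  have hsat : ∀ x ∈ M, (∀ b ∈ B, x * b ∈ C) → x ∈ A :=
    fun x hx h => hsat1 x hx fun b hb => h b (hBB hb)
  have fdA := hAB.fdA
  have fdB := hAB.fdB
  have hlt : finrank K C + 1 < finrank K A + finrank K B := by
    have := Submodule.finrank_mono hBB
    omega
  clear hlt1 hsat1 hBB hAB1
  have hmaxAB := hmax A B hAB
  by_cases hc : finrank K C < finrank K A + finrank K Z
  · -- route two
    have key : ∀ j ∈ J, ∀ b ∈ B, j * b ∈ B := by
      intro j hj b hb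
      by_cases hbZ : b ∈ Z0
      · exact hAB.le (hM j (hHM (hJH hj)) b hbZ)
      have hb0 : b ≠ 0 := fun h => hbZ (h ▸ Z0.zero_mem)
      have d1 := Submodule.finrank_sup_add_finrank_inf_eq Z (sm b A)
      have d2 := Submodule.finrank_sup_add_finrank_inf_eq B (sm b Hs)
      rw [inf_sm hb0, finrank_sm hb0, finrank_sm hb0] at d1 d2
      have hle : Z ⊔ sm b A ≤ C := by
        refine sup_le hZC ?_
        rintro _ ⟨x, hx, rfl⟩
        simp only [LinearMap.mulLeft_apply]
        rw [mul_comm]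
        exact hAB.mul x hx b hb
      have d3 := Submodule.finrank_mono hle
      have hp2 : Pr C M Z0 (A ⊓ sm b⁻¹ Z) (B ⊔ sm b Hs) := by
        refine ⟨fun a ha => hAB.sub a ha.1, hAB.le.trans le_sup_left, ?_,
          ⟨b, Submodule.mem_sup_left hb, hbZ⟩, ?_⟩
        · have : (A ⊓ sm b⁻¹ Z) ≠ ⊥ := by
            intro h
            rw [h, finrank_bot] at d1
            omega
          exact Submodule.exists_mem_ne_zero_of_ne_bot this
        · intro x hx y hy
          obtain ⟨y1, hy1, y2, hy2, rfl⟩ := Submodule.mem_sup.1 hy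
          rw [mul_add]
          refine C.add_mem (hAB.mul x hx.1 _ hy1) ?_
          obtain ⟨u, hu, rfl⟩ := hy2
          have h1 := hHZ u ((memH u).1 hu) _ ((mem_sm_inv hb0).1 hx.2)
          have h2 : x * (LinearMap.mulLeft K b) u = u * (b * x) := by simp; ring
          rw [h2]; exact hZC h1
      have hm2 := hmax _ _ hp2
      have one_mem : (1 : L) ∈ Hs ⊓ sm b⁻¹ B :=
        ⟨(memH 1).2 H.one_mem, (mem_sm_inv hb0).2 (by simpa using hb)⟩
      by_cases hAZ : sm b A ≤ Z
      · refine (hB _).2 fun a ha => ?_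
        have h1 := hHZ j (hJH hj) _ (hAZ (mul_mem_sm ha))
        have h2 : a * (j * b) = j * (b * a) := by ring
        rw [h2]; exact hZC h1
      have hp1 : Pr C H Z (Hs ⊓ sm b⁻¹ B) (Z ⊔ sm b A) := by
        refine ⟨fun a ha => (memH a).1 ha.1, le_sup_left, ⟨1, one_mem, one_ne_zero⟩, ?_, ?_⟩
        · obtain ⟨y, hy, hy2⟩ := Set.not_subset.1 hAZ
          exact ⟨y, Submodule.mem_sup_right hy, hy2⟩
        · intro x hx y hy
          obtain ⟨y1, hy1, y2, hy2, rfl⟩ := Submodule.mem_sup.1 hy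
          rw [mul_add]
          refine C.add_mem (hZC (hHZ x ((memH x).1 hx.1) _ hy1)) ?_
          obtain ⟨u, hu, rfl⟩ := hy2
          have h1 := hAB.mul u hu _ ((mem_sm_inv hb0).1 hx.2)
          have h2 : x * (LinearMap.mulLeft K b) u = u * (b * x) := by simp; ring
          rw [h2]; exact h1
      have h5 := hJ _ _ hp1 (by omega) ?_ j hj 1 one_mem
      · rw [mul_one] at h5
        have := (mem_sm_inv hb0).1 h5.2
        rwa [mul_comm]
      · intro x hx h
        refine ⟨(memH x).2 hx, (mem_sm_inv hb0).2 ((hB _).2 fun a ha => ?_)⟩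
        have h1 := h (b * a) (Submodule.mem_sup_right (mul_mem_sm ha))
        have h2 : a * (b * x) = x * (b * a) := by ring
        rw [h2]; exact h1
    intro j hj a ha
    refine hsat _ (M.mul_mem (hHM (hJH hj)) (hAB.sub a ha)) fun b hb => ?_
    have h2 : j * a * b = a * (j * b) := by ring
    rw [h2]
    exact hAB.mul a ha _ (key j hj b hb)
  · intro j hj a ha
    by_cases ha0 : a = 0
    · subst ha0; simp
    have hS := hAB.scale hM ha ha0
    have one_A : (1 : L) ∈ sm a⁻¹ A := (mem_sm_inv ha0).2 (by simpa using ha)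
    have e1 : finrank K (sm a⁻¹ A) = finrank K A := finrank_sm (inv_ne_zero ha0) _
    have e2 : finrank K (sm a B) = finrank K B := finrank_sm ha0 _
    have haM := hAB.sub a ha
    have satS : ∀ x ∈ M, (∀ b ∈ sm a B, x * b ∈ C) → x ∈ sm a⁻¹ A := by
      intro x hx h
      refine (mem_sm_inv ha0).2 (hsat _ (M.mul_mem haM hx) fun b hb => ?_)
      have h1 := h _ (mul_mem_sm hb)
      have h2 : a * x * b = x * (a * b) := by ring
      rw [h2]; exact h1
    suffices h : j ∈ sm a⁻¹ A by
      have := (mem_sm_inv ha0).1 h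
      rwa [mul_comm]
    have hfa := hS.fdA
    have hfb := hS.fdB
    generalize sm a⁻¹ A = A' at *
    generalize sm a B = B' at *
    by_cases hBZ : B' ≤ Z
    · exact satS j (hHM (hJH hj)) fun b hb => hZC (hHZ j (hJH hj) b (hBZ hb))
    have d1 := Submodule.finrank_sup_add_finrank_inf_eq B' Z
    have d2 := Submodule.finrank_sup_add_finrank_inf_eq A' Hs
    have hle : B' ⊔ Z ≤ C := by
      refine sup_le (fun b hb => ?_) hZC
      simpa using hS.mul 1 one_A b hb
    have d3 := Submodule.finrank_mono hle
    have hp2 : Pr C M Z0 (A' ⊔ Hs) (B' ⊓ Z) := by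
      refine ⟨?_, le_inf hS.le hZ0Z, ⟨1, Submodule.mem_sup_left one_A, one_ne_zero⟩, ?_, ?_⟩
      · intro x hx
        obtain ⟨y1, hy1, y2, hy2, rfl⟩ := Submodule.mem_sup.1 hx
        exact M.add_mem (hS.sub _ hy1) (hHM ((memH _).1 hy2))
      · by_contra hno
        have : B' ⊓ Z ≤ Z0 := fun x hx => by
          by_contra hx2
          exact hno ⟨x, hx, hx2⟩
        have := Submodule.finrank_mono this
        omega
      · intro x hx b hb
        obtain ⟨y1, hy1, y2, hy2, rfl⟩ := Submodule.mem_sup.1 hx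
        rw [add_mul]
        exact C.add_mem (hS.mul _ hy1 _ hb.1) (hZC (hHZ _ ((memH _).1 hy2) _ hb.2))
    have hm2 := hmax _ _ hp2
    have one_mem : (1 : L) ∈ A' ⊓ Hs := ⟨one_A, (memH 1).2 H.one_mem⟩
    have hp1 : Pr C H Z (A' ⊓ Hs) (B' ⊔ Z) := by
      refine ⟨fun x hx => (memH x).1 hx.2, le_sup_right, ⟨1, one_mem, one_ne_zero⟩, ?_, ?_⟩
      · obtain ⟨y, hy, hy2⟩ := Set.not_subset.1 hBZ
        exact ⟨y, Submodule.mem_sup_left hy, hy2⟩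
      · intro x hx y hy
        obtain ⟨y1, hy1, y2, hy2, rfl⟩ := Submodule.mem_sup.1 hy
        rw [mul_add]
        exact C.add_mem (hS.mul _ hx.1 _ hy1) (hZC (hHZ _ ((memH _).1 hx.2) _ hy2))
    have h5 := hJ _ _ hp1 (by omega) ?_ j hj 1 one_mem
    · rw [mul_one] at h5
      exact h5.1
    · intro x hx h
      exact ⟨satS x (hHM hx) fun b hb => h b (Submodule.mem_sup_left hb), (memH x).2 hx⟩

/-- If `C` has trivial stabilizer, no pair is bad. -/
theorem no_bad {C : Submodule K L} [FiniteDimensional K C] (A B : Submodule K L)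
    (hA : ∃ a ∈ A, a ≠ 0) (hB : ∃ b ∈ B, b ≠ 0) (hC : ∀ a ∈ A, ∀ b ∈ B, a * b ∈ C)
    (hgen : ∀ u : L, (∀ a ∈ A, ∀ b ∈ B, u * (a * b) ∈ C) → u ∈ (⊥ : IntermediateField K L)) :
    finrank K A + finrank K B ≤ finrank K C + 1 := by
  by_contra hlt
  push Not at hlt
  obtain ⟨A', hA'⟩ : ∃ A' : Submodule K L, ∀ w, w ∈ A' ↔ ∀ b ∈ B, w * b ∈ C :=
    ⟨{ carrier := {w | ∀ b ∈ B, w * b ∈ C}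
       add_mem' := fun {x y} hx hy a ha => by rw [add_mul]; exact C.add_mem (hx a ha) (hy a ha)
       zero_mem' := fun a _ => by simp
       smul_mem' := fun k x hx a ha => by rw [smul_mul_assoc]; exact C.smul_mem _ (hx a ha) },
      fun _ => Iff.rfl⟩
  have hle : A ≤ A' := fun a ha => (hA' a).2 (hC a ha)
  have hp : Pr C ⊤ ⊥ A' B := by
    refine ⟨fun _ _ => IntermediateField.mem_top, bot_le, ?_, ?_, fun a ha b hb => (hA' a).1 ha b hb⟩
    · obtain ⟨a, ha, h0⟩ := hA
      exact ⟨a, hle ha, h0⟩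
    · obtain ⟨b, hb, h0⟩ := hB
      exact ⟨b, hb, by simpa using h0⟩
  have fdA := hp.fdA
  have hm := Submodule.finrank_mono hle
  obtain ⟨J, -, hJ, hJs⟩ := core (C := C) (finrank K C) ⊤ ⊥ (by simp) bot_le (by omega)
    ⟨A', B, hp, by omega⟩
  have h1 := hJs A' B hp (by omega) (fun x _ h => (hA' x).2 h)
  refine hJ (le_bot_iff.1 fun j hj => hgen j fun a ha b hb => ?_)
  rw [← mul_assoc]
  exact (hA' _).1 (h1 j hj a (hle ha)) b hb

theorem tower_sub (K F L : Type*) [Field K] [Field F] [Field L] [Algebra K F] [Algebra F L]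
    [Algebra K L] [IsScalarTower K F L] (X : Submodule F L) :
    finrank K F * finrank F X = finrank K X :=
  finrank_mul_finrank K F X

end LinKneser

open LinKneser Module in
/-- Lower bound part of Theorem 1.1: for a separable extension `K ⊆ L` and nonzero
finite-dimensional subspaces `A, B` with `dim_K A = r`, `dim_K B = s`, there is a
finite-dimensional intermediate field `H` of degree `h = [H:K]` with
`dim_K ⟨AB⟩ ≥ (⌈r/h⌉ + ⌈s/h⌉ - 1)·h`. -/
theorem stmt_1 (K L : Type*) [Field K] [Field L] [Algebra K L]
    (hsep : ∀ x : L, IsAlgebraic K x → IsSeparable K x)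
    (A B : Submodule K L) (hA : A ≠ ⊥) (hB : B ≠ ⊥)
    (hAfin : FiniteDimensional K A) (hBfin : FiniteDimensional K B)
    (r s : ℕ) (hr : Module.finrank K A = r) (hs : Module.finrank K B = s) :
    ∃ H : IntermediateField K L, FiniteDimensional K H ∧
      Module.finrank K ↥(A * B) ≥
        (r ⌈/⌉ Module.finrank K ↥H + s ⌈/⌉ Module.finrank K ↥H - 1)
          * Module.finrank K ↥H := by
  have fdC : FiniteDimensional K ↥(A * B) := Module.Finite.iff_fg.2
    ((Module.Finite.iff_fg.1 hAfin).mul (Module.Finite.iff_fg.1 hBfin))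
  obtain ⟨a0, ha0, ha00⟩ := Submodule.exists_mem_ne_zero_of_ne_bot hA
  obtain ⟨b0, hb0, hb00⟩ := Submodule.exists_mem_ne_zero_of_ne_bot hB
  obtain ⟨H, hH⟩ := exists_stab (A * B)
  have fdH : FiniteDimensional K H :=
    fd_of_sm (mul_ne_zero ha00 hb00) (Subalgebra.toSubmodule H.toSubalgebra) (A * B)
      (fun x hx => by
        rw [mul_comm (a0 * b0)]; exact (hH x).1 hx _ (Submodule.mul_mem_mul ha0 hb0))
  refine ⟨H, fdH, ?_⟩
  obtain ⟨C', hC'⟩ : ∃ C' : Submodule H L, C'.restrictScalars K = A * B :=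
    ⟨{ carrier := {x | x ∈ A * B}
       add_mem' := fun hx hy => (A * B).add_mem hx hy
       zero_mem' := (A * B).zero_mem
       smul_mem' := fun k x hx => (hH k).1 k.2 x hx }, rfl⟩
  have memC : ∀ x, x ∈ C' ↔ x ∈ A * B := fun x => by
    rw [← hC']; rfl
  have fdC'K : Module.Finite K C' := by
    have : FiniteDimensional K (C'.restrictScalars K) := by rw [hC']; exact fdC
    exact this
  have fdC' : FiniteDimensional H C' := Module.Finite.of_restrictScalars_finite K H C'
  have hprod : ∀ a ∈ Submodule.span H (A : Set L), ∀ b ∈ Submodule.span H (B : Set L),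
      a * b ∈ C' := by
    intro a ha b hb
    induction ha using Submodule.span_induction with
    | zero => simp
    | add x y _ _ hx hy => rw [add_mul]; exact C'.add_mem hx hy
    | smul k x _ hx => rw [smul_mul_assoc]; exact C'.smul_mem k hx
    | mem a ha =>
      induction hb using Submodule.span_induction with
      | zero => simp
      | add x y _ _ hx hy => rw [mul_add]; exact C'.add_mem hx hy
      | smul k x _ hx => rw [mul_smul_comm]; exact C'.smul_mem k hx
      | mem b hb => exact (memC _).2 (Submodule.mul_mem_mul ha hb)
  have main := no_bad (C := C') (Submodule.span H (A : Set L)) (Submodule.span H (B : Set L))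
    ⟨a0, Submodule.subset_span ha0, ha00⟩ ⟨b0, Submodule.subset_span hb0, hb00⟩ hprod
    (by
      intro u hu
      have : u ∈ H := by
        rw [hH]
        intro z hz
        induction hz using Submodule.mul_induction_on' with
        | mem_mul_mem a ha b hb =>
          exact (memC _).1 (hu a (Submodule.subset_span ha) b (Submodule.subset_span hb))
        | add x _ y _ hx hy => rw [mul_add]; exact (A * B).add_mem hx hy
      exact IntermediateField.mem_bot.2 ⟨⟨u, this⟩, rfl⟩)
  have hpos : 0 < finrank K H := finrank_pos
  have dimC : finrank K H * finrank H C' = finrank K ↥(A * B) := by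
    rw [tower_sub K H L C', ← hC']; rfl
  have hspan : ∀ X : Submodule K L, FiniteDimensional K X →
      finrank K X ⌈/⌉ finrank K H ≤ finrank H (Submodule.span H (X : Set L)) := by
    intro X hX
    rw [ceilDiv_le_iff_le_smul hpos, smul_eq_mul]
    have fX : FiniteDimensional H (Submodule.span H (X : Set L)) := by
      obtain ⟨S, hS⟩ := Module.Finite.iff_fg.1 hX
      refine Module.Finite.iff_fg.2 ⟨S, ?_⟩
      rw [← hS, Submodule.span_span_of_tower]
    have fX' : FiniteDimensional K (Submodule.span H (X : Set L)) :=
      Module.Finite.trans H _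
    rw [tower_sub K H L]
    have fX'' : FiniteDimensional K ((Submodule.span H (X : Set L)).restrictScalars K) := fX'
    exact Submodule.finrank_mono (t := (Submodule.span H (X : Set L)).restrictScalars K)
      (fun x hx => Submodule.subset_span hx)
  have h1 := hspan A hAfin
  have h2 := hspan B hBfin
  rw [hr] at h1
  rw [hs] at h2
  rw [ge_iff_le, ← dimC, mul_comm]
  exact Nat.mul_le_mul_left _ (by omega)
end

section
/- Let K ⊆ L be a commutative field extension in which every element of L that is algebraic over K is separable over K, let r, s be positive integers with r, s ≤ dim_K L, and let H be a finite-dimensional intermediate field K ⊆ H ⊆ L with h = [H:K]. Then there exist K-subspaces A, B of L with dim_K A = r, dim_K B = s and dim_K⟨AB⟩ ≤ (⌈r/h⌉ + ⌈s/h⌉ − 1)·h. -/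
lemma aux_pow (F L : Type*) [Field F] [Field L] [Algebra F L]
    (hsep : ∀ x : L, IsAlgebraic F x → IsSeparable F x) (m : ℕ)
    (hm : (m : Cardinal) ≤ Module.rank F L) :
    ∃ a : L, LinearIndependent F (fun i : Fin m => a ^ (i : ℕ)) := by
  by_cases halg : Algebra.IsAlgebraic F L
  · obtain ⟨v, hv⟩ := Module.le_rank_iff.1 hm
    let E := IntermediateField.adjoin F (Set.range v)
    have hfin : FiniteDimensional F E := IntermediateField.finiteDimensional_adjoin
      fun x _ => (halg.isAlgebraic x).isIntegral
    have hs : Algebra.IsSeparable F L := ⟨fun x => hsep x (halg.isAlgebraic x)⟩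
    have hsE : Algebra.IsSeparable F E := inferInstance
    let pb := Field.powerBasisOfFiniteOfSeparable F E
    have hle : m ≤ pb.dim := by
      rw [← pb.finrank]
      have hw : LinearIndependent F
          (fun i => (⟨v i, IntermediateField.subset_adjoin F _ ⟨i, rfl⟩⟩ : E)) :=
        LinearIndependent.of_comp E.val.toLinearMap hv
      simpa using hw.fintype_card_le_finrank
    refine ⟨(pb.gen : L), ?_⟩
    have h1 := pb.basis.linearIndependent.map' E.val.toLinearMap
      (LinearMap.ker_eq_bot.2 E.val.injective)
    have h2 := h1.comp (Fin.castLE hle) (Fin.castLE_injective hle)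
    have h3 : (E.val.toLinearMap ∘ pb.basis) ∘ Fin.castLE hle = fun i : Fin m => (pb.gen : L) ^ (i : ℕ) := by
      ext i
      simp
    rw [h3] at h2
    exact h2
  · rw [Algebra.isAlgebraic_def] at halg
    push Not at halg
    obtain ⟨a, ha⟩ := halg
    refine ⟨a, ?_⟩
    have h1 := (Polynomial.basisMonomials F).linearIndependent.map'
      (Polynomial.aeval a : Polynomial F →ₐ[F] L).toLinearMap
      (LinearMap.ker_eq_bot.2 (transcendental_iff_injective.1 ha))
    have h2 := h1.comp (fun i : Fin m => (i : ℕ)) Fin.val_injective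
    have h3 : ((Polynomial.aeval a : Polynomial F →ₐ[F] L).toLinearMap ∘ Polynomial.basisMonomials F) ∘
        (fun i : Fin m => (i : ℕ)) = fun i : Fin m => a ^ (i : ℕ) := by
      ext i
      simp
    rw [h3] at h2
    exact h2

lemma aux_sub (K V : Type*) [Field K] [AddCommGroup V] [Module K V] (S : Submodule K V) (r : ℕ)
    (h : r ≤ Module.finrank K S) : ∃ A ≤ S, Module.finrank K A = r := by
  obtain ⟨f, hf⟩ := exists_linearIndependent_of_le_finrank h
  have h1 := hf.map' S.subtype (Submodule.ker_subtype S)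
  refine ⟨Submodule.span K (Set.range (S.subtype ∘ f)), ?_, ?_⟩
  · rw [Submodule.span_le]
    rintro _ ⟨i, rfl⟩
    exact (f i).2
  · simpa using finrank_span_eq_card h1

theorem stmt_2 (K L : Type*) [Field K] [Field L] [Algebra K L]
    (hsep : ∀ x : L, IsAlgebraic K x → IsSeparable K x)
    (r s : ℕ) (hr : 0 < r) (hs : 0 < s)
    (hrL : (r : Cardinal) ≤ Module.rank K L) (hsL : (s : Cardinal) ≤ Module.rank K L)
    (H : IntermediateField K L) (hHfin : FiniteDimensional K H) :
    ∃ A B : Submodule K L, Module.finrank K A = r ∧ Module.finrank K B = s ∧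
      Module.finrank K ↥(A * B) ≤
        (r ⌈/⌉ Module.finrank K ↥H + s ⌈/⌉ Module.finrank K ↥H - 1)
          * Module.finrank K ↥H := by
  set h := Module.finrank K H with hh
  have hpos : 0 < h := Module.finrank_pos
  have key : ∀ t : ℕ, (t : Cardinal) ≤ Module.rank K L →
      ((t ⌈/⌉ h : ℕ) : Cardinal) ≤ Module.rank H L := by
    intro t ht
    by_contra hlt
    rw [not_le] at hlt
    obtain ⟨n, hn⟩ := Cardinal.lt_aleph0.1 (hlt.trans (Cardinal.natCast_lt_aleph0))
    rw [hn] at hlt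
    rw [← rank_mul_rank K H L, hn, ← Module.finrank_eq_rank K H] at ht
    have ht' : t ≤ h * n := by exact_mod_cast ht
    have hlt' : n < t ⌈/⌉ h := by exact_mod_cast hlt
    exact absurd ((ceilDiv_le_iff_le_mul hpos).2 ht') (not_le.2 hlt')
  have hsepH : ∀ x : L, IsAlgebraic H x → IsSeparable H x := fun x hx =>
    (hsep x (hx.restrictScalars K)).tower_top H
  set p := r ⌈/⌉ h with hp
  set q := s ⌈/⌉ h with hq
  have hrp : r ≤ h * p := le_smul_ceilDiv hpos
  have hsq : s ≤ h * q := le_smul_ceilDiv hpos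
  have hp0 : 0 < p := by
    rcases Nat.eq_zero_or_pos p with h0 | h0
    · rw [h0] at hrp; omega
    · exact h0
  have hq0 : 0 < q := by
    rcases Nat.eq_zero_or_pos q with h0 | h0
    · rw [h0] at hsq; omega
    · exact h0
  have hm : ((max p q : ℕ) : Cardinal) ≤ Module.rank H L := by
    rcases max_choice p q with h0 | h0 <;> rw [h0]
    · exact key r hrL
    · exact key s hsL
  obtain ⟨a, ha⟩ := aux_pow H L hsepH _ hm
  let T : ℕ → Submodule H L := fun n => Submodule.span H (Set.range fun i : Fin n => a ^ (i : ℕ))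
  let S : ℕ → Submodule K L := fun n => (T n).restrictScalars K
  have hT : ∀ n, Module.finrank H (T n) ≤ n := fun n =>
    (finrank_range_le_card (R := H) (fun i : Fin n => a ^ (i : ℕ))).trans_eq (Fintype.card_fin n)
  have hTe : ∀ n ≤ max p q, Module.finrank H (T n) = n := fun n hn =>
    (finrank_span_eq_card (ha.comp (Fin.castLE hn) (Fin.castLE_injective hn))).trans
      (Fintype.card_fin n)
  have hS : ∀ n, Module.finrank K (S n) = h * Module.finrank H (T n) := fun n =>
    (Module.finrank_mul_finrank K H (T n)).symm
  have hSf : ∀ n, Module.Finite K (S n) := fun n => by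
    have : Module.Finite H (T n) := Module.Finite.span_of_finite H (Set.finite_range _)
    exact Module.Finite.trans (R := K) H (T n)
  obtain ⟨A, hA, hAr⟩ := aux_sub K L (S p) r (by rw [hS, hTe p (le_max_left _ _)]; exact hrp)
  obtain ⟨B, hB, hBs⟩ := aux_sub K L (S q) s (by rw [hS, hTe q (le_max_right _ _)]; exact hsq)
  refine ⟨A, B, hAr, hBs, ?_⟩
  have hTT : T p * T q ≤ T (p + q - 1) := by
    rw [Submodule.span_mul_span, Submodule.span_le]
    rintro _ ⟨_, ⟨i, rfl⟩, _, ⟨j, rfl⟩, rfl⟩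
    refine Submodule.subset_span ⟨⟨i + j, by omega⟩, ?_⟩
    simp [pow_add]
  have hAB : A * B ≤ S (p + q - 1) := by
    rw [Submodule.mul_le]
    intro x hx y hy
    exact hTT (Submodule.mul_mem_mul (hA hx) (hB hy))
  have := hSf (p + q - 1)
  calc Module.finrank K ↥(A * B) ≤ Module.finrank K (S (p + q - 1)) :=
        Submodule.finrank_mono hAB
    _ = h * Module.finrank H (T (p + q - 1)) := hS _
    _ ≤ h * (p + q - 1) := Nat.mul_le_mul_left _ (hT _)
    _ = _ := mul_comm _ _
end

section
/- (Hou–Leung–Xiang) Let K ⊆ L be a commutative field extension in which every element of L that is algebraic over K is separable over K, and let A, B be nonzero finite-dimensional K-subspaces of L. Let H = {x ∈ L : x·⟨AB⟩ ⊆ ⟨AB⟩} be the stabilizer of ⟨AB⟩. Then dim_K⟨AB⟩ ≥ dim_K A + dim_K B − dim_K H. -/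
/-- The stabilizer `{x ∈ L : x·V ⊆ V}` of a `K`-subspace `V` of `L`, as a `K`-subspace. -/
def mulStabilizer (K L : Type*) [Field K] [Field L] [Algebra K L]
    (V : Submodule K L) : Submodule K L where
  carrier := {x : L | ∀ v ∈ V, x * v ∈ V}
  add_mem' := by
    intro x y hx hy v hv
    rw [add_mul]
    exact V.add_mem (hx v hv) (hy v hv)
  zero_mem' := by
    intro v hv
    rw [zero_mul]
    exact V.zero_mem
  smul_mem' := by
    intro c x hx v hv
    rw [Algebra.smul_def, mul_assoc, ← Algebra.smul_def]
    exact V.smul_mem c (hx v hv)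


namespace HLX
open Module

def stab (K : Type*) {M : Type*} [Field K] [CommRing M] [Algebra K M] (V : Submodule K M) :
    Subalgebra K M where
  carrier := {x : M | ∀ v ∈ V, x * v ∈ V}
  mul_mem' := by
    intro x y hx hy v hv
    rw [mul_assoc]
    exact hx _ (hy v hv)
  add_mem' := by
    intro x y hx hy v hv
    rw [add_mul]
    exact V.add_mem (hx v hv) (hy v hv)
  algebraMap_mem' := by
    intro r v hv
    rw [← Algebra.smul_def]
    exact V.smul_mem r hv

theorem mem_stab {K M : Type*} [Field K] [CommRing M] [Algebra K M] {V : Submodule K M} {x : M} :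
    x ∈ stab K V ↔ ∀ v ∈ V, x * v ∈ V := Iff.rfl

section core
variable {K M : Type*} [Field K] [CommRing M] [IsDomain M] [Algebra K M]

theorem mulLeft_inj {e : M} (he : e ≠ 0) : Function.Injective (LinearMap.mulLeft K e) := by
  intro x y h
  exact mul_left_cancel₀ he (by simpa using h)

theorem finrank_mul_map {e : M} (he : e ≠ 0) (A : Submodule K M) :
    finrank K (A.map (LinearMap.mulLeft K e)) = finrank K A :=
  ((Submodule.equivMapOfInjective _ (mulLeft_inj he) A).finrank_eq).symm

theorem sub_fin (V : Submodule K M) [FiniteDimensional K V] (hV : V ≠ ⊥) (H : Subalgebra K M)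
    (h : ∀ x ∈ H, ∀ v ∈ V, x * v ∈ V) :
    FiniteDimensional K H ∧ finrank K H ≤ finrank K V := by
  obtain ⟨v, hv, hv0⟩ := V.ne_bot_iff.1 hV
  let f : H →ₗ[K] V := LinearMap.codRestrict V ((LinearMap.mulLeft K v).comp H.val.toLinearMap)
    (fun x => by simpa [mul_comm] using h x x.2 v hv)
  have hf : Function.Injective f := by
    intro x y hxy
    have : v * (x : M) = v * y := by simpa [f] using congrArg Subtype.val hxy
    exact Subtype.ext (mul_left_cancel₀ hv0 this)
  exact ⟨FiniteDimensional.of_injective f hf, LinearMap.finrank_le_finrank_of_injective hf⟩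

theorem core0 (n : ℕ) : ∀ (A B : Submodule K M) [FiniteDimensional K A] [FiniteDimensional K B],
    finrank K A = n → (1 : M) ∈ A → B ≠ ⊥ →
    ∃ (H : Subalgebra K M) (V : Submodule K M), B ≤ V ∧ V ≤ A * B ∧
      (∀ x ∈ H, ∀ v ∈ V, x * v ∈ V) ∧
      finrank K A + finrank K B ≤ finrank K V + finrank K H := by
  induction n using Nat.strong_induction_on with
  | _ n ih =>
  intro A B _ _ hn h1 hB
  by_cases hc : ∀ e ∈ B, ∀ a ∈ A, a * e ∈ B
  · refine ⟨stab K B, B, le_rfl, ?_, fun x hx => hx, ?_⟩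
    · intro b hb
      simpa using Submodule.mul_mem_mul h1 hb
    · have hAle : A ≤ Subalgebra.toSubmodule (stab K B) := fun a ha e he => hc e he a ha
      have := (sub_fin B hB (stab K B) (fun x hx => hx)).1
      have : FiniteDimensional K (Subalgebra.toSubmodule (stab K B)) := this
      have h2 : finrank K A ≤ finrank K (Subalgebra.toSubmodule (stab K B)) :=
        Submodule.finrank_mono hAle
      have h3 : finrank K (Subalgebra.toSubmodule (stab K B)) = finrank K (stab K B) := rfl
      omega
  · push Not at hc
    obtain ⟨e, he, a, ha, hae⟩ := hc
    have he0 : e ≠ 0 := by rintro rfl; simp at hae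
    let m := LinearMap.mulLeft K e
    let A' := A ⊓ B.comap m
    let B' := B ⊔ A.map m
    have hA'le : A' ≤ A := inf_le_left
    have hA'fin : FiniteDimensional K A' := Submodule.finiteDimensional_of_le hA'le
    have hlt : A' < A := by
      refine lt_of_le_of_ne hA'le fun h => hae ?_
      have : a ∈ A' := h ▸ ha
      have := this.2
      simpa [m, mul_comm] using this
    have hmap : A'.map m = B ⊓ A.map m := by
      ext x
      simp only [A', Submodule.mem_map, Submodule.mem_inf, Submodule.mem_comap]
      constructor
      · rintro ⟨y, ⟨hy1, hy2⟩, rfl⟩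
        exact ⟨hy2, y, hy1, rfl⟩
      · rintro ⟨hx, y, hy, rfl⟩
        exact ⟨y, ⟨hy, hx⟩, rfl⟩
    have hdim : finrank K A' + finrank K B' = finrank K A + finrank K B := by
      have h1 := Submodule.finrank_sup_add_finrank_inf_eq B (A.map m)
      rw [← hmap, finrank_mul_map he0, finrank_mul_map he0] at h1
      change finrank K B' + _ = _ at h1
      omega
    have hB' : B' ≠ ⊥ := fun h => hB (le_bot_iff.1 (h ▸ le_sup_left))
    obtain ⟨H, V, hBV, hVle, hst, hd⟩ := ih (finrank K A') (hn ▸ Submodule.finrank_lt_finrank_of_lt hlt)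
      A' B' rfl ⟨h1, by simpa [m] using he⟩ hB'
    refine ⟨H, V, le_sup_left.trans hBV, hVle.trans ?_, hst, by omega⟩
    rw [Submodule.mul_le]
    intro x hx y hy
    obtain ⟨b, hb, z, hz, rfl⟩ := Submodule.mem_sup.1 hy
    obtain ⟨w, hw, rfl⟩ := hz
    rw [mul_add]
    refine add_mem (Submodule.mul_mem_mul hx.1 hb) ?_
    have : x * (m w) = w * (m x) := by simp [m]; ring
    rw [this]
    exact Submodule.mul_mem_mul hw hx.2

/-- the relation between `a` and a subalgebra -/
def P (A B : Submodule K M) (a : M) (H : Subalgebra K M) : Prop :=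
  ∃ V : Submodule K M, (∀ b ∈ B, a * b ∈ V) ∧ V ≤ A * B ∧
      (∀ x ∈ H, ∀ v ∈ V, x * v ∈ V) ∧
      finrank K A + finrank K B ≤ finrank K V + finrank K H

theorem core1 (A B : Submodule K M) [FiniteDimensional K A] [FiniteDimensional K B]
    (hM : IsField M) (hB : B ≠ ⊥) (a : M) (ha : a ∈ A) (ha0 : a ≠ 0) :
    ∃ H : Subalgebra K M, P A B a H := by
  obtain ⟨a', ha'⟩ := hM.mul_inv_cancel ha0
  have ha'0 : a' ≠ 0 := by rintro rfl; simp at ha'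
  obtain ⟨H, V, h1, h2, h3, h4⟩ := core0 _ (A.map (LinearMap.mulLeft K a')) B rfl
    ⟨a, ha, by simpa [mul_comm] using ha'⟩ hB
  refine ⟨H, V.map (LinearMap.mulLeft K a), ?_, ?_, ?_, ?_⟩
  · intro b hb
    exact ⟨b, h1 hb, rfl⟩
  · rw [Submodule.map_le_iff_le_comap]
    refine h2.trans ?_
    rw [Submodule.mul_le]
    rintro _ ⟨x, hx, rfl⟩ y hy
    have : a * (a' * x * y) = x * y := by
      rw [← mul_assoc, ← mul_assoc, ha', one_mul]
    simp only [Submodule.mem_comap, LinearMap.mulLeft_apply, this]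
    exact Submodule.mul_mem_mul hx hy
  · rintro x hx _ ⟨v, hv, rfl⟩
    exact ⟨x * v, h3 x hx v hv, by simp; ring⟩
  · rw [finrank_mul_map ha0]
    rw [finrank_mul_map ha'0] at h4
    exact h4

theorem mul_ne_bot' {A B : Submodule K M} (hA : A ≠ ⊥) (hB : B ≠ ⊥) : A * B ≠ ⊥ := by
  obtain ⟨a, ha, ha0⟩ := A.ne_bot_iff.1 hA
  obtain ⟨b, hb, hb0⟩ := B.ne_bot_iff.1 hB
  exact (Submodule.ne_bot_iff _).2 ⟨a * b, Submodule.mul_mem_mul ha hb, mul_ne_zero ha0 hb0⟩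

theorem mul_fin (A B : Submodule K M) [FiniteDimensional K A] [FiniteDimensional K B] :
    FiniteDimensional K ↥(A * B) := by
  have hA : A.FG := Module.Finite.iff_fg.1 inferInstance
  have hB : B.FG := Module.Finite.iff_fg.1 inferInstance
  exact Module.Finite.iff_fg.2 (hA.mul hB)

theorem P_fin {A B : Submodule K M} [FiniteDimensional K A] [FiniteDimensional K B]
    (hB : B ≠ ⊥) {a : M} (ha0 : a ≠ 0) {H : Subalgebra K M} (h : P A B a H) :
    FiniteDimensional K H ∧ finrank K H ≤ finrank K ↥(A * B) := by
  obtain ⟨V, h1, h2, h3, h4⟩ := h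
  have := mul_fin A B
  have : FiniteDimensional K V := Submodule.finiteDimensional_of_le h2
  obtain ⟨b, hb, hb0⟩ := B.ne_bot_iff.1 hB
  have hV : V ≠ ⊥ := V.ne_bot_iff.2 ⟨_, h1 b hb, mul_ne_zero ha0 hb0⟩
  have := sub_fin V hV H h3
  exact ⟨this.1, this.2.trans (Submodule.finrank_mono h2)⟩

theorem core2 (A B : Submodule K M) [FiniteDimensional K A] [FiniteDimensional K B]
    (hA : A ≠ ⊥) (hB : B ≠ ⊥) (H : Subalgebra K M)
    (hsp : A ≤ Submodule.span K {a | a ≠ 0 ∧ P A B a H}) :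
    finrank K A + finrank K B ≤ finrank K ↥(A * B) + finrank K (stab K (A * B)) := by
  have := mul_fin A B
  have hfin := (sub_fin (A * B) (mul_ne_bot' hA hB) (stab K (A * B)) (fun x hx => hx)).1
  have hH : H ≤ stab K (A * B) := by
    intro x hx
    have : A * B ≤ (A * B).comap (LinearMap.mulLeft K x) := by
      rw [Submodule.mul_le]
      intro a ha b hb
      have h2 : A ≤ ((A * B).comap (LinearMap.mulLeft K x)).comap (LinearMap.mulRight K b) := by
        refine hsp.trans (Submodule.span_le.2 ?_)
        rintro a ⟨-, V, h1, h2, h3, -⟩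
        exact h2 (h3 x hx _ (h1 b hb))
      exact h2 ha
    exact fun v hv => this hv
  obtain ⟨a, ha0, V, h1, h2, h3, h4⟩ : ∃ a, a ≠ 0 ∧ P A B a H := by
    by_contra! hcon
    have : {a | a ≠ 0 ∧ P A B a H} = ∅ := by
      ext a; simpa using hcon a
    rw [this, Submodule.span_empty] at hsp
    exact hA (le_bot_iff.1 hsp)
  have h5 := Submodule.finrank_mono h2
  have h6 : finrank K H ≤ finrank K (stab K (A * B)) :=
    LinearMap.finrank_le_finrank_of_injective
      (f := (Subalgebra.inclusion hH).toLinearMap) (Subalgebra.inclusion_injective hH)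
  omega

/-- covering form -/
theorem core3 (A B : Submodule K M) [FiniteDimensional K A] [FiniteDimensional K B]
    (hM : IsField M) (hA : A ≠ ⊥) (hB : B ≠ ⊥) {ι : Type*} [Nonempty ι] (t : Subalgebra K M → ι)
    (ht : ∀ H H' : Subalgebra K M, FiniteDimensional K H → FiniteDimensional K H' →
      finrank K H ≤ finrank K ↥(A * B) → finrank K H' ≤ finrank K ↥(A * B) → t H = t H' → H = H')
    (hcov : ∀ p : ι → Submodule K A, (⋃ i, (p i : Set A)) = Set.univ → ∃ i, p i = ⊤) :
    finrank K A + finrank K B ≤ finrank K ↥(A * B) + finrank K (stab K (A * B)) := by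
  obtain ⟨i, hi⟩ := hcov
    (fun i => Submodule.span K {a : A | a ≠ 0 ∧ ∃ H, P A B a H ∧ t H = i}) (by
      refine Set.eq_univ_of_forall fun a => Set.mem_iUnion.2 ?_
      by_cases ha : a = 0
      · subst ha
        exact ⟨Classical.arbitrary ι, zero_mem _⟩
      · obtain ⟨H, hH⟩ := core1 A B hM hB a a.2 (by simpa using ha)
        exact ⟨t H, Submodule.subset_span ⟨ha, H, hH, rfl⟩⟩)
  obtain ⟨a, ha0, H, hH, hHi⟩ : ∃ a : A, a ≠ 0 ∧ ∃ H, P A B a H ∧ t H = i := by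
    by_contra! hcon
    have : {a : A | a ≠ 0 ∧ ∃ H, P A B a H ∧ t H = i} = ∅ := by
      ext a
      simp only [Set.mem_ofPred_eq, Set.mem_empty_iff_false, iff_false, not_and, not_exists]
      exact hcon a
    simp only [this, Submodule.span_empty] at hi
    obtain ⟨a, ha, ha0⟩ := A.ne_bot_iff.1 hA
    have : (⟨a, ha⟩ : A) ∈ (⊥ : Submodule K A) := hi ▸ Submodule.mem_top
    exact ha0 (by simpa using this)
  refine core2 A B hA hB H ?_
  intro x hx
  have hx' : (⟨x, hx⟩ : A) ∈ Submodule.span K {a : A | a ≠ 0 ∧ ∃ H, P A B a H ∧ t H = i} := by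
    rw [hi]; trivial
  have hle : Submodule.span K {a : A | a ≠ 0 ∧ ∃ H, P A B a H ∧ t H = i} ≤
      (Submodule.span K {a | a ≠ 0 ∧ P A B a H}).comap A.subtype := by
    refine Submodule.span_le.2 ?_
    rintro a' ⟨ha', H', hH', hi'⟩
    have e1 := P_fin hB (by simpa using ha0) hH
    have e2 := P_fin hB (by simpa using ha') hH'
    have : H = H' := ht H H' e1.1 e2.1 e1.2 e2.2 (hHi.trans hi'.symm)
    subst this
    exact Submodule.subset_span ⟨by simpa using ha', hH'⟩
  exact hle hx'

end core

section cover
theorem cover_finite {F E ι : Type*} [Field F] [Finite F] [AddCommGroup E] [Module F E]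
    [FiniteDimensional F E] [Fintype ι] (hc : Fintype.card ι < Nat.card F) (p : ι → Submodule F E)
    (hp : (⋃ i, (p i : Set E)) = Set.univ) : ∃ i, p i = ⊤ := by
  classical
  by_contra! hcon
  have : Finite E := Module.finite_of_finite F
  have h1 : Nat.card E ≤ ∑ i, Nat.card (p i) := by
    rw [← Nat.card_sigma]
    refine Nat.card_le_card_of_surjective (fun x : (Σ i, p i) => (x.2 : E)) fun x => ?_
    have : x ∈ ⋃ i, (p i : Set E) := hp ▸ Set.mem_univ x
    obtain ⟨i, hi⟩ := Set.mem_iUnion.1 this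
    exact ⟨⟨i, x, hi⟩, rfl⟩
  have h2 : ∀ i, Nat.card F * Nat.card (p i) ≤ Nat.card E := by
    intro i
    rw [Module.natCard_eq_pow_finrank (K := F) (V := E),
      Module.natCard_eq_pow_finrank (K := F) (V := p i), ← pow_succ']
    exact Nat.pow_le_pow_right Nat.card_pos
      (Submodule.finrank_lt (lt_top_iff_ne_top.2 (hcon i)).ne)
  have h3 : Nat.card F * Nat.card E ≤ Fintype.card ι * Nat.card E := by
    calc _ ≤ Nat.card F * ∑ i, Nat.card (p i) := Nat.mul_le_mul_left _ h1
      _ = ∑ i, Nat.card F * Nat.card (p i) := Finset.mul_sum _ _ _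
      _ ≤ ∑ i : ι, Nat.card E := Finset.sum_le_sum fun i _ => h2 i
      _ = _ := by simp
  have := Nat.le_of_mul_le_mul_right h3 Nat.card_pos
  omega
end cover

theorem core_finite {K M : Type*} [Field K] [CommRing M] [IsDomain M] [Algebra K M] [Finite K]
    (A B : Submodule K M) [FiniteDimensional K A] [FiniteDimensional K B]
    (hM : IsField M) (hA : A ≠ ⊥) (hB : B ≠ ⊥) (hc : finrank K ↥(A * B) + 1 < Nat.card K) :
    finrank K A + finrank K B ≤ finrank K ↥(A * B) + finrank K (stab K (A * B)) := by
  refine core3 A B hM hA hB (ι := Fin (finrank K ↥(A * B) + 1))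
    (fun H => Fin.ofNat _ (finrank K H)) ?_ (fun p hp => cover_finite (by simpa using hc) p hp)
  intro H H' hf hf' hl hl' he
  have he : finrank K H = finrank K H' := by
    have := congrArg Fin.val he
    simpa [Fin.ofNat, Nat.mod_eq_of_lt (Nat.lt_succ_of_le hl),
      Nat.mod_eq_of_lt (Nat.lt_succ_of_le hl')] using this
  set Q := Nat.card K ^ finrank K H with hQ
  have hQ1 : 1 < Q := Nat.one_lt_pow Module.finrank_pos.ne' (by omega)
  have key : ∀ J : Subalgebra K M, FiniteDimensional K J → Nat.card J = Q →
      (J : Set M) = {x | x ^ Q = x} := by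
    intro J hJ hcard
    have : Finite J := Module.finite_of_finite K
    have hsub : (J : Set M) ⊆ {x | x ^ Q = x} := by
      intro x hx
      classical
      have := Fintype.ofFinite J
      let _ : Field J := Fintype.fieldOfDomain J
      have := FiniteField.pow_card (⟨x, hx⟩ : J)
      rw [← Nat.card_eq_fintype_card, hcard] at this
      simpa using congrArg Subtype.val this
    classical
    have hd : (Polynomial.X ^ Q - Polynomial.X : Polynomial M).natDegree = Q := by
      have h1 : (Polynomial.X : Polynomial M).degree < (Polynomial.X ^ Q : Polynomial M).degree := by
        rw [Polynomial.degree_X_pow, Polynomial.degree_X]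
        exact mod_cast hQ1
      rw [Polynomial.natDegree_eq_of_degree_eq (Polynomial.degree_sub_eq_left_of_degree_lt h1),
        Polynomial.natDegree_X_pow]
    have hne : (Polynomial.X ^ Q - Polynomial.X : Polynomial M) ≠ 0 := by
      intro h0
      rw [h0] at hd
      simp at hd
      omega
    have hroot : {x : M | x ^ Q = x} =
        ((Polynomial.X ^ Q - Polynomial.X : Polynomial M).roots.toFinset : Set M) := by
      ext x
      simp [Polynomial.mem_roots hne, sub_eq_zero]
    refine Set.eq_of_subset_of_ncard_le hsub ?_ ?_
    · rw [hroot, Set.ncard_coe_finset]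
      refine (Multiset.toFinset_card_le _).trans ((Polynomial.card_roots' _).trans ?_)
      rw [hd, ← hcard]
      rfl
    · rw [hroot]
      exact Finset.finite_toSet _
  have c1 := key H hf (Module.natCard_eq_pow_finrank (K := K) (V := H))
  have c2 := key H' hf' (by rw [Module.natCard_eq_pow_finrank (K := K) (V := H'), hQ, he])
  exact SetLike.coe_injective (c1.trans c2.symm)

open scoped IntermediateField.algebraAdjoinAdjoin in
theorem const_fin (K L : Type*) [Field K] [Field L] [Algebra K L] [Algebra.EssFiniteType K L] :
    FiniteDimensional K (algebraicClosure K L) := by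
  obtain ⟨s, hs⟩ := exists_isTranscendenceBasis K L
  have alg := hs.isAlgebraic_field
  rw [Subtype.range_coe] at alg
  have ess : Algebra.EssFiniteType (IntermediateField.adjoin K s) L :=
    Algebra.EssFiniteType.of_comp K _ L
  have fin : Module.Finite (IntermediateField.adjoin K s) L :=
    Algebra.finite_of_essFiniteType_of_isAlgebraic
  have ind : AlgebraicIndependent (algebraicClosure K L) (Subtype.val : s → L) :=
    hs.1.extendScalars (algebraicClosure K L)
  let b := Basis.ofVectorSpace K (algebraicClosure K L)
  have hli : LinearIndependent (Algebra.adjoin K s) (fun i => (b i : L)) := by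
    rw [linearIndependent_iff']
    intro t g hg
    have hp : ∀ i, ∃ p : MvPolynomial s K, MvPolynomial.aeval (Subtype.val : s → L) p = g i := by
      intro i
      have h1 : Algebra.adjoin K s = (MvPolynomial.aeval (Subtype.val : s → L)).range := by
        rw [← Algebra.adjoin_range_eq_range_aeval, Subtype.range_coe]
      exact h1.le (g i).2
    choose p hp using hp
    let q : MvPolynomial s (algebraicClosure K L) :=
      ∑ i ∈ t, MvPolynomial.C (b i) * MvPolynomial.map (algebraMap K _) (p i)
    have hq0 : MvPolynomial.aeval (Subtype.val : s → L) q = 0 := by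
      rw [← hg]
      simp only [q, map_sum, map_mul, MvPolynomial.aeval_map_algebraMap, hp, MvPolynomial.aeval_C]
      refine Finset.sum_congr rfl fun i _ => ?_
      rw [mul_comm, Subalgebra.smul_def]
      rfl
    have hq : q = 0 := (injective_iff_map_eq_zero _).1 ind q hq0
    intro i hi
    have hpi : p i = 0 := by
      ext m
      have h1 : ∑ i ∈ t, (MvPolynomial.coeff m (p i)) • b i = 0 := by
        have := congrArg (MvPolynomial.coeff m) hq
        simp only [q, MvPolynomial.coeff_sum, MvPolynomial.coeff_C_mul, MvPolynomial.coeff_map,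
          MvPolynomial.coeff_zero] at this
        rw [← this]
        refine Finset.sum_congr rfl fun i _ => ?_
        rw [Algebra.smul_def, mul_comm]
      simpa using linearIndependent_iff'.1 b.linearIndependent t _ h1 i hi
    apply Subtype.ext
    rw [← hp, hpi]
    simp
  have hli2 := (LinearIndependent.iff_fractionRing (Algebra.adjoin K s)
    (IntermediateField.adjoin K s)).1 hli
  have := hli2.finite_of_isNoetherian
  exact Module.Finite.of_basis b

theorem finite_subalg (K L : Type*) [Field K] [Field L] [Algebra K L]
    (hsep : ∀ x : L, IsAlgebraic K x → IsSeparable K x)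
    [FiniteDimensional K (algebraicClosure K L)] : Finite (Subalgebra K (algebraicClosure K L)) := by
  have : Algebra.IsSeparable K (algebraicClosure K L) := by
    refine ⟨fun x => ?_⟩
    have h := hsep x.1 (mem_algebraicClosure_iff.1 x.2)
    have e : minpoly K x = minpoly K (x : L) :=
      (minpoly.algebraMap_eq (algebraMap (algebraicClosure K L) L).injective x).symm
    unfold IsSeparable at *
    rw [e]; exact h
  have := Field.finite_intermediateField_of_exists_primitive_element K (algebraicClosure K L)
    (Field.exists_primitive_element _ _)
  exact Finite.of_equiv _ (subalgebraEquivIntermediateField (K := K)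
    (L := algebraicClosure K L)).symm.toEquiv

theorem comap_inj (K L : Type*) [Field K] [Field L] [Algebra K L] (H H' : Subalgebra K L)
    (h1 : FiniteDimensional K H) (h2 : FiniteDimensional K H')
    (h : H.comap (algebraicClosure K L).val = H'.comap (algebraicClosure K L).val) : H = H' := by
  have key : ∀ J : Subalgebra K L, FiniteDimensional K J → ∀ x ∈ J, x ∈ algebraicClosure K L := by
    intro J hJ x hx
    rw [mem_algebraicClosure_iff]
    have : IsAlgebraic K (⟨x, hx⟩ : J) := Algebra.IsAlgebraic.isAlgebraic _
    exact this.algHom J.val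
  ext x
  constructor
  · intro hx
    have : (⟨x, key H h1 x hx⟩ : algebraicClosure K L) ∈ H.comap (algebraicClosure K L).val := hx
    rw [h] at this
    exact this
  · intro hx
    have : (⟨x, key H' h2 x hx⟩ : algebraicClosure K L) ∈ H'.comap (algebraicClosure K L).val := hx
    rw [← h] at this
    exact this

theorem deg_aux (K K0 : Type*) {Ω : Type*} [Field K] [Field K0] [Field Ω] [Algebra K K0]
    [Algebra K0 Ω] [Algebra K Ω] [IsScalarTower K K0 Ω] [FiniteDimensional K K0] {ℓ : ℕ}
    (hprime : ℓ.Prime) {α : Ω} (hα0 : IsIntegral K0 α) (hdeg : (minpoly K α).natDegree = ℓ)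
    (hd : finrank K K0 < ℓ) : ℓ ≤ (minpoly K0 α).natDegree := by
  have : FiniteDimensional K0 (IntermediateField.adjoin K0 {α}) :=
    IntermediateField.adjoin.finiteDimensional hα0
  have hfd : FiniteDimensional K (IntermediateField.adjoin K0 {α}) :=
    FiniteDimensional.trans K K0 _
  have h1 := finrank_mul_finrank K K0 (IntermediateField.adjoin K0 {α})
  rw [IntermediateField.adjoin.finrank hα0] at h1
  let γ : IntermediateField.adjoin K0 {α} := IntermediateField.AdjoinSimple.gen K0 α
  have h2 : (minpoly K γ).natDegree ∣ finrank K (IntermediateField.adjoin K0 {α}) :=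
    minpoly.degree_dvd (Algebra.IsIntegral.isIntegral γ)
  have : IsScalarTower K (IntermediateField.adjoin K0 {α}) Ω := by
    refine IsScalarTower.of_algebraMap_eq fun x => ?_
    rw [IsScalarTower.algebraMap_apply K K0 Ω,
      IsScalarTower.algebraMap_apply K K0 (IntermediateField.adjoin K0 {α}),
      ← IsScalarTower.algebraMap_apply K0 (IntermediateField.adjoin K0 {α}) Ω]
  have h3 : minpoly K γ = minpoly K α :=
    (minpoly.algebraMap_eq
      (algebraMap (IntermediateField.adjoin K0 {α}) Ω).injective γ).symm
  rw [h3, hdeg, ← h1] at h2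
  rcases hprime.dvd_mul.1 h2 with h | h
  · have := Nat.le_of_dvd finrank_pos h
    omega
  · exact Nat.le_of_dvd (minpoly.natDegree_pos hα0) h

open TensorProduct in
theorem exists_ext (K L : Type*) [Field K] [Finite K] [Field L] [Algebra K L]
    [FiniteDimensional K (algebraicClosure K L)] (N : ℕ) :
    ∃ K' : IntermediateField K (AlgebraicClosure L), FiniteDimensional K K' ∧ N < Nat.card K' ∧
      IsField (K' ⊗[K] L) := by
  let K0 := algebraicClosure K L
  obtain ⟨ℓ, hℓ, hprime⟩ := Nat.exists_infinite_primes (N + finrank K K0 + 1)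
  obtain ⟨p, hpchar⟩ := CharP.exists K
  have : Fact p.Prime := ⟨CharP.char_is_prime K p⟩
  have : NeZero ℓ := ⟨hprime.ne_zero⟩
  let E := FiniteField.Extension K p ℓ
  obtain ⟨β, hβ⟩ := Field.exists_primitive_element K E
  let φ : E →ₐ[K] AlgebraicClosure L := IsAlgClosed.lift
  let α := φ β
  have hαi : IsIntegral K α := (Algebra.IsIntegral.isIntegral β).map φ
  have hdeg : (minpoly K α).natDegree = ℓ := by
    rw [minpoly.algHom_eq φ φ.injective, (Field.primitive_element_iff_minpoly_natDegree_eq K β).1 hβ]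
    exact FiniteField.finrank_extension K p ℓ
  have hαL : IsIntegral L α := hαi.tower_top
  have hα0 : IsIntegral K0 α := hαi.tower_top
  -- degree over K0
  have hdeg0 : ℓ ≤ (minpoly K0 α).natDegree := by
    exact deg_aux K K0 hprime hα0 hdeg (by omega)
  have hdvd : minpoly L α ∣ (minpoly K α).map (algebraMap K L) :=
    minpoly.dvd_map_of_isScalarTower K L α
  have hdegL : (minpoly L α).natDegree = ℓ := by
    apply le_antisymm
    · have := Polynomial.natDegree_le_of_dvd hdvd
        ((minpoly.monic hαi).map _).ne_zero
      rwa [Polynomial.natDegree_map, hdeg] at this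
    · have hl : minpoly L α ∈ Polynomial.lifts (algebraMap K0 L) := by
        rw [Polynomial.lifts_iff_coeff_lifts]
        intro n
        have := Polynomial.isIntegral_coeff_of_dvd _ _ (minpoly.monic hαi) (minpoly.monic hαL) hdvd n
        exact ⟨⟨_, mem_algebraicClosure_iff.2 this.isAlgebraic⟩, rfl⟩
      obtain ⟨h, hh, hhd, hhm⟩ := Polynomial.lifts_and_natDegree_eq_and_monic hl (minpoly.monic hαL)
      rw [← hhd]
      refine hdeg0.trans (Polynomial.natDegree_le_natDegree (minpoly.min K0 α hhm ?_))
      have h4 : Polynomial.aeval α (h.map (algebraMap K0 L)) = 0 := by rw [hh, minpoly.aeval]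
      rwa [Polynomial.aeval_map_algebraMap] at h4
  refine ⟨IntermediateField.adjoin K {α}, ?_, ?_, ?_⟩
  · exact IntermediateField.adjoin.finiteDimensional hαi
  · have := IntermediateField.adjoin.finiteDimensional hαi
    rw [Module.natCard_eq_pow_finrank (K := K), IntermediateField.adjoin.finrank hαi, hdeg]
    have := Nat.lt_pow_self (Finite.one_lt_card (α := K)) (n := ℓ)
    omega
  · refine IntermediateField.LinearDisjoint.isField_of_isAlgebraic ?_ (Or.inl ?_)
    · refine IntermediateField.LinearDisjoint.of_basis_left
        (IntermediateField.adjoin.powerBasis hαi).basis ?_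
      have hli := linearIndependent_pow (K := L) α
      have hd2 : (IntermediateField.adjoin.powerBasis hαi).dim = (minpoly L α).natDegree := by
        rw [hdegL, ← hdeg]; rfl
      convert hli.comp (Fin.cast hd2) (Fin.cast_injective _) using 1
      ext i
      simp
    · have := IntermediateField.adjoin.finiteDimensional hαi
      infer_instance


section bc
open TensorProduct
variable {K L : Type*} (K' : Type*) [Field K] [CommRing L] [Algebra K L] [Field K'] [Algebra K K']

theorem finrank_bc (A : Submodule K L) : finrank K' (A.baseChange K') = finrank K A := by
  have hinj : Function.Injective (A.subtype.baseChange K') := by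
    rw [LinearMap.baseChange_eq_ltensor]
    exact Module.Flat.lTensor_preserves_injective_linearMap _ A.subtype_injective
  rw [← Module.finrank_baseChange (R := K') (S := K) (M' := A)]
  exact LinearMap.finrank_range_of_inj hinj

theorem fin_bc (A : Submodule K L) [FiniteDimensional K A] :
    FiniteDimensional K' (A.baseChange K') :=
  Module.Finite.of_surjective _ (A.toBaseChange_surjective K')

theorem mul_bc (A B : Submodule K L) :
    A.baseChange K' * B.baseChange K' = (A * B).baseChange K' := by
  apply le_antisymm
  · rw [Submodule.baseChange_eq_span, Submodule.baseChange_eq_span, Submodule.span_mul_span,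
      Submodule.span_le]
    rintro _ ⟨_, ⟨a, ha, rfl⟩, _, ⟨b, hb, rfl⟩, rfl⟩
    simp only [TensorProduct.mk_apply, Algebra.TensorProduct.tmul_mul_tmul, mul_one]
    exact Submodule.tmul_mem_baseChange_of_mem _ (Submodule.mul_mem_mul ha hb)
  · rw [Submodule.baseChange_eq_span, Submodule.span_le]
    rintro _ ⟨x, hx, rfl⟩
    have : A * B ≤ ((A.baseChange K' * B.baseChange K').restrictScalars K).comap
        (TensorProduct.mk K K' L 1) := by
      rw [Submodule.mul_le]
      intro a ha b hb
      have := Submodule.mul_mem_mul (Submodule.tmul_mem_baseChange_of_mem (1 : K') ha)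
        (Submodule.tmul_mem_baseChange_of_mem (1 : K') hb)
      simpa using this
    exact this hx

theorem mem_bc {ι : Type*} (b : Basis ι K K') (C : Submodule K L) (c : ι →₀ L)
    (h : (c.sum fun i n => b i ⊗ₜ[K] n) ∈ C.baseChange K') (i : ι) : c i ∈ C := by
  have h0 : ∀ x ∈ C.baseChange K', C.mkQ.baseChange K' x = 0 := by
    rintro _ ⟨x, rfl⟩
    rw [← LinearMap.comp_apply, ← LinearMap.baseChange_comp]
    have : C.mkQ ∘ₗ C.subtype = 0 := by
      ext x
      simp
    rw [this, LinearMap.baseChange_zero, LinearMap.zero_apply]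
  have h1 := h0 _ h
  have h2 : ((c.mapRange C.mkQ (map_zero _)).sum fun i n => b i ⊗ₜ[K] n) = 0 := by
    rw [Finsupp.sum_mapRange_index (by simp), ← h1, Finsupp.sum, Finsupp.sum, map_sum]
    rfl
  have h3 := TensorProduct.sum_tmul_basis_left_eq_zero b _ h2
  have h4 := DFunLike.congr_fun h3 i
  simpa using h4

theorem stab_bc (C : Submodule K L) :
    Subalgebra.toSubmodule (stab K' (C.baseChange K')) ≤
      (Subalgebra.toSubmodule (stab K C)).baseChange K' := by
  intro x hx
  let b := Basis.ofVectorSpace K K'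
  obtain ⟨c, rfl⟩ := TensorProduct.eq_repr_basis_left b x
  have hc : ∀ i, c i ∈ stab K C := by
    intro i v hv
    have h1 := hx _ (Submodule.tmul_mem_baseChange_of_mem (1 : K') hv)
    have h2 : (c.sum fun i n => b i ⊗ₜ[K] n) * ((1 : K') ⊗ₜ[K] v) =
        (c.mapRange (LinearMap.mulRight K v) (map_zero _)).sum fun i n => b i ⊗ₜ[K] n := by
      rw [Finsupp.sum_mapRange_index (by simp), Finsupp.sum, Finsupp.sum, Finset.sum_mul]
      simp
    rw [h2] at h1
    simpa using mem_bc K' b C _ h1 i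
  exact Submodule.sum_mem _ fun i _ => Submodule.tmul_mem_baseChange_of_mem _ (hc i)
end bc

theorem main_fg (K L : Type*) [Field K] [Field L] [Algebra K L] [Algebra.EssFiniteType K L]
    (hsep : ∀ x : L, IsAlgebraic K x → IsSeparable K x)
    (A B : Submodule K L) [FiniteDimensional K A] [FiniteDimensional K B]
    (hA : A ≠ ⊥) (hB : B ≠ ⊥) :
    finrank K A + finrank K B ≤ finrank K ↥(A * B) + finrank K (stab K (A * B)) := by
  have := const_fin K L
  rcases finite_or_infinite K with hK | hK
  · obtain ⟨K', hfd, hcard, hfield⟩ := exists_ext K L (finrank K ↥(A * B) + 1)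
    have : IsDomain (TensorProduct K K' L) := hfield.isDomain
    have : Finite K' := Module.finite_of_finite K
    have := fin_bc K' A
    have := fin_bc K' B
    have hnb : ∀ C : Submodule K L, FiniteDimensional K C → C ≠ ⊥ → C.baseChange K' ≠ ⊥ := by
      intro C _ hC h
      have h1 := finrank_bc K' C
      rw [h, finrank_bot] at h1
      exact hC (Submodule.finrank_eq_zero.1 h1.symm)
    have hAB := mul_fin A B
    have hS := (sub_fin (A * B) (mul_ne_bot' hA hB) (stab K (A * B)) (fun x hx => hx)).1
    have hS : FiniteDimensional K (Subalgebra.toSubmodule (stab K (A * B))) := hS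
    have key := core_finite (A.baseChange K') (B.baseChange K') hfield (hnb A inferInstance hA)
      (hnb B inferInstance hB) (by rwa [mul_bc, finrank_bc])
    rw [mul_bc, finrank_bc, finrank_bc, finrank_bc] at key
    have := fin_bc K' (Subalgebra.toSubmodule (stab K (A * B)))
    have h2 := Submodule.finrank_mono (stab_bc K' (A * B))
    rw [finrank_bc] at h2
    exact key.trans (Nat.add_le_add_left h2 _)
  · have := finite_subalg K L hsep
    exact core3 A B (Field.toIsField L) hA hB (ι := Subalgebra K (algebraicClosure K L))
      (fun H => H.comap (algebraicClosure K L).val)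
      (fun H H' h1 h2 _ _ h => comap_inj K L H H' h1 h2 h)
      (fun p hp => Subspace.exists_eq_top_of_iUnion_eq_univ hp)

end HLX

/-- **Theorem (Hou–Leung–Xiang)**, a linear analogue of Kneser's theorem:
for a separable extension `K ⊆ L` and nonzero finite-dimensional `K`-subspaces
`A, B ⊆ L`, with `H` the stabilizer of `⟨AB⟩`, one has
`dim_K ⟨AB⟩ ≥ dim_K A + dim_K B - dim_K H`. -/
theorem stmt_3 (K L : Type*) [Field K] [Field L] [Algebra K L]
    (hsep : ∀ x : L, IsAlgebraic K x → IsSeparable K x)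
    (A B : Submodule K L) (hA : A ≠ ⊥) (hB : B ≠ ⊥)
    (hAfin : FiniteDimensional K A) (hBfin : FiniteDimensional K B) :
    (Module.finrank K ↥(A * B) : ℤ) ≥
      (Module.finrank K A : ℤ) + (Module.finrank K B : ℤ)
        - (Module.finrank K ↥(mulStabilizer K L (A * B)) : ℤ) := by
  obtain ⟨s, hs⟩ : A.FG := Module.Finite.iff_fg.1 hAfin
  obtain ⟨t, ht⟩ : B.FG := Module.Finite.iff_fg.1 hBfin
  classical
  let L0 : IntermediateField K L := IntermediateField.adjoin K ((s ∪ t : Finset L) : Set L)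
  have hess : Algebra.EssFiniteType K L0 := IntermediateField.essFiniteType_iff.2 ⟨_, rfl⟩
  have hAL : A ≤ LinearMap.range L0.val.toLinearMap := by
    rw [← hs, Submodule.span_le]
    intro x hx
    exact ⟨⟨x, IntermediateField.subset_adjoin _ _ (by simp at hx; simp [hx])⟩, rfl⟩
  have hBL : B ≤ LinearMap.range L0.val.toLinearMap := by
    rw [← ht, Submodule.span_le]
    intro x hx
    exact ⟨⟨x, IntermediateField.subset_adjoin _ _ (by simp at hx; simp [hx])⟩, rfl⟩
  have hinj : Function.Injective L0.val.toLinearMap := L0.val.injective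
  let A0 := A.comap L0.val.toLinearMap
  let B0 := B.comap L0.val.toLinearMap
  have hA0 : A0.map L0.val.toLinearMap = A := Submodule.map_comap_eq_of_le hAL
  have hB0 : B0.map L0.val.toLinearMap = B := Submodule.map_comap_eq_of_le hBL
  have hfr : ∀ C : Submodule K L0,
      Module.finrank K (C.map L0.val.toLinearMap) = Module.finrank K C := fun C =>
    ((Submodule.equivMapOfInjective _ hinj C).finrank_eq).symm
  have fA : FiniteDimensional K A0 :=
    Module.Finite.equiv ((Submodule.equivMapOfInjective _ hinj A0).trans (LinearEquiv.ofEq _ _ hA0)).symm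
  have fB : FiniteDimensional K B0 :=
    Module.Finite.equiv ((Submodule.equivMapOfInjective _ hinj B0).trans (LinearEquiv.ofEq _ _ hB0)).symm
  have hAB : (A0 * B0).map L0.val.toLinearMap = A * B := by
    rw [Submodule.map_mul, hA0, hB0]
  have hA0n : A0 ≠ ⊥ := fun h => hA (by rw [← hA0, h, Submodule.map_bot])
  have hB0n : B0 ≠ ⊥ := fun h => hB (by rw [← hB0, h, Submodule.map_bot])
  have key := HLX.main_fg K L0 (fun x hx => by
    have h := hsep x (hx.algHom L0.val)
    have e : minpoly K (x : L) = minpoly K x :=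
      minpoly.algebraMap_eq (algebraMap L0 L).injective x
    unfold IsSeparable at *
    rwa [← e]) A0 B0 hA0n hB0n
  rw [← hfr A0, ← hfr B0, ← hfr (A0 * B0), hA0, hB0, hAB] at key
  have hst : (Subalgebra.toSubmodule (HLX.stab K (A0 * B0))).map L0.val.toLinearMap ≤
      mulStabilizer K L (A * B) := by
    rintro _ ⟨x, hx, rfl⟩ v hv
    rw [← hAB] at hv ⊢
    obtain ⟨w, hw, rfl⟩ := hv
    exact ⟨x * w, hx w hw, by simp⟩
  have hfin : FiniteDimensional K (mulStabilizer K L (A * B)) := by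
    have := HLX.mul_fin A B
    exact (HLX.sub_fin (A * B) (HLX.mul_ne_bot' hA hB) (HLX.stab K (A * B)) (fun x hx => hx)).1
  have h2 := Submodule.finrank_mono hst
  rw [hfr] at h2
  have h3 : Module.finrank K (Subalgebra.toSubmodule (HLX.stab K (A0 * B0))) =
    Module.finrank K (HLX.stab K (A0 * B0)) := rfl
  omega
end

section
/- Let G be an abelian group (written multiplicatively) and let r, s be positive integers such that G has subsets of cardinalities r and s. Then the minimum of |AB|, taken over all finite subsets A, B ⊆ G with |A| = r and |B| = s, equals the minimum of (⌈r/h⌉ + ⌈s/h⌉ − 1)·h, taken over all h that are cardinalities of finite subgroups of G. -/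
open scoped Pointwise

section
variable {G : Type*} [CommGroup G] [DecidableEq G]

def KIsG (K : Finset G) : Prop :=
  1 ∈ K ∧ (∀ x ∈ K, ∀ y ∈ K, x * y ∈ K) ∧ ∀ x ∈ K, x⁻¹ ∈ K

def KP (A B : Finset G) : Prop :=
  ∃ K : Finset G, KIsG K ∧ A * B * K = A * B ∧ (A * K).card + (B * K).card ≤ (A * B).card + K.card

lemma KIsG.mul_self {K : Finset G} (h : KIsG K) : K * K = K := by
  ext x
  rw [Finset.mem_mul]
  constructor
  · rintro ⟨y, hy, z, hz, rfl⟩; exact h.2.1 _ hy _ hz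
  · intro hx; exact ⟨1, h.1, x, hx, one_mul _⟩

lemma KIsG.sub {K : Finset G} (h : KIsG K) (A : Finset G) : A ⊆ A * K := by
  intro x hx
  exact Finset.mem_mul.2 ⟨x, hx, 1, h.1, mul_one _⟩

lemma KIsG.dvd {K : Finset G} (h : KIsG K) (A : Finset G) : K.card ∣ (A * K).card := by
  apply Finset.card_dvd_card_mul_right
  rintro _ ⟨a, ha, rfl⟩ _ ⟨b, hb, rfl⟩ hab
  simp only [Function.onFun, id]
  rw [Finset.disjoint_left]
  intro x hx hy
  apply hab
  simp only at hx hy ⊢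
  rw [Finset.mem_smul_finset] at hx hy
  obtain ⟨u, hu, rfl⟩ := hx
  obtain ⟨v, hv, hv2⟩ := hy
  simp only [smul_eq_mul] at hv2
  have e1 : a = b * (v * u⁻¹) := by rw [← mul_assoc, hv2]; group
  have hm : v * u⁻¹ ∈ K := h.2.1 _ hv _ (h.2.2 _ hu)
  ext y
  simp only [Finset.mem_smul_finset, smul_eq_mul]
  constructor
  · rintro ⟨z, hz, rfl⟩
    exact ⟨v * u⁻¹ * z, h.2.1 _ hm _ hz, by rw [e1]; group⟩
  · rintro ⟨z, hz, rfl⟩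
    exact ⟨(v * u⁻¹)⁻¹ * z, h.2.1 _ (h.2.2 _ hm) _ hz, by rw [e1]; group⟩

lemma kcount (S T U K : Finset G) (hU : U ⊆ S * K) (hT : T ⊆ S * K) :
    U.card + T.card ≤ (S * K).card + (U ∩ T).card := by
  have := Finset.card_union_add_card_inter U T
  have := Finset.card_le_card (Finset.union_subset hU hT)
  omega

lemma kmem_smul {K : Finset G} {a x : G} : x ∈ a • K ↔ a⁻¹ * x ∈ K := by
  rw [← Finset.inv_smul_mem_iff, smul_eq_mul]

lemma kstab {C K : Finset G} (h : C * K = C) {x y : G} (hx : x ∈ C) (hy : y ∈ K) : x * y ∈ C := by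
  rw [← h]; exact Finset.mul_mem_mul hx hy

/-- intersection of a coset with a product by a smaller subgroup -/
lemma kinter {K L S : Finset G} (hK : KIsG K) (hL : L ⊆ K) (a : G) :
    (a • K) ∩ (S * L) ⊆ (S ∩ a • K) * L := by
  intro x hx
  rw [Finset.mem_inter, Finset.mem_mul] at hx
  obtain ⟨h1, s, hs, l, hl, rfl⟩ := hx
  refine Finset.mul_mem_mul (Finset.mem_inter.2 ⟨hs, ?_⟩) hl
  rw [kmem_smul] at h1 ⊢
  have := hK.2.1 _ h1 _ (hK.2.2 _ (hL hl))
  simpa [mul_assoc] using this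

lemma kcoset {K S : Finset G} {a : G} (h : a ∈ S) : a • K ⊆ S * K := by
  intro x hx
  rw [Finset.mem_smul_finset] at hx
  obtain ⟨y, hy, rfl⟩ := hx
  exact Finset.mul_mem_mul h hy

theorem kstep (A B : Finset G) 
    (IH : ∀ A' B' : Finset G, A'.Nonempty → B'.Nonempty →
      ((A' * B').card < (A * B).card ∨ ((A' * B').card = (A * B).card ∧
        (A.card + B.card < A'.card + B'.card ∨
          (A.card + B.card = A'.card + B'.card ∧ A'.card < A.card)))) → KP A' B')
    (hAB : (A ∩ B).Nonempty) (hne : ¬ A ⊆ B) : KP A B := by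
  by_contra hP
  have hA : A.Nonempty := hAB.mono Finset.inter_subset_left
  have hB : B.Nonempty := hAB.mono Finset.inter_subset_right
  have h1 : (A * B).card + 1 < A.card + B.card := by
    by_contra hc
    apply hP
    refine ⟨1, ⟨by simp, by simp, by simp⟩, by simp, ?_⟩
    simp; omega
  have per : ∀ K : Finset G, KIsG K → A * B * K = A * B → A * K = A ∧ B * K = B := by
    intro K hK hs
    by_contra hc
    apply hP
    have e : A * K * (B * K) = A * B := by
      rw [mul_mul_mul_comm, hK.mul_self, hs]
    have hlt : A.card + B.card < (A * K).card + (B * K).card := by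
      have ha := hK.sub A
      have hb := hK.sub B
      have ha' := Finset.card_le_card ha
      have hb' := Finset.card_le_card hb
      by_contra hle
      apply hc
      exact ⟨(Finset.eq_of_subset_of_card_le ha (by omega)).symm,
        (Finset.eq_of_subset_of_card_le hb (by omega)).symm⟩
    obtain ⟨L, hL, h2, h3⟩ := IH (A * K) (B * K) (hA.mono (hK.sub A)) (hB.mono (hK.sub B))
      (Or.inr ⟨by rw [e], Or.inl hlt⟩)
    rw [e] at h2 h3
    refine ⟨L, hL, h2, le_trans (add_le_add ?_ ?_) h3⟩
    · exact Finset.card_le_card (Finset.mul_subset_mul_right (hK.sub A))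
    · exact Finset.card_le_card (Finset.mul_subset_mul_right (hK.sub B))
  have hcard := Finset.card_union_add_card_inter A B
  -- convergents
  have hex : ∃ n : ℕ, ∃ C K : Finset G, C.Nonempty ∧ C ⊆ A * B ∧ KIsG K ∧ C * K = C ∧
      (A ∩ B).card + ((A ∪ B) * K).card ≤ C.card + K.card ∧ K.card = n := by
    have hsub : (A ∩ B) * (A ∪ B) ⊆ A * B := Finset.inter_mul_union_subset
    have hle := Finset.card_le_card hsub
    have hlt : (A ∩ B).card < A.card := by
      apply Finset.card_lt_card
      refine ⟨Finset.inter_subset_left, fun h => hne (h.trans Finset.inter_subset_right)⟩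
    have hU : (A ∪ B).Nonempty := hA.mono Finset.subset_union_left
    obtain ⟨K, hK, h2, h3⟩ := IH (A ∩ B) (A ∪ B) hAB hU (by omega)
    refine ⟨_, _, K, hAB.mul hU, hsub, hK, h2, le_trans ?_ h3, rfl⟩
    have := Finset.card_le_card (hK.sub (A ∩ B))
    omega
  classical
  obtain ⟨C, K, hC, hCs, hK, hCK, hconv, hKn⟩ := Nat.find_spec hex
  have hmin : ∀ C' K' : Finset G, C'.Nonempty → C' ⊆ A * B → KIsG K' → C' * K' = C' →
      K'.card < K.card → C'.card + K'.card < (A ∩ B).card + ((A ∪ B) * K').card := by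
    intro C' K' c1 c2 c3 c4 c5
    by_contra hc
    exact Nat.find_min hex (hKn ▸ c5) ⟨C', K', c1, c2, c3, c4, not_lt.1 hc, rfl⟩
  clear hKn
  have hnst : ¬ A * B * K ⊆ A * B := by
    intro hs
    have hs' : A * B * K = A * B := hs.antisymm (hK.sub _)
    obtain ⟨p1, p2⟩ := per K hK hs'
    apply hP
    refine ⟨K, hK, hs', ?_⟩
    rw [p1, p2]
    have := Finset.card_le_card (hK.sub (A ∪ B))
    have := Finset.card_le_card hCs
    omega
  obtain ⟨a, ha, b, hb, c, hc, habc⟩ : ∃ a ∈ A, ∃ b ∈ B, ∃ c ∈ K, a * b * c ∉ A * B := by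
    by_contra hcon
    push Not at hcon
    apply hnst
    intro x hx
    obtain ⟨y, hy, c, hc, rfl⟩ := Finset.mem_mul.1 hx
    obtain ⟨a, ha, b, hb, rfl⟩ := Finset.mem_mul.1 hy
    exact hcon a ha b hb c hc
  have hdisj : Disjoint C ((a * b) • K) := by
    rw [Finset.disjoint_left]
    intro x hx hx2
    rw [kmem_smul] at hx2
    apply habc
    apply hCs
    have := kstab hCK hx (hK.2.1 _ (hK.2.2 _ hx2) _ hc)
    convert this using 1
    group
  have key : ∀ A' B' : Finset G, A'.Nonempty → B'.Nonempty → A' ⊆ A → B' ⊆ B →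
      A' * B' ⊆ (a * b) • K → ∃ L : Finset G, L ⊆ K ∧ KIsG L ∧
      ((A ∪ B) * K).card + (A' * L).card + (B' * L).card < K.card + ((A ∪ B) * L).card ∧
      ((A ∪ B) * K).card + (A' * L).card + (B' * L).card < K.card + L.card + (A ∪ B).card := by
    intro A' B' hA' hB' sA sB hsub
    have hd : Disjoint C (A' * B') := hdisj.mono_right hsub
    have hss : C ∪ A' * B' ⊆ A * B := Finset.union_subset hCs (Finset.mul_subset_mul sA sB)
    have hcd : (C ∪ A' * B').card = C.card + (A' * B').card := Finset.card_union_of_disjoint hd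
    have hle := Finset.card_le_card hss
    have hCpos := hC.card_pos
    obtain ⟨L, hL, h2, h3⟩ := IH A' B' hA' hB' (by omega)
    have hab' : ∃ x, x ∈ A' * B' := hA'.mul hB'
    obtain ⟨x, hx⟩ := hab'
    have hLK : L ⊆ K := by
      intro l hl
      have e1 := kmem_smul.1 (hsub (kstab h2 hx hl))
      have e2 := kmem_smul.1 (hsub hx)
      have := hK.2.1 _ (hK.2.2 _ e2) _ e1
      convert this using 1
      group
    have hlt : L.card < K.card := by
      apply Finset.card_lt_card
      refine ⟨hLK, fun hKL => habc ?_⟩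
      have e2 := kmem_smul.1 (hsub hx)
      have := kstab h2 hx (hKL (hK.2.1 _ (hK.2.2 _ e2) _ hc))
      apply Finset.mul_subset_mul sA sB
      convert this using 1
      group
    have hCL : C * L = C := by
      apply (hL.sub C).antisymm'
      intro x hx
      obtain ⟨y, hy, c, hc, rfl⟩ := Finset.mem_mul.1 hx
      exact kstab hCK hy (hLK hc)
    have := hmin (C ∪ A' * B') L (hC.mono Finset.subset_union_left) hss hL
      (by rw [Finset.union_mul, hCL, h2]) hlt
    refine ⟨L, hLK, hL, by omega, by omega⟩
  have hAm : a ∈ A ∪ B := Finset.mem_union_left _ ha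
  have hBm : b ∈ A ∪ B := Finset.mem_union_right _ hb
  have hsubmul : ∀ a b : G, ∀ A' B' : Finset G, A' ⊆ a • K → B' ⊆ b • K → 
      A' * B' ⊆ (a * b) • K := by
    intro a b A' B' h1 h2 x hx
    obtain ⟨y, hy, z, hz, rfl⟩ := Finset.mem_mul.1 hx
    have e1 := kmem_smul.1 (h1 hy)
    have e2 := kmem_smul.1 (h2 hz)
    rw [kmem_smul]
    have := hK.2.1 _ e1 _ e2
    convert this using 1
    rw [mul_inv, mul_mul_mul_comm]
  obtain ⟨A₁, hA₁⟩ : ∃ X, X = A ∩ a • K := ⟨_, rfl⟩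
  obtain ⟨A₂, hA₂⟩ : ∃ X, X = A ∩ b • K := ⟨_, rfl⟩
  obtain ⟨B₁, hB₁⟩ : ∃ X, X = B ∩ b • K := ⟨_, rfl⟩
  obtain ⟨B₂, hB₂⟩ : ∃ X, X = B ∩ a • K := ⟨_, rfl⟩
  have na : A₁.Nonempty := ⟨a, by rw [hA₁, Finset.mem_inter, kmem_smul]; simp [ha, hK.1]⟩
  have nb : B₁.Nonempty := ⟨b, by rw [hB₁, Finset.mem_inter, kmem_smul]; simp [hb, hK.1]⟩
  have hSa : (A ∪ B) ∩ a • K = A₁ ∪ B₂ := by rw [hA₁, hB₂, Finset.union_inter_distrib_right]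
  have hSb : (A ∪ B) ∩ b • K = A₂ ∪ B₁ := by rw [hA₂, hB₁, Finset.union_inter_distrib_right]
  obtain ⟨K₁, k1, k2, k3, k4⟩ := key A₁ B₁ na nb (hA₁ ▸ Finset.inter_subset_left) 
    (hB₁ ▸ Finset.inter_subset_left) (hsubmul a b _ _ (hA₁ ▸ Finset.inter_subset_right)
      (hB₁ ▸ Finset.inter_subset_right))
  have ca : ∀ L ⊆ K, K.card + ((A ∪ B) * L).card ≤ 
      ((A ∪ B) * K).card + ((A₁ ∪ B₂) * L).card := by
    intro L hL
    have e1 := kcount (A ∪ B) ((A ∪ B) * L) (a • K) K (kcoset hAm) (Finset.mul_subset_mul_left hL)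
    have e2 := Finset.card_le_card (kinter (S := A ∪ B) hK hL a)
    rw [hSa] at e2
    rw [Finset.card_smul_finset] at e1
    omega
  have cb : ∀ L ⊆ K, K.card + ((A ∪ B) * L).card ≤ 
      ((A ∪ B) * K).card + ((A₂ ∪ B₁) * L).card := by
    intro L hL
    have e1 := kcount (A ∪ B) ((A ∪ B) * L) (b • K) K (kcoset hBm) (Finset.mul_subset_mul_left hL)
    have e2 := Finset.card_le_card (kinter (S := A ∪ B) hK hL b)
    rw [hSb] at e2
    rw [Finset.card_smul_finset] at e1
    omega
  have un : ∀ X Y L : Finset G, ((X ∪ Y) * L).card ≤ (X * L).card + (Y * L).card := by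
    intro X Y L
    rw [Finset.union_mul]
    exact Finset.card_union_le _ _
  have ca1 := ca K₁ k1
  have cb1 := cb K₁ k1
  have ua1 := un A₁ B₂ K₁
  have ub1 := un A₂ B₁ K₁
  rcases B₂.eq_empty_or_nonempty with hB2 | nb2
  · rw [hB2] at ua1
    simp at ua1
    rw [hB2] at ca1
    simp at ca1
    omega
  rcases A₂.eq_empty_or_nonempty with hA2 | na2
  · rw [hA2] at cb1
    simp at cb1
    omega
  by_cases hab : a • K = b • K
  · rw [← hab, ← hA₁] at hA₂
    rw [hA₂] at cb1 ub1
    omega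
  have dab : Disjoint (a • K) (b • K) := by
    rw [Finset.disjoint_left]
    intro x hx hy
    rw [kmem_smul] at hx hy
    apply hab
    ext z
    rw [kmem_smul, kmem_smul]
    constructor
    · intro hz
      have := hK.2.1 _ hy _ (hK.2.1 _ (hK.2.2 _ hx) _ hz)
      convert this using 1
      group
    · intro hz
      have := hK.2.1 _ hx _ (hK.2.1 _ (hK.2.2 _ hy) _ hz)
      convert this using 1
      group
  have cab : ∀ L ⊆ K, 2 * K.card + ((A ∪ B) * L).card ≤ 
      ((A ∪ B) * K).card + ((A₁ ∪ B₂) * L).card + ((A₂ ∪ B₁) * L).card := by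
    intro L hL
    have e1 := kcount (A ∪ B) ((A ∪ B) * L) (a • K ∪ b • K) K 
      (Finset.union_subset (kcoset hAm) (kcoset hBm)) (Finset.mul_subset_mul_left hL)
    have e2 := Finset.card_le_card (kinter (S := A ∪ B) hK hL b)
    have e3 := Finset.card_le_card (kinter (S := A ∪ B) hK hL a)
    rw [hSb] at e2
    rw [hSa] at e3
    rw [Finset.card_union_of_disjoint dab, Finset.union_inter_distrib_right,
      Finset.card_smul_finset, Finset.card_smul_finset] at e1
    have := Finset.card_union_le (a • K ∩ ((A ∪ B) * L)) (b • K ∩ ((A ∪ B) * L))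
    omega
  obtain ⟨K₂, l1, l2, l3, l4⟩ := key A₂ B₂ na2 nb2 (hA₂ ▸ Finset.inter_subset_left) 
    (hB₂ ▸ Finset.inter_subset_left) (mul_comm a b ▸ 
      hsubmul b a _ _ (hA₂ ▸ Finset.inter_subset_right) (hB₂ ▸ Finset.inter_subset_right))
  have bd : ∀ L X : Finset G, ∀ a : G, L ⊆ K → X ⊆ a • K → (X * L).card ≤ K.card := by
    intro L X a hL hX
    rw [← Finset.card_smul_finset a K]
    apply Finset.card_le_card
    intro x hx
    obtain ⟨y, hy, z, hz, rfl⟩ := Finset.mem_mul.1 hx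
    have := hX hy
    rw [kmem_smul] at this ⊢
    rw [← mul_assoc]
    exact hK.2.1 _ this _ (hL hz)
  have sX : A₁ ∪ B₂ ⊆ a • K := by rw [← hSa]; exact Finset.inter_subset_right
  have sY : A₂ ∪ B₁ ⊆ b • K := by rw [← hSb]; exact Finset.inter_subset_right
  have dv : ∀ L X Y : Finset G, KIsG L → L ⊆ K → (X * L).card + (Y * L).card < K.card → 
      (X * L).card + (Y * L).card + L.card ≤ K.card := by
    intro L X Y hL hLK h
    have e : K * L = K := by
      apply (hL.sub K).antisymm'
      intro x hx
      obtain ⟨y, hy, c, hc, rfl⟩ := Finset.mem_mul.1 hx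
      exact hK.2.1 _ hy _ (hLK hc)
    have d := hL.dvd K
    rw [e] at d
    have d2 := (hL.dvd X).add (hL.dvd Y)
    have d3 := Nat.dvd_sub d d2
    have := Nat.le_of_dvd (by omega) d3
    omega
  have c1 := cab K₁ k1
  have c2 := cab K₂ l1
  have f1 := dv K₁ A₁ B₁ k2 k1 (by 
    have := bd K₁ _ a k1 sX
    have := bd K₁ _ b k1 sY
    omega)
  have f2 := dv K₂ A₂ B₂ l2 l1 (by 
    have := bd K₂ _ a l1 sX
    have := bd K₂ _ b l1 sY
    omega)
  have c0 := cab 1 (by simpa using hK.1)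
  simp only [mul_one] at c0
  have g1 := Finset.card_le_card (k2.sub A₁)
  have g2 := Finset.card_le_card (k2.sub B₁)
  have g3 := Finset.card_le_card (l2.sub A₂)
  have g4 := Finset.card_le_card (l2.sub B₂)
  have g5 := Finset.card_union_le A₁ B₂
  have g6 := Finset.card_union_le A₂ B₁
  omega

theorem kneser_aux (n : ℕ) : ∀ m l : ℕ, ∀ A B : Finset G, A.Nonempty → B.Nonempty →
    (A * B).card = n → 2 * n - (A.card + B.card) = m → A.card = l → KP A B := by
  induction n using Nat.strong_induction_on with
  | _ n ihn =>
  intro m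
  induction m using Nat.strong_induction_on with
  | _ m ihm =>
  intro l
  induction l using Nat.strong_induction_on with
  | _ l ihl =>
  intro A B hA hB hn hm hl
  have IH : ∀ A' B' : Finset G, A'.Nonempty → B'.Nonempty →
      ((A' * B').card < (A * B).card ∨ ((A' * B').card = (A * B).card ∧
        (A.card + B.card < A'.card + B'.card ∨
          (A.card + B.card = A'.card + B'.card ∧ A'.card < A.card)))) → KP A' B' := by
    intro A' B' hA' hB' h
    have u1 := Finset.card_le_card_mul_right (s := A') hB'
    have u2 := Finset.card_le_card_mul_left (t := B') hA'
    rcases h with h | ⟨h0, h | ⟨h1, h2⟩⟩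
    · exact ihn _ (by omega) _ _ A' B' hA' hB' rfl rfl rfl
    · exact ihm (2 * n - (A'.card + B'.card)) (by omega) _ A' B' hA' hB' (by omega) rfl rfl
    · exact ihl A'.card (by omega) A' B' hA' hB' (by omega) (by omega) rfl
  by_cases hcase : ∃ a ∈ A, ∃ b ∈ B, ¬ A ⊆ (a * b⁻¹) • B
  · obtain ⟨a, ha, b, hb, h⟩ := hcase
    have e : A * (a * b⁻¹) • B = (a * b⁻¹) • (A * B) := mul_smul_comm _ _ _
    obtain ⟨K, hK, h1, h2⟩ := kstep A ((a * b⁻¹) • B) (by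
      rw [e, Finset.card_smul_finset, Finset.card_smul_finset]; exact IH)
      ⟨a, Finset.mem_inter.2 ⟨ha, by rw [kmem_smul]; simpa using hb⟩⟩ h
    rw [e, Finset.card_smul_finset, smul_mul_assoc, Finset.card_smul_finset] at h2
    rw [e, smul_mul_assoc] at h1
    exact ⟨K, hK, smul_left_cancel _ h1, h2⟩
  · push Not at hcase
    obtain ⟨a, ha⟩ := hA
    -- stabilizer of B
    have hst : ∀ x ∈ A, ∀ b ∈ B, x * a⁻¹ * b ∈ B := by
      intro x hx b hb
      have := hcase a ha b hb hx
      rw [kmem_smul] at this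
      convert this using 1
      rw [mul_inv, inv_inv]
      rw [mul_comm x, mul_assoc, mul_assoc, mul_comm x]
    obtain ⟨b₀, hb₀⟩ := hB
    obtain ⟨K, hKd⟩ : ∃ K : Finset G, K = (b₀⁻¹ • B).filter (fun x => x • B = B) := ⟨_, rfl⟩
    have hKm : ∀ x, x ∈ K ↔ x • B = B := by
      intro x
      rw [hKd, Finset.mem_filter]
      refine ⟨fun h => h.2, fun h => ⟨?_, h⟩⟩
      rw [kmem_smul, inv_inv, mul_comm, ← h]
      exact Finset.smul_mem_smul_finset hb₀
    have hK : KIsG K := by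
      refine ⟨?_, ?_, ?_⟩
      · rw [hKm, one_smul]
      · intro x hx y hy
        rw [hKm] at *
        rw [mul_smul, hy, hx]
      · intro x hx
        rw [hKm] at *
        rw [inv_smul_eq_iff, hx]
    have hBK : B * K = B := by
      apply (hK.sub B).antisymm'
      intro x hx
      obtain ⟨y, hy, c, hc, rfl⟩ := Finset.mem_mul.1 hx
      rw [hKm] at hc
      rw [← hc, mul_comm]
      exact Finset.smul_mem_smul_finset hy
    have hAK : A ⊆ a • K := by
      intro x hx
      rw [kmem_smul, hKm]
      apply Finset.eq_of_subset_of_card_le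
      · intro z hz
        obtain ⟨y, hy, rfl⟩ := Finset.mem_smul_finset.1 hz
        have := hst x hx y hy
        rwa [mul_comm x] at this
      · rw [Finset.card_smul_finset]
    refine ⟨K, hK, by rw [mul_assoc, hBK], ?_⟩
    rw [hBK]
    have e1 : (A * K).card ≤ K.card := by
      rw [← Finset.card_smul_finset a K]
      apply Finset.card_le_card
      calc A * K ⊆ a • K * K := Finset.mul_subset_mul_right hAK
        _ = a • K := by rw [smul_mul_assoc, hK.mul_self]
    have := Finset.card_le_card_mul_left (t := B) ⟨a, ha⟩
    omega

theorem kneser (A B : Finset G) (hA : A.Nonempty) (hB : B.Nonempty) : KP A B :=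
  kneser_aux _ _ _ A B hA hB rfl rfl rfl

end
section
lemma rank_aux {ι : Type} [DecidableEq ι] (n : ι → ℕ) (hn : ∀ i, 1 < n i) (s : Finset ι) :
    ∃ f : ((i : ι) → Multiplicative (ZMod (n i))) → ℕ, (∀ x, f x < ∏ i ∈ s, n i) ∧
      (∀ x y, f (x * y) ≤ f x + f y) ∧ ∀ x y, f x = f y → ∀ i ∈ s, x i = y i := by
  induction s using Finset.induction_on with
  | empty => exact ⟨fun _ => 0, by simp, by simp, by simp⟩
  | insert a s ha ih =>
    obtain ⟨f, h1, h2, h3⟩ := ih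
    have : NeZero (n a) := ⟨by have := hn a; omega⟩
    refine ⟨fun x => (Multiplicative.toAdd (x a)).val * (∏ i ∈ s, n i) + f x, ?_, ?_, ?_⟩
    · intro x
      rw [Finset.prod_insert ha]
      have u1 := ZMod.val_lt (Multiplicative.toAdd (x a))
      have u2 := h1 x
      have : ((Multiplicative.toAdd (x a)).val + 1) * (∏ i ∈ s, n i) ≤ n a * ∏ i ∈ s, n i :=
        Nat.mul_le_mul_right _ u1
      simp only
      linarith
    · intro x y
      have u1 := ZMod.val_add_le (Multiplicative.toAdd (x a)) (Multiplicative.toAdd (y a))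
      have u2 := h2 x y
      have := Nat.mul_le_mul_right (∏ i ∈ s, n i) u1
      simp only [Pi.mul_apply, toAdd_mul]
      linarith
    · intro x y hxy
      simp only at hxy
      have hx := h1 x
      have hy := h1 y
      have hN : 0 < ∏ i ∈ s, n i := by omega
      have e1 := congrArg (· % (∏ i ∈ s, n i)) hxy
      have e2 := congrArg (· / (∏ i ∈ s, n i)) hxy
      simp only [Nat.mul_add_mod', Nat.mod_eq_of_lt hx, Nat.mod_eq_of_lt hy] at e1
      have e3 : (Multiplicative.toAdd (x a)).val = (Multiplicative.toAdd (y a)).val := by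
        rw [e1] at hxy
        exact Nat.eq_of_mul_eq_mul_right hN (by omega)
      intro i hi
      rcases Finset.mem_insert.1 hi with rfl | hi
      · exact Multiplicative.toAdd.injective (ZMod.val_injective _ e3)
      · exact h3 x y e1 i hi

lemma small_finite (Q : Type*) [CommGroup Q] [DecidableEq Q] [Finite Q] (a b : ℕ) (ha : 0 < a)
    (hb : 0 < b) (haQ : a ≤ Nat.card Q) (hbQ : b ≤ Nat.card Q) :
    ∃ A B : Finset Q, A.card = a ∧ B.card = b ∧ (A * B).card ≤ a + b - 1 := by
  classical
  obtain ⟨ι, _, n, hn, ⟨e⟩⟩ := CommGroup.equiv_prod_multiplicative_zmod_of_finite Q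
  obtain ⟨f, h1, h2, h3⟩ := rank_aux n hn Finset.univ
  cases nonempty_fintype Q
  have : ∀ i, NeZero (n i) := fun i => ⟨by have := hn i; omega⟩
  have hcard : Nat.card Q = ∏ i, n i := by
    rw [Nat.card_congr e.toEquiv, Nat.card_pi]
    simp
  have finj : Function.Injective (fun x => f (e x)) := by
    intro x y hxy
    apply e.injective
    funext i
    exact h3 _ _ hxy i (Finset.mem_univ i)
  have him : Finset.univ.image (fun x => f (e x)) = Finset.range (Nat.card Q) := by
    apply Finset.eq_of_subset_of_card_le
    · intro y hy
      obtain ⟨x, -, rfl⟩ := Finset.mem_image.1 hy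
      rw [hcard]
      exact Finset.mem_range.2 (h1 _)
    · rw [Finset.card_image_of_injective _ finj]
      simp
  have hI : ∀ k ≤ Nat.card Q, (Finset.univ.filter (fun x => f (e x) < k)).card = k := by
    intro k hk
    rw [← Finset.card_image_of_injective _ finj]
    conv_rhs => rw [← Finset.card_range k]
    congr 1
    ext y
    simp only [Finset.mem_image, Finset.mem_filter, Finset.mem_univ, true_and, Finset.mem_range]
    constructor
    · rintro ⟨x, hx, rfl⟩; exact hx
    · intro hy
      have : y ∈ Finset.univ.image (fun x => f (e x)) := by
        rw [him]; exact Finset.mem_range.2 (by omega)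
      obtain ⟨x, -, rfl⟩ := Finset.mem_image.1 this
      exact ⟨x, hy, rfl⟩
  refine ⟨_, _, hI a haQ, hI b hbQ, ?_⟩
  rw [← Finset.card_image_of_injective _ finj]
  conv_rhs => rw [← Finset.card_range (a + b - 1)]
  apply Finset.card_le_card
  intro y hy
  obtain ⟨z, hz, rfl⟩ := Finset.mem_image.1 hy
  obtain ⟨u, hu, v, hv, rfl⟩ := Finset.mem_mul.1 hz
  simp only [Finset.mem_filter, Finset.mem_univ, true_and] at hu hv
  have := h2 (e u) (e v)
  rw [Finset.mem_range, map_mul]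
  omega

lemma small_sets (Q : Type*) [CommGroup Q] [DecidableEq Q] (a b : ℕ) (ha : 0 < a)
    (hb : 0 < b) (haQ : ∃ S : Finset Q, S.card = a) (hbQ : ∃ S : Finset Q, S.card = b) :
    ∃ A B : Finset Q, A.card = a ∧ B.card = b ∧ (A * B).card ≤ a + b - 1 := by
  classical
  by_cases ht : ∃ g : Q, ¬ IsOfFinOrder g
  · obtain ⟨g, hg⟩ := ht
    have inj : Function.Injective (fun n : ℕ => g ^ n) := injective_pow_iff_not_isOfFinOrder.2 hg
    refine ⟨(Finset.range a).image (fun n => g ^ n), (Finset.range b).image (fun n => g ^ n),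
      by simp [Finset.card_image_of_injective _ inj], 
      by simp [Finset.card_image_of_injective _ inj], ?_⟩
    have : (Finset.range a).image (fun n => g ^ n) * (Finset.range b).image (fun n => g ^ n) ⊆
        (Finset.range (a + b - 1)).image (fun n => g ^ n) := by
      intro x hx
      obtain ⟨u, hu, v, hv, rfl⟩ := Finset.mem_mul.1 hx
      obtain ⟨i, hi, rfl⟩ := Finset.mem_image.1 hu
      obtain ⟨j, hj, rfl⟩ := Finset.mem_image.1 hv
      rw [Finset.mem_range] at hi hj
      exact Finset.mem_image.2 ⟨i + j, Finset.mem_range.2 (by omega), pow_add _ _ _⟩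
    refine (Finset.card_le_card this).trans ?_
    simpa using Finset.card_image_le (s := Finset.range (a + b - 1)) (f := fun n => g ^ n)
  · push Not at ht
    obtain ⟨S, hS⟩ := haQ
    obtain ⟨T, hT⟩ := hbQ
    let H := Subgroup.closure (((S ∪ T : Finset Q)) : Set Q)
    have : Group.FG H := inferInstance
    have : Finite H := CommGroup.finite_of_fg_isMulTorsion H (by
      intro x
      have := ht (x : Q)
      exact Submonoid.isOfFinOrder_coe.1 this)
    have hle : ∀ W : Finset Q, W ⊆ S ∪ T → W.card ≤ Nat.card H := by
      intro W hW
      have h1 : (W : Set Q) ⊆ (H : Set Q) := 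
        (Finset.coe_subset.2 hW).trans Subgroup.subset_closure
      have := Set.ncard_le_ncard h1 (Set.toFinite _)
      rwa [Set.ncard_coe_finset] at this
    obtain ⟨A, B, hA, hB, hAB⟩ := small_finite H a b ha hb 
      (hS ▸ hle S Finset.subset_union_left) (hT ▸ hle T Finset.subset_union_right)
    refine ⟨A.image H.subtype, B.image H.subtype, ?_, ?_, ?_⟩
    · rw [Finset.card_image_of_injective _ H.subtype_injective, hA]
    · rw [Finset.card_image_of_injective _ H.subtype_injective, hB]
    · rw [← Finset.image_mul, Finset.card_image_of_injective _ H.subtype_injective]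
      exact hAB

lemma exists_small (G : Type*) [CommGroup G] [DecidableEq G] (H : Subgroup G) [Finite H]
    (r s : ℕ) (hr : 0 < r) (hs : 0 < s) (hrG : ∃ S : Finset G, S.card = r)
    (hsG : ∃ S : Finset G, S.card = s) :
    ∃ A B : Finset G, A.card = r ∧ B.card = s ∧
      (A * B).card ≤ (r ⌈/⌉ Nat.card H + s ⌈/⌉ Nat.card H - 1) * Nat.card H := by
  classical
  have hh : 0 < Nat.card H := Nat.card_pos
  have pre : ∀ T : Finset (G ⧸ H), ∃ S : Finset G, (∀ x, x ∈ S ↔ (x : G ⧸ H) ∈ T) ∧ 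
      S.card = Nat.card H * T.card := by
    intro T
    have e := QuotientGroup.preimageMkEquivSubgroupProdSet H (T : Set (G ⧸ H))
    have hf : (QuotientGroup.mk ⁻¹' (T : Set (G ⧸ H)) : Set G).Finite := by
      have : Finite (H × (T : Set (G ⧸ H))) := inferInstance
      exact Finite.of_equiv _ e.symm
    refine ⟨hf.toFinset, by simp, ?_⟩
    rw [← Set.ncard_eq_toFinset_card _ hf, ← Set.ncard_coe_finset T,
      ← Nat.card_coe_set_eq, QuotientGroup.card_preimage_mk, Nat.card_coe_set_eq]
  have ex : ∀ k : ℕ, (∃ S : Finset G, S.card = k) → 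
      ∃ T : Finset (G ⧸ H), T.card = k ⌈/⌉ Nat.card H := by
    rintro k ⟨S, rfl⟩
    obtain ⟨S', h1, h2⟩ := pre (S.image (QuotientGroup.mk : G → G ⧸ H))
    have h3 : S ⊆ S' := fun x hx => (h1 x).2 (Finset.mem_image_of_mem _ hx)
    have h4 := Finset.card_le_card h3
    rw [h2, ← ceilDiv_le_iff_le_mul hh] at h4
    obtain ⟨T, -, hT⟩ := Finset.exists_subset_card_eq h4
    exact ⟨T, hT⟩
  have pos : ∀ k : ℕ, 0 < k → 0 < k ⌈/⌉ Nat.card H := by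
    intro k hk
    by_contra hc
    have : k ⌈/⌉ Nat.card H ≤ 0 := by omega
    rw [ceilDiv_le_iff_le_mul hh] at this
    omega
  obtain ⟨A', B', hA, hB, hAB⟩ := small_sets (G ⧸ H) _ _ (pos r hr) (pos s hs) (ex r hrG) (ex s hsG)
  obtain ⟨A, a1, a2⟩ := pre A'
  obtain ⟨B, b1, b2⟩ := pre B'
  obtain ⟨C, c1, c2⟩ := pre (A' * B')
  have hrA : r ≤ A.card := by rw [a2, hA, ← ceilDiv_le_iff_le_mul hh]
  have hsB : s ≤ B.card := by rw [b2, hB, ← ceilDiv_le_iff_le_mul hh]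
  obtain ⟨A₀, a3, a4⟩ := Finset.exists_subset_card_eq hrA
  obtain ⟨B₀, b3, b4⟩ := Finset.exists_subset_card_eq hsB
  refine ⟨A₀, B₀, a4, b4, ?_⟩
  have hsub : A₀ * B₀ ⊆ C := by
    intro x hx
    obtain ⟨u, hu, v, hv, rfl⟩ := Finset.mem_mul.1 hx
    rw [c1, QuotientGroup.mk_mul]
    exact Finset.mul_mem_mul ((a1 u).1 (a3 hu)) ((b1 v).1 (b3 hv))
  refine (Finset.card_le_card hsub).trans ?_
  rw [c2, mul_comm]
  exact Nat.mul_le_mul_right _ hAB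
end

lemma exists_finset_of_le (G : Type*) (r : ℕ) (h : (r : Cardinal) ≤ Cardinal.mk G) :
    ∃ S : Finset G, S.card = r := by
  obtain ⟨S, hS⟩ := Cardinal.exists_finset_le_card G r h
  obtain ⟨T, -, hT⟩ := Finset.exists_subset_card_eq hS
  exact ⟨T, hT⟩

/-- **Theorem 2.1** (Eliahou–Kervaire): for an abelian group `G` and positive integers
`r, s` not exceeding `|G|`, the minimum of `|AB|` over subsets `A, B ⊆ G` with `|A| = r`,
`|B| = s` equals `κ_G(r,s) = min_h (⌈r/h⌉ + ⌈s/h⌉ - 1)·h`, the minimum being over the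
cardinalities `h` of finite subgroups of `G`. -/
theorem stmt_4 (G : Type*) [CommGroup G] [DecidableEq G]
    (r s : ℕ) (hr : 0 < r) (hs : 0 < s)
    (hrG : (r : Cardinal) ≤ Cardinal.mk G) (hsG : (s : Cardinal) ≤ Cardinal.mk G) :
    sInf {n : ℕ | ∃ A B : Finset G, A.card = r ∧ B.card = s ∧ (A * B).card = n}
      = sInf {n : ℕ | ∃ H : Subgroup G, ∃ _ : Finite H,
          n = (r ⌈/⌉ Nat.card H + s ⌈/⌉ Nat.card H - 1) * Nat.card H} := by
  have hrS := exists_finset_of_le G r hrG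
  have hsS := exists_finset_of_le G s hsG
  apply le_antisymm
  · have hne : {n : ℕ | ∃ H : Subgroup G, ∃ _ : Finite H,
          n = (r ⌈/⌉ Nat.card H + s ⌈/⌉ Nat.card H - 1) * Nat.card H}.Nonempty :=
      ⟨_, ⊥, inferInstance, rfl⟩
    obtain ⟨H, hH, e⟩ := Nat.sInf_mem hne
    rw [e]
    obtain ⟨A, B, hA, hB, h⟩ := exists_small G H r s hr hs hrS hsS
    exact le_trans (Nat.sInf_le (by exact ⟨A, B, hA, hB, rfl⟩)) h
  · have hne : {n : ℕ | ∃ A B : Finset G, A.card = r ∧ B.card = s ∧ (A * B).card = n}.Nonempty := by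
      obtain ⟨A, hA⟩ := hrS
      obtain ⟨B, hB⟩ := hsS
      exact ⟨_, A, B, hA, hB, rfl⟩
    obtain ⟨A, B, hA, hB, e⟩ := Nat.sInf_mem hne
    rw [← e]
    obtain ⟨K, hK, h1, h2⟩ := kneser A B (Finset.card_pos.1 (by omega)) (Finset.card_pos.1 (by omega))
    let H : Subgroup G :=
      { carrier := K
        mul_mem' := fun {x y} hx hy => hK.2.1 x hx y hy
        one_mem' := hK.1
        inv_mem' := fun {x} hx => hK.2.2 x hx }
    have hHf : Finite H := K.finite_toSet
    have hHc : Nat.card H = K.card := by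
      have : Nat.card H = (K : Set G).ncard := rfl
      rw [this, Set.ncard_coe_finset]
    refine le_trans (Nat.sInf_le (m := (r ⌈/⌉ Nat.card H + s ⌈/⌉ Nat.card H - 1) * Nat.card H) (by exact ⟨H, hHf, rfl⟩)) ?_
    rw [hHc]
    have hk : 0 < K.card := Finset.card_pos.2 ⟨1, hK.1⟩
    obtain ⟨u, hu⟩ := hK.dvd A
    obtain ⟨v, hv⟩ := hK.dvd B
    have hru : r ⌈/⌉ K.card ≤ u := by
      rw [ceilDiv_le_iff_le_mul hk, ← hu, ← hA]
      exact Finset.card_le_card (hK.sub A)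
    have hsv : s ⌈/⌉ K.card ≤ v := by
      rw [ceilDiv_le_iff_le_mul hk, ← hv, ← hB]
      exact Finset.card_le_card (hK.sub B)
    rw [hu, hv] at h2
    calc (r ⌈/⌉ K.card + s ⌈/⌉ K.card - 1) * K.card ≤ (u + v - 1) * K.card :=
          Nat.mul_le_mul_right _ (by omega)
      _ = K.card * u + K.card * v - K.card := by
          rw [Nat.sub_mul, one_mul, add_mul, mul_comm u, mul_comm v]
      _ ≤ (A * B).card := by omega
end

section
/- Let H ⊆ L be a commutative field extension which is either algebraic and separable over H, or contains an element transcendental over H. Then for all positive integers r, s with r, s ≤ dim_H L, there exist H-subspaces A, B of L with dim_H A = r, dim_H B = s, and dim_H⟨AB⟩ ≤ r + s − 1. -/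
theorem aux_pow_s7 {H L : Type*} [Field H] [Field L] [Algebra H L] (x : L) (m r s : ℕ)
    (h : LinearIndependent H (fun i : Fin m => x ^ (i : ℕ))) (hr : 0 < r) (hs : 0 < s)
    (hrm : r ≤ m) (hsm : s ≤ m) :
    ∃ A B : Submodule H L, Module.finrank H A = r ∧ Module.finrank H B = s ∧
      Module.finrank H ↥(A * B) ≤ r + s - 1 := by
  have key : ∀ k, k ≤ m → Module.finrank H
      (Submodule.span H (Set.range (fun i : Fin k => x ^ (i : ℕ)))) = k := by
    intro k hk
    have h' : LinearIndependent H (fun i : Fin k => x ^ (i : ℕ)) :=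
      h.comp (Fin.castLE hk) (Fin.castLE_injective hk)
    simpa using finrank_span_eq_card h'
  refine ⟨_, _, key r hrm, key s hsm, ?_⟩
  have hle : Submodule.span H (Set.range (fun i : Fin r => x ^ (i : ℕ))) *
      Submodule.span H (Set.range (fun i : Fin s => x ^ (i : ℕ))) ≤
      Submodule.span H (Set.range (fun i : Fin (r + s - 1) => x ^ (i : ℕ))) := by
    rw [Submodule.span_mul_span, Submodule.span_le]
    rintro _ ⟨_, ⟨i, rfl⟩, _, ⟨j, rfl⟩, rfl⟩
    refine Submodule.subset_span ⟨⟨i + j, by omega⟩, ?_⟩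
    simp [pow_add]
  have : FiniteDimensional H
      (Submodule.span H (Set.range (fun i : Fin (r + s - 1) => x ^ (i : ℕ)))) :=
    FiniteDimensional.span_of_finite H (Set.finite_range _)
  refine (Submodule.finrank_mono hle).trans ?_
  simpa [Set.finrank] using
    finrank_range_le_card (R := H) (fun i : Fin (r + s - 1) => x ^ (i : ℕ))

theorem aux_sep {H L : Type*} [Field H] [Field L] [Algebra H L]
    [Algebra.IsSeparable H L] (m : ℕ) (hm : (m : Cardinal) ≤ Module.rank H L) :
    ∃ x : L, LinearIndependent H (fun i : Fin m => x ^ (i : ℕ)) := by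
  obtain ⟨t, ht, hli⟩ := exists_finset_linearIndependent_of_le_rank hm
  let K := IntermediateField.adjoin H (t : Set L)
  have hfin : FiniteDimensional H K :=
    IntermediateField.finiteDimensional_adjoin
      (fun y _ => Algebra.IsIntegral.isIntegral (R := H) y)
  obtain ⟨a, ha⟩ := Field.exists_primitive_element H K
  have hdeg : (minpoly H a).natDegree = Module.finrank H K :=
    (Field.primitive_element_iff_minpoly_natDegree_eq H a).1 ha
  have hmK : m ≤ Module.finrank H K := by
    have h2 : LinearIndependent H (fun y : t =>
        (⟨y, IntermediateField.subset_adjoin H _ y.2⟩ : K)) :=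
      LinearIndependent.of_comp K.val.toLinearMap hli
    have := h2.fintype_card_le_finrank
    simpa [ht] using this
  have h3 := linearIndependent_pow (K := H) a
  rw [hdeg] at h3
  have h4 := h3.comp (Fin.castLE hmK) (Fin.castLE_injective hmK)
  have h5 := h4.map' K.val.toLinearMap
    (LinearMap.ker_eq_bot.2 K.val.toRingHom.injective)
  exact ⟨a, h5⟩

/-- Proposition 4.2: if the extension `H ⊆ L` is algebraic and separable, or contains an
element transcendental over `H`, then for all positive `r, s ≤ dim_H L` there exist
`H`-subspaces `A, B` of `L` with `dim_H A = r`, `dim_H B = s` and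
`dim_H ⟨AB⟩ ≤ r + s - 1`. -/
theorem stmt_7 (H L : Type*) [Field H] [Field L] [Algebra H L]
    (hext : (Algebra.IsAlgebraic H L ∧ Algebra.IsSeparable H L) ∨
      ∃ α : L, Transcendental H α)
    (r s : ℕ) (hr : 0 < r) (hs : 0 < s)
    (hrL : (r : Cardinal) ≤ Module.rank H L) (hsL : (s : Cardinal) ≤ Module.rank H L) :
    ∃ A B : Submodule H L, Module.finrank H A = r ∧ Module.finrank H B = s ∧
      Module.finrank H ↥(A * B) ≤ r + s - 1 := by
  have hm : ((max r s : ℕ) : Cardinal) ≤ Module.rank H L := by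
    rcases max_choice r s with h | h <;> rw [h] <;> assumption
  have : ∃ x : L, LinearIndependent H (fun i : Fin (max r s) => x ^ (i : ℕ)) := by
    rcases hext with ⟨_, h⟩ | ⟨x, hx⟩
    · exact aux_sep _ hm
    · have h1 := (Polynomial.basisMonomials H).linearIndependent.map'
        (Polynomial.aeval x).toLinearMap
        (LinearMap.ker_eq_bot.2 (transcendental_iff_injective.1 hx))
      have h2 := h1.comp (fun i : Fin (max r s) => (i : ℕ)) Fin.val_injective
      have h3 : ((Polynomial.aeval x : Polynomial H →ₐ[H] L).toLinearMap ∘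
          (Polynomial.basisMonomials H)) ∘ (fun i : Fin (max r s) => (i : ℕ)) =
          fun i : Fin (max r s) => x ^ (i : ℕ) := by
        funext i
        simp [Polynomial.aeval_monomial]
      exact ⟨x, h3 ▸ h2⟩
  obtain ⟨x, hx⟩ := this
  exact aux_pow_s7 x _ r s hx hr hs (le_max_left _ _) (le_max_right _ _)
end

section
/- (Small products property) Let H ⊆ L be an arbitrary commutative field extension. Then for all positive integers r, s with r, s ≤ dim_H L, there exist H-subspaces A, B of L with dim_H A = r, dim_H B = s, and dim_H⟨AB⟩ ≤ r + s − 1. -/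
/-- span of the first `n` powers -/
def powSpan (K : Type*) {L : Type*} [Field K] [Field L] [Algebra K L] (x : L) (n : ℕ) :
    Submodule K L := Submodule.span K (Set.range fun i : Fin n => x ^ (i : ℕ))

section
variable {K L : Type*} [Field K] [Field L] [Algebra K L]

instance powSpan_fin (x : L) (n : ℕ) : FiniteDimensional K (powSpan K x n) :=
  FiniteDimensional.span_of_finite K (Set.finite_range _)

theorem pow_mem_powSpan (x : L) {i n : ℕ} (h : i < n) : x ^ i ∈ powSpan K x n :=
  Submodule.subset_span ⟨⟨i, h⟩, rfl⟩

theorem powSpan_mul_le (x : L) {p q n : ℕ} (h : p + q ≤ n + 1) :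
    powSpan K x p * powSpan K x q ≤ powSpan K x n := by
  unfold powSpan
  rw [Submodule.span_mul_span, Submodule.span_le]
  rintro _ ⟨_, ⟨i, rfl⟩, _, ⟨j, rfl⟩, rfl⟩
  have := i.2
  have := j.2
  simp only [← pow_add]
  exact pow_mem_powSpan x (by omega)

theorem powSpan_mul_pow_mem (x : L) {p q : ℕ} {u : L} (hu : u ∈ powSpan K x p) :
    u * x ^ q ∈ powSpan K x (p + q) :=
  powSpan_mul_le (p := p) (q := q + 1) x (by omega)
    (Submodule.mul_mem_mul hu (pow_mem_powSpan x (Nat.lt_succ_self q)))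

theorem powSpan_finrank_le (x : L) (n : ℕ) : Module.finrank K (powSpan K x n) ≤ n := by
  exact (finrank_range_le_card (R := K) (fun i : Fin n => x ^ (i : ℕ))).trans (by simp)

theorem powSpan_finrank (x : L) (n : ℕ)
    (h : LinearIndependent K (fun i : Fin n => x ^ (i : ℕ))) :
    Module.finrank K (powSpan K x n) = n := by
  exact (finrank_span_eq_card h).trans (by simp)

theorem pow_notMem_powSpan (x : L) (n : ℕ)
    (h : LinearIndependent K (fun i : Fin (n + 1) => x ^ (i : ℕ))) :
    x ^ n ∉ powSpan K x n := by
  have := h.notMem_span_image (s := Set.range Fin.castSucc) (x := Fin.last n) (by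
    rintro ⟨i, hi⟩; exact (Fin.castSucc_lt_last i).ne hi)
  rw [← Set.range_comp] at this
  exact this
end

section
variable {H L : Type*} [Field H] [Field L] [Algebra H L]

/-- top piece times a power of x -/
def shiftSub (x : L) (n : ℕ) (A : Submodule H L) : Submodule H L :=
  A.map (LinearMap.mulRight H (x ^ n))

/-- the combined space -/
def stepSub (K : IntermediateField H L) (x : L) (n : ℕ) (A : Submodule H L) : Submodule H L :=
  (powSpan K x n).restrictScalars H ⊔ shiftSub x n A

theorem mem_shiftSub {x : L} {n : ℕ} {A : Submodule H L} {y : L} :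
    y ∈ shiftSub x n A ↔ ∃ a ∈ A, a * x ^ n = y := by
  simp [shiftSub, Submodule.mem_map]

theorem stepSub_mul_le (K : IntermediateField H L) (x : L) (p q : ℕ) (A B : Submodule H L)
    (hA : A ≤ Subalgebra.toSubmodule K.toSubalgebra)
    (hB : B ≤ Subalgebra.toSubmodule K.toSubalgebra) :
    stepSub K x p A * stepSub K x q B ≤ stepSub K x (p + q) (A * B) := by
  rw [Submodule.mul_le]
  intro a ha b hb
  obtain ⟨u, hu, _, ha', rfl⟩ := Submodule.mem_sup.1 ha
  obtain ⟨v, hv, _, hb', rfl⟩ := Submodule.mem_sup.1 hb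
  obtain ⟨a, ha1, rfl⟩ := mem_shiftSub.1 ha'
  obtain ⟨b, hb1, rfl⟩ := mem_shiftSub.1 hb'
  rw [Submodule.restrictScalars_mem] at hu hv
  have e : (u + a * x ^ p) * (v + b * x ^ q) =
    (u * v + b * (u * x ^ q) + a * (v * x ^ p)) + (a * b) * x ^ (p + q) := by ring
  rw [e]
  refine Submodule.add_mem_sup ?_ (mem_shiftSub.2 ⟨_, Submodule.mul_mem_mul ha1 hb1, rfl⟩)
  rw [Submodule.restrictScalars_mem]
  refine add_mem (add_mem ?_ ?_) ?_
  · exact powSpan_mul_le x (Nat.le_succ _) (Submodule.mul_mem_mul hu hv)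
  · exact Submodule.smul_mem _ (⟨b, hB hb1⟩ : K) (powSpan_mul_pow_mem x hu)
  · have := powSpan_mul_pow_mem (q := p) x hv
    rw [add_comm] at this
    exact Submodule.smul_mem _ (⟨a, hA ha1⟩ : K) this

theorem finrank_restr (K : IntermediateField H L) (U : Submodule K L) :
    Module.finrank H (U.restrictScalars H) = Module.finrank H K * Module.finrank K U :=
  (Module.finrank_mul_finrank H K U).symm

theorem stepSub_finrank_le (K : IntermediateField H L) [FiniteDimensional H K]
    (x : L) (n : ℕ) (A : Submodule H L) [FiniteDimensional H A] :
    Module.finrank H (stepSub K x n A) ≤ Module.finrank H K * n + Module.finrank H A := by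
  have hfd : FiniteDimensional H ((powSpan K x n).restrictScalars H) :=
    (Module.Finite.trans K (powSpan K x n) : Module.Finite H (powSpan K x n))
  have hfd2 : FiniteDimensional H (shiftSub x n A) := by unfold shiftSub; infer_instance
  refine (Submodule.finrank_add_le_finrank_add_finrank _ _).trans (Nat.add_le_add ?_ ?_)
  · rw [finrank_restr]
    exact Nat.mul_le_mul_left _ (powSpan_finrank_le _ _)
  · exact Submodule.finrank_map_le _ _

theorem stepSub_finrank (K : IntermediateField H L) [FiniteDimensional H K]
    (x : L) (hx : x ≠ 0) (n : ℕ) (A : Submodule H L) [FiniteDimensional H A]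
    (hA : A ≤ Subalgebra.toSubmodule K.toSubalgebra)
    (h : LinearIndependent K (fun i : Fin (n + 1) => x ^ (i : ℕ))) :
    Module.finrank H (stepSub K x n A) = Module.finrank H K * n + Module.finrank H A := by
  have h' : LinearIndependent K (fun i : Fin n => x ^ (i : ℕ)) :=
    h.comp Fin.castSucc (Fin.castSucc_injective n)
  have hfd : FiniteDimensional H ((powSpan K x n).restrictScalars H) :=
    (Module.Finite.trans K (powSpan K x n) : Module.Finite H (powSpan K x n))
  have hfd2 : FiniteDimensional H (shiftSub x n A) := by unfold shiftSub; infer_instance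
  have hinf : (powSpan K x n).restrictScalars H ⊓ shiftSub x n A = ⊥ := by
    rw [eq_bot_iff]
    rintro _ ⟨h1, h2⟩
    obtain ⟨a, ha, rfl⟩ := mem_shiftSub.1 h2
    by_cases h0 : a = 0
    · simp [h0]
    · exfalso
      apply pow_notMem_powSpan x n h
      have h3 : a * x ^ n ∈ powSpan K x n := h1
      have := Submodule.smul_mem _ ((⟨a, hA ha⟩ : K)⁻¹) h3
      have e : ((⟨a, hA ha⟩ : K)⁻¹) • (a * x ^ n) = x ^ n := by
        change a⁻¹ * (a * x ^ n) = x ^ n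
        field_simp
      rwa [e] at this
  have := Submodule.finrank_sup_add_finrank_inf_eq ((powSpan K x n).restrictScalars H)
    (shiftSub x n A)
  rw [hinf, finrank_bot, add_zero, finrank_restr, powSpan_finrank x n h'] at this
  rw [stepSub, this]
  congr 1
  exact (LinearEquiv.finrank_eq (Submodule.equivMapOfInjective _
    (mul_left_injective₀ (pow_ne_zero n hx)) A)).symm

/-- property for induction -/
def SmallProd (K : IntermediateField H L) : Prop :=
  FiniteDimensional H K ∧ ∀ r s : ℕ, 0 < r → 0 < s → r ≤ Module.finrank H K →
    s ≤ Module.finrank H K → ∃ A B : Submodule H L,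
      A ≤ Subalgebra.toSubmodule K.toSubalgebra ∧ B ≤ Subalgebra.toSubmodule K.toSubalgebra ∧
      Module.finrank H A = r ∧ Module.finrank H B = s ∧
      Module.finrank H ↥(A * B) ≤ r + s - 1

theorem smallProd_bot : SmallProd (⊥ : IntermediateField H L) := by
  refine ⟨inferInstance, fun r s hr hs hr' hs' => ?_⟩
  rw [IntermediateField.finrank_bot] at hr' hs'
  obtain rfl : r = 1 := by omega
  obtain rfl : s = 1 := by omega
  refine ⟨1, 1, ?_, ?_, ?_, ?_, ?_⟩
  · rw [Submodule.one_le]; exact one_mem (⊥ : IntermediateField H L)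
  · rw [Submodule.one_le]; exact one_mem (⊥ : IntermediateField H L)
  · rw [Submodule.one_eq_span]; exact finrank_span_singleton one_ne_zero
  · rw [Submodule.one_eq_span]; exact finrank_span_singleton one_ne_zero
  · rw [one_mul, Submodule.one_eq_span]; exact (finrank_span_singleton one_ne_zero).le

theorem smallProd_step (K : IntermediateField H L) (x : L) (hx : IsIntegral K x)
    (hK : SmallProd K) : SmallProd ((IntermediateField.adjoin K {x}).restrictScalars H) := by
  obtain ⟨hfd, hK⟩ := hK
  have hfx : FiniteDimensional K (IntermediateField.adjoin K {x}) :=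
    IntermediateField.adjoin.finiteDimensional hx
  have hm : 0 < Module.finrank H K := Module.finrank_pos
  have hdim : Module.finrank H ((IntermediateField.adjoin K {x}).restrictScalars H) =
      Module.finrank H K * (minpoly K x).natDegree := by
    rw [← IntermediateField.adjoin.finrank hx]
    exact finrank_restr K (Subalgebra.toSubmodule (IntermediateField.adjoin K {x}).toSubalgebra)
  have hfin : FiniteDimensional H ((IntermediateField.adjoin K {x}).restrictScalars H) :=
    (Module.Finite.trans K (IntermediateField.adjoin K {x}) :
      Module.Finite H (IntermediateField.adjoin K {x}))
  by_cases hx0 : x = 0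
  · subst hx0
    have : (IntermediateField.adjoin K {(0 : L)}).restrictScalars H = K := by
      rw [IntermediateField.adjoin_zero]
      ext y
      simp
    rw [this]
    exact ⟨hfd, hK⟩
  refine ⟨hfin, fun r s hr hs hr' hs' => ?_⟩
  rw [hdim] at hr' hs'
  set m := Module.finrank H K with hmdef
  set d := (minpoly K x).natDegree with hd
  have hrq : (r - 1) / m < d := Nat.div_lt_of_lt_mul (by omega)
  have hsq : (s - 1) / m < d := Nat.div_lt_of_lt_mul (by omega)
  have hr1 := Nat.mod_lt (r - 1) hm
  have hs1 := Nat.mod_lt (s - 1) hm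
  have hr2 := Nat.div_add_mod (r - 1) m
  have hs2 := Nat.div_add_mod (s - 1) m
  obtain ⟨A, B, hA, hB, hAr, hBs, hAB⟩ := hK ((r - 1) % m + 1) ((s - 1) % m + 1)
    (by omega) (by omega) (by omega) (by omega)
  generalize (r - 1) % m = r0 at *
  generalize (s - 1) % m = s0 at *
  generalize (r - 1) / m = q at *
  generalize (s - 1) / m = p at *
  have li : ∀ n, n < d → LinearIndependent K (fun i : Fin (n + 1) => x ^ (i : ℕ)) := by
    intro n hn
    exact (linearIndependent_pow (K := K) x).comp (Fin.castLE (show n + 1 ≤ _ from hn))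
      (Fin.castLE_injective _)
  have fA : FiniteDimensional H A := Module.finite_of_finrank_pos (by omega)
  have fB : FiniteDimensional H B := Module.finite_of_finrank_pos (by omega)
  have fAB : FiniteDimensional H ↥(A * B) := by
    have := (Submodule.FG.mul (Module.Finite.iff_fg.1 fA) (Module.Finite.iff_fg.1 fB))
    exact Module.Finite.iff_fg.2 this
  have hle : ∀ n (C : Submodule H L), C ≤ Subalgebra.toSubmodule K.toSubalgebra →
      stepSub K x n C ≤ Subalgebra.toSubmodule
        ((IntermediateField.adjoin K {x}).restrictScalars H).toSubalgebra := by
    intro n C hC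
    have hxm : x ∈ IntermediateField.adjoin K {x} :=
      IntermediateField.mem_adjoin_simple_self K x
    refine sup_le ?_ ?_
    · have : powSpan K x n ≤
          Subalgebra.toSubmodule (IntermediateField.adjoin K {x}).toSubalgebra := by
        refine Submodule.span_le.2 ?_
        rintro _ ⟨i, rfl⟩
        exact pow_mem hxm _
      exact fun y hy => this hy
    · intro y hy
      obtain ⟨a, ha, rfl⟩ := mem_shiftSub.1 hy
      have ha' : a ∈ IntermediateField.adjoin K {x} :=
        (IntermediateField.adjoin K {x}).algebraMap_mem (⟨a, hC ha⟩ : K)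
      have : a * x ^ n ∈ IntermediateField.adjoin K {x} := mul_mem ha' (pow_mem hxm _)
      exact this
  refine ⟨stepSub K x q A, stepSub K x p B, hle _ _ hA, hle _ _ hB, ?_, ?_, ?_⟩
  · rw [stepSub_finrank K x hx0 q A hA (li q hrq), ← hmdef]; omega
  · rw [stepSub_finrank K x hx0 p B hB (li p hsq), ← hmdef]; omega
  · have fin : FiniteDimensional H (stepSub K x (q + p) (A * B)) := by
      have hfd : FiniteDimensional H ((powSpan K x (q + p)).restrictScalars H) :=
        (Module.Finite.trans K (powSpan K x (q + p)) : Module.Finite H (powSpan K x (q + p)))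
      have hfd2 : FiniteDimensional H (shiftSub x (q + p) (A * B)) := by
        unfold shiftSub; infer_instance
      unfold stepSub; infer_instance
    have h1 := Submodule.finrank_mono (stepSub_mul_le K x q p A B hA hB)
    have h2 := stepSub_finrank_le K x (q + p) (A * B)
    rw [Nat.mul_add, ← hmdef] at h2
    omega
end

/-- Proposition 7.1 (small products property): for an arbitrary commutative field
extension `H ⊆ L` and positive integers `r, s ≤ dim_H L`, there exist `H`-subspaces
`A, B` of `L` with `dim_H A = r`, `dim_H B = s` and `dim_H ⟨AB⟩ ≤ r + s - 1`. -/
theorem stmt_8 (H L : Type*) [Field H] [Field L] [Algebra H L]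
    (r s : ℕ) (hr : 0 < r) (hs : 0 < s)
    (hrL : (r : Cardinal) ≤ Module.rank H L) (hsL : (s : Cardinal) ≤ Module.rank H L) :
    ∃ A B : Submodule H L, Module.finrank H A = r ∧ Module.finrank H B = s ∧
      Module.finrank H ↥(A * B) ≤ r + s - 1 := by
  by_cases halg : Algebra.IsAlgebraic H L
  · have hmax : ((max r s : ℕ) : Cardinal) ≤ Module.rank H L := by
      rcases max_choice r s with h | h <;> rw [h] <;> assumption
    obtain ⟨S, hS, hli⟩ := le_rank_iff_exists_linearIndependent_finset.1 hmax
    have key : SmallProd (IntermediateField.adjoin H (S : Set L)) :=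
      IntermediateField.induction_on_adjoin_finset S SmallProd smallProd_bot
        (fun K x _ hK => smallProd_step K x
          ((Algebra.IsIntegral.isIntegral (R := H) x).tower_top) hK)
    obtain ⟨hfd, key⟩ := key
    have hcard : max r s ≤ Module.finrank H (IntermediateField.adjoin H (S : Set L)) := by
      have h1 := finrank_span_finset_eq_card hli
      rw [← hS, ← h1]
      have hle : Submodule.span H (S : Set L) ≤ Subalgebra.toSubmodule
          (IntermediateField.adjoin H (S : Set L)).toSubalgebra :=
        Submodule.span_le.2 (IntermediateField.subset_adjoin H _)
      have : FiniteDimensional H (Subalgebra.toSubmodule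
          (IntermediateField.adjoin H (S : Set L)).toSubalgebra) := hfd
      exact Submodule.finrank_mono hle
    obtain ⟨A, B, -, -, h⟩ := key r s hr hs (le_trans (le_max_left _ _) hcard)
      (le_trans (le_max_right _ _) hcard)
    exact ⟨A, B, h⟩
  · obtain ⟨x, hx⟩ : ∃ x : L, Transcendental H x := by
      by_contra hcon
      push Not at hcon
      exact halg ⟨fun x => by simpa [Transcendental] using hcon x⟩
    have li : ∀ n, LinearIndependent H (fun i : Fin n => x ^ (i : ℕ)) := by
      intro n
      have h1 := (Polynomial.basisMonomials H).linearIndependent.map'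
        (Polynomial.aeval x).toLinearMap
        (LinearMap.ker_eq_bot.2 (transcendental_iff_injective.1 hx))
      have h2 := h1.comp (fun i : Fin n => (i : ℕ)) Fin.val_injective
      have e : (fun i : Fin n => x ^ (i : ℕ)) = ((Polynomial.aeval x).toLinearMap ∘
          (Polynomial.basisMonomials H)) ∘ fun i : Fin n => (i : ℕ) := by
        funext i
        simp
      rw [e]
      exact h2
    refine ⟨powSpan H x r, powSpan H x s, powSpan_finrank x r (li r), powSpan_finrank x s (li s),
      ?_⟩
    exact (Submodule.finrank_mono (powSpan_mul_le x (by omega))).trans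
      (powSpan_finrank_le x (r + s - 1))
end

section
/- Let K ⊆ L be a commutative field extension with L ≠ K such that every element of L that is algebraic over K already lies in K (e.g. L purely transcendental over K). Then for all positive integers r, s, the minimum of dim_K⟨AB⟩, taken over all K-subspaces A, B of L with dim_K A = r and dim_K B = s, equals r + s − 1. -/
open Pointwise in
theorem lower_aux {K L : Type*} [Field K] [Field L] [Algebra K L]
    (halg : ∀ x : L, IsAlgebraic K x → x ∈ Set.range (algebraMap K L)) (s : ℕ) :
    ∀ A B : Submodule K L, 0 < Module.finrank K A → 0 < Module.finrank K B →
      Module.finrank K B = s →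
      Module.finrank K A + Module.finrank K B ≤ Module.finrank K ↥(A * B) + 1 := by
  induction s using Nat.strong_induction_on with
  | _ s ih =>
  intro A B hA hB hs
  have fA : Module.Finite K A := Module.finite_of_finrank_pos hA
  have fB : Module.Finite K B := Module.finite_of_finrank_pos hB
  have fAB : Module.Finite K ↥(A * B) :=
    Module.Finite.iff_fg.2 ((Module.Finite.iff_fg.1 fA).mul (Module.Finite.iff_fg.1 fB))
  have bA : A ≠ ⊥ := by rintro rfl; simp at hA
  have bB : B ≠ ⊥ := by rintro rfl; simp at hB
  obtain ⟨a0, ha0, ha0'⟩ := Submodule.exists_mem_ne_zero_of_ne_bot bA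
  obtain ⟨b0, hb0, hb0'⟩ := Submodule.exists_mem_ne_zero_of_ne_bot bB
  have lmap : ∀ (e : L) (he : e ≠ 0) (C : Submodule K L),
      Module.finrank K ↥(C.map (LinearMap.mulLeft K e)) = Module.finrank K C := by
    intro e he C
    exact LinearEquiv.finrank_eq (Submodule.equivMapOfInjective _ (mul_right_injective₀ he) C).symm
  by_cases H : ∀ a ∈ A, a ≠ 0 → ∀ b ∈ B, a * b0⁻¹ * b ∈ A
  · -- every element of `B` is a multiple of `b0`
    have key : B ≤ Submodule.span K {b0} := by
      intro b hb
      have hx : IsIntegral K (b0⁻¹ * b) := by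
        refine isIntegral_of_smul_mem_submodule (N := A) bA (Module.Finite.iff_fg.1 fA) _ ?_
        intro n hn
        by_cases h0 : n = 0
        · simp [h0]
        · have := H n hn h0 b hb
          rw [smul_eq_mul]
          convert this using 1
          ring
      obtain ⟨k, hk⟩ := halg _ hx.isAlgebraic
      rw [Submodule.mem_span_singleton]
      refine ⟨k, ?_⟩
      rw [Algebra.smul_def, hk]
      field_simp
    have h1 : Module.finrank K B ≤ 1 :=
      (Submodule.finrank_mono key).trans (finrank_span_singleton hb0').le
    have h2 : Module.finrank K A ≤ Module.finrank K ↥(A * B) := by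
      rw [← lmap b0 hb0' A]
      apply Submodule.finrank_mono
      rintro _ ⟨a, ha, rfl⟩
      rw [LinearMap.mulLeft_apply, mul_comm b0]
      exact Submodule.mul_mem_mul ha hb0
    omega
  · push Not at H
    obtain ⟨a, ha, han, b, hb, hab⟩ := H
    set e := a * b0⁻¹ with he
    have he0 : e ≠ 0 := mul_ne_zero han (inv_ne_zero hb0')
    let eB := B.map (LinearMap.mulLeft K e)
    let B' := B ⊓ A.comap (LinearMap.mulLeft K e)
    have hB'B : B' < B := by
      refine lt_of_le_of_ne inf_le_left fun h => hab ?_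
      rw [← h] at hb
      exact hb.2
    have hmap : B'.map (LinearMap.mulLeft K e) = A ⊓ eB := by
      ext y
      constructor
      · rintro ⟨x, hx, rfl⟩
        exact ⟨hx.2, x, hx.1, rfl⟩
      · rintro ⟨h1, x, hx, rfl⟩
        exact ⟨x, ⟨hx, h1⟩, rfl⟩
    have hd := Submodule.finrank_sup_add_finrank_inf_eq A eB
    rw [← hmap, lmap e he0, lmap e he0] at hd
    have fB' : Module.Finite K B' := Submodule.finiteDimensional_of_le hB'B.le
    have hlt := Submodule.finrank_lt_finrank_of_lt hB'B
    have hb0B' : b0 ∈ B' := ⟨hb0, by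
      simp only [Submodule.comap_coe, Set.mem_preimage, LinearMap.mulLeft_apply, he]
      rw [inv_mul_cancel_right₀ hb0']
      exact ha⟩
    have hpos : 0 < Module.finrank K B' := by
      rw [Nat.pos_iff_ne_zero, Ne, Submodule.finrank_eq_zero]
      intro h
      rw [h] at hb0B'
      exact hb0' (by simpa using hb0B')
    have := ih _ (hs ▸ hlt) (A ⊔ eB) B' (by
      have := Submodule.finrank_mono (le_sup_left : A ≤ A ⊔ eB)
      omega) hpos rfl
    have hle : (A ⊔ eB) * B' ≤ A * B := by
      rw [Submodule.sup_mul]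
      refine sup_le (mul_le_mul' le_rfl hB'B.le) ?_
      rw [Submodule.mul_le]
      rintro _ ⟨x, hx, rfl⟩ y hy
      have : (LinearMap.mulLeft K e) x * y = (e * y) * x := by
        rw [LinearMap.mulLeft_apply]; ring
      rw [this]
      exact Submodule.mul_mem_mul hy.2 hx
    have := Submodule.finrank_mono hle
    omega

/-- Example 5.1 (purely transcendental-type extensions): if `L ≠ K` and every element of
`L` algebraic over `K` lies in `K`, then for all positive integers `r, s`, the minimum of
`dim_K ⟨AB⟩` over `K`-subspaces `A, B` of `L` with `dim_K A = r`, `dim_K B = s` equals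
`r + s - 1`. -/
theorem stmt_9 (K L : Type*) [Field K] [Field L] [Algebra K L]
    (hne : ∃ x : L, x ∉ Set.range (algebraMap K L))
    (halg : ∀ x : L, IsAlgebraic K x → x ∈ Set.range (algebraMap K L))
    (r s : ℕ) (hr : 0 < r) (hs : 0 < s) :
    sInf {n : ℕ | ∃ A B : Submodule K L,
        Module.finrank K A = r ∧ Module.finrank K B = s ∧ Module.finrank K ↥(A * B) = n}
      = r + s - 1 := by
  obtain ⟨x, hx⟩ := hne
  have hx : Transcendental K x := fun h => hx (halg x h)
  have hli : LinearIndependent K (fun i : ℕ => x ^ i) := by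
    have h := (Polynomial.basisMonomials K).linearIndependent.map'
      (Polynomial.aeval x).toLinearMap
      (LinearMap.ker_eq_bot.2 (transcendental_iff_injective.1 hx))
    have hf : (fun i : ℕ => x ^ i) =
        (Polynomial.aeval x).toLinearMap ∘ (Polynomial.basisMonomials K) := by
      ext i
      simp
    rw [hf]
    exact h
  let P : ℕ → Submodule K L := fun n => Submodule.span K (Set.range fun i : Fin n => x ^ (i : ℕ))
  have hP : ∀ n, Module.finrank K (P n) = n := by
    intro n
    have := finrank_span_eq_card (hli.comp (fun i : Fin n => (i : ℕ)) Fin.val_injective)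
    rw [Fintype.card_fin] at this
    exact this
  have hPP : P r * P s ≤ P (r + s - 1) := by
    simp only [P]
    rw [Submodule.span_mul_span, Submodule.span_le]
    rintro _ ⟨_, ⟨i, rfl⟩, _, ⟨j, rfl⟩, rfl⟩
    refine Submodule.subset_span ⟨⟨i + j, by omega⟩, ?_⟩
    simp [pow_add]
  have fP : Module.Finite K (P (r + s - 1)) :=
    FiniteDimensional.span_of_finite K (Set.finite_range _)
  have hle := Submodule.finrank_mono hPP
  rw [hP] at hle
  apply le_antisymm
  · refine le_trans (Nat.sInf_le ?_) hle
    exact ⟨P r, P s, hP r, hP s, rfl⟩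
  · refine le_csInf ⟨_, P r, P s, hP r, hP s, rfl⟩ ?_
    rintro n ⟨A, B, hA, hB, rfl⟩
    have := lower_aux halg s A B (by omega) (by omega) hB
    omega
end

section
/- (Linear Cauchy–Davenport theorem) Let K ⊆ L be a commutative field extension of prime degree [L:K] = p, and assume the characteristic of K is different from p. Then for all positive integers r, s with r, s ≤ p, the minimum of dim_K⟨AB⟩, taken over all K-subspaces A, B of L with dim_K A = r and dim_K B = s, equals min{r + s − 1, p}. -/
theorem cd_inj {K L : Type*} [Field K] [Field L] [Algebra K L] (a : L) (ha : a ≠ 0) :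
    Function.Injective (LinearMap.mulLeft K a) := fun _ _ h => mul_left_cancel₀ ha h

theorem cd_finrank {K L : Type*} [Field K] [Field L] [Algebra K L] {m : L →ₗ[K] L}
    (hm : Function.Injective m) (A : Submodule K L) :
    Module.finrank K ↥(A.map m) = Module.finrank K A :=
  (Submodule.equivMapOfInjective m hm A).finrank_eq.symm

theorem cd_no_mid {K L : Type*} [Field K] [Field L] [Algebra K L] [FiniteDimensional K L]
    (hp : (Module.finrank K L).Prime) (x : L) (hx : x ∉ (algebraMap K L).range) :
    (minpoly K x).natDegree = Module.finrank K L := by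
  have h1 : (minpoly K x).natDegree ∣ Module.finrank K L :=
    minpoly.degree_dvd (Algebra.IsIntegral.isIntegral x)
  rcases (Nat.dvd_prime hp).1 h1 with h | h
  · exact absurd (minpoly.natDegree_eq_one_iff.1 h) hx
  · exact h

theorem cd_lower {K L : Type*} [Field K] [Field L] [Algebra K L] [FiniteDimensional K L]
    (hp : (Module.finrank K L).Prime) (n : ℕ) :
    ∀ (A B : Submodule K L) (a b : L), a ∈ A → a ≠ 0 → b ∈ B → b ≠ 0 → Module.finrank K A = n →
      Module.finrank K A + Module.finrank K B ≤ Module.finrank K ↥(A * B) + 1 ∨ A * B = ⊤ := by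
  induction n using Nat.strong_induction_on with
  | _ n ih =>
  intro A B a b ha ha0 hb hb0 hn
  by_cases hst : ∀ e ∈ B, ∀ c ∈ A, e / a * c ∈ B
  · by_cases hK : ∀ c ∈ A, c / a ∈ (algebraMap K L).range
    · left
      have h1 : Module.finrank K A ≤ 1 := by
        have : A ≤ Submodule.span K {a} := by
          intro c hc
          obtain ⟨k, hk⟩ := hK c hc
          rw [Submodule.mem_span_singleton]
          exact ⟨k, by rw [Algebra.smul_def, hk, div_mul_cancel₀ _ ha0]⟩
        exact (Submodule.finrank_mono this).trans (finrank_span_singleton (K := K) ha0).le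
      have h2 : Module.finrank K B ≤ Module.finrank K ↥(A * B) := by
        have : B.map (LinearMap.mulLeft K a) ≤ A * B := by
          rintro _ ⟨y, hy, rfl⟩
          exact Submodule.mul_mem_mul ha hy
        have h3 := Submodule.finrank_mono this
        rwa [cd_finrank (cd_inj _ ha0)] at h3
      omega
    · right
      push Not at hK
      obtain ⟨c, hc, hcK⟩ := hK
      have hB : ∀ i : ℕ, ∀ e ∈ B, (c / a) ^ i * e ∈ B := by
        intro i
        induction i with
        | zero => intro e he; simpa using he
        | succ i ih => 
          intro e he
          have := hst _ (ih e he) c hc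
          convert this using 1
          rw [pow_succ]
          ring
      have hdeg := cd_no_mid hp _ hcK
      have hspan := (linearIndependent_pow (K := K) (c / a)).span_eq_top_of_card_eq_finrank' (by simp [hdeg])
      have hall : ∀ y : L, y * b ∈ B := by
        intro y
        have hy : y ∈ Submodule.span K (Set.range fun i : Fin (minpoly K (c / a)).natDegree => (c / a) ^ (i : ℕ)) := by
          rw [hspan]; trivial
        induction hy using Submodule.span_induction with
        | mem x h => obtain ⟨i, rfl⟩ := h; exact hB _ _ hb
        | zero => simp
        | add x y _ _ h1 h2 => rw [add_mul]; exact B.add_mem h1 h2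
        | smul k x _ h => rw [smul_mul_assoc]; exact B.smul_mem _ h
      rw [eq_top_iff]
      intro y _
      have h1 := hall (y / a / b)
      rw [div_mul_cancel₀ _ hb0] at h1
      have := Submodule.mul_mem_mul ha h1
      rwa [mul_div_cancel₀ _ ha0] at this
  · push Not at hst
    obtain ⟨e, he, c, hc, hec⟩ := hst
    have he0 : e ≠ 0 := by
      rintro rfl
      simp at hec
    have hm0 : e / a ≠ 0 := div_ne_zero he0 ha0
    set m := LinearMap.mulLeft K (e / a) with hm
    have hinj : Function.Injective m := cd_inj _ hm0
    have hlt : Module.finrank K ↥(A ⊓ B.comap m) < n := by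
      rw [← hn]
      apply Submodule.finrank_lt_finrank_of_lt
      refine lt_of_le_of_ne inf_le_left fun h => hec ?_
      rw [← h] at hc
      exact hc.2
    have haA : a ∈ A ⊓ B.comap m := ⟨ha, by simpa [hm, div_mul_cancel₀ _ ha0] using he⟩
    have hsub : (A ⊓ B.comap m) * (A.map m ⊔ B) ≤ A * B := by
      rw [Submodule.mul_sup]
      refine sup_le ?_ (mul_le_mul' inf_le_left le_rfl)
      rw [Submodule.mul_le]
      rintro x hx _ ⟨y, hy, rfl⟩
      have := Submodule.mul_mem_mul hy (show m x ∈ B from hx.2)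
      convert this using 1
      simp only [hm, LinearMap.mulLeft_apply]
      ring
    have hdim := Submodule.finrank_sup_add_finrank_inf_eq (A.map m) B
    rw [Submodule.map_inf_eq_map_inf_comap, cd_finrank hinj, cd_finrank hinj] at hdim
    rcases ih _ hlt (A ⊓ B.comap m) (A.map m ⊔ B) a b haA ha0 (Submodule.mem_sup_right hb) hb0 rfl with h | h
    · left
      have := Submodule.finrank_mono hsub
      omega
    · right
      rw [h] at hsub
      exact top_le_iff.1 hsub

/-- Example 5.2 (linear Cauchy–Davenport theorem): if `[L:K] = p` is prime and
`char K ≠ p`, then for all positive `r, s ≤ p`, the minimum of `dim_K ⟨AB⟩` over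
`K`-subspaces `A, B` of `L` with `dim_K A = r`, `dim_K B = s` equals
`min (r + s - 1) p`. -/
theorem stmt_10 (K L : Type*) [Field K] [Field L] [Algebra K L]
    (p : ℕ) (hp : p.Prime) (hdeg : Module.finrank K L = p) (hchar : ringChar K ≠ p)
    (r s : ℕ) (hr : 0 < r) (hs : 0 < s) (hrp : r ≤ p) (hsp : s ≤ p) :
    sInf {n : ℕ | ∃ A B : Submodule K L,
        Module.finrank K A = r ∧ Module.finrank K B = s ∧ Module.finrank K ↥(A * B) = n}
      = min (r + s - 1) p := by
  subst hdeg
  haveI : FiniteDimensional K L := Module.finite_of_finrank_pos hp.pos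
  have low : ∀ A B : Submodule K L, Module.finrank K A = r → Module.finrank K B = s →
      min (r + s - 1) (Module.finrank K L) ≤ Module.finrank K ↥(A * B) := by
    intro A B hA hB
    obtain ⟨a, ha, ha0⟩ := A.ne_bot_iff.1 (by rintro rfl; simp at hA; omega)
    obtain ⟨b, hb, hb0⟩ := B.ne_bot_iff.1 (by rintro rfl; simp at hB; omega)
    rcases cd_lower hp _ A B a b ha ha0 hb hb0 rfl with h | h
    · omega
    · rw [h, finrank_top]; omega
  obtain ⟨x, hx⟩ : ∃ x : L, x ∉ (algebraMap K L).range := by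
    by_contra! h
    have : Module.finrank K L ≤ 1 := finrank_le_one (1 : L) fun w => by
      obtain ⟨k, hk⟩ := h w
      exact ⟨k, by rw [Algebra.smul_def, hk, mul_one]⟩
    have := hp.two_le
    omega
  have hd := cd_no_mid hp x hx
  have hfr : ∀ t, t ≤ Module.finrank K L →
      Module.finrank K ↥(Submodule.span K (Set.range fun i : Fin t => x ^ (i : ℕ))) = t := by
    intro t ht
    have hli : LinearIndependent K fun i : Fin t => x ^ (i : ℕ) :=
      (linearIndependent_pow (K := K) x).comp (Fin.castLE (ht.trans hd.ge)) (Fin.castLE_injective _)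
    rw [finrank_span_eq_card hli, Fintype.card_fin]
  apply IsLeast.csInf_eq
  refine ⟨⟨_, _, hfr r hrp, hfr s hsp, le_antisymm ?_ (low _ _ (hfr r hrp) (hfr s hsp))⟩, ?_⟩
  · refine le_min ?_ (Submodule.finrank_le _)
    have : Submodule.span K (Set.range fun i : Fin r => x ^ (i : ℕ)) *
        Submodule.span K (Set.range fun i : Fin s => x ^ (i : ℕ)) ≤
        Submodule.span K (Set.range fun i : Fin (r + s - 1) => x ^ (i : ℕ)) := by
      rw [Submodule.span_mul_span, Submodule.span_le]
      rintro _ ⟨_, ⟨i, rfl⟩, _, ⟨j, rfl⟩, rfl⟩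
      exact Submodule.subset_span ⟨⟨i + j, by omega⟩, by simp [pow_add]⟩
    refine (Submodule.finrank_mono this).trans ?_
    exact (finrank_range_le_card _).trans (by simp)
  · rintro n ⟨A, B, hA, hB, rfl⟩
    exact low A B hA hB
end
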